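/- Let ζ = exp(2πi/5). Then U_{5,4}( (ζq;q)_∞ (ζ^{-1}q;q)_∞ (q;q)_∞ R(ζ;q²) ) = (ζ + ζ⁴) J_5 J_{5,2} J_{10,1} / J_{5,1}, where the J-products are in the variable q. -/

import Mathlib

/-!
Write `T(q) = (ζq;q)_∞ (ζ⁻¹q;q)_∞ (q;q)_∞`. The proof dissects `T(q)` and `R(ζ;q)` modulo `5`
and multiplies; in `T(q) R(ζ;q²)` the exponents congruent to `4` come from a single product.

*The theta product.* By the Jacobi triple product (`jtp`), `T(q)` has only exponents `0` and `1`
modulo `5`: with `Q = q^5` and `j(x;y) = (x;y)_∞ (y/x;y)_∞ (y;y)_∞`,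
`T(q) = j(Q²;Q⁵) + q (ζ² + ζ³) j(Q;Q⁵)` (`theta_dissection`). Multiplying the versions for `ζ` and
`ζ²` gives the 5-dissection of `(q;q)_∞` (`euler_dissection`).

*The rank generating function.* Counting partitions by largest part expresses `R(z;q)` through the
Rogers–Fine series, whose functional equation, iterated, gives Watson's series
`∑ q^{n²} / ((zq;q)_n (z⁻¹q;q)_n)` (`hasSum_watson`). Partial fractions of its terms and Durfee
rectangles turn this into the Appell–Lerch form
`(q;q)_∞ R(z;q) = (1 - z) ∑_r (-1)^r q^{r(3r+1)/2} / (1 - z q^r)` (`rankGF_appell`).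
At `z = ζ` the denominators are rationalised to `1 - q^{5r}` and the sum is split by `r` modulo `5`.
The resulting Appell–Lerch sums to the base `Q^5` are related by the partial fraction expansion of a
product of three reciprocal theta functions (`appell_pf`, used as `appell_three`) and by its
confluent limit (`appell_confluent`), in which logarithmic derivatives of theta functions appear;
the combinations of those that remain are theta quotients by a differentiated three-term relation
(`three_lam`). Dividing by the 5-dissection of `(q;q)_∞` yields the Atkin–Swinnerton-Dyer dissection
of `R(ζ;q)` (`rank_dissection`): there is no part with exponents `4` modulo `5`, and the part with
exponents `2` is `q² (ζ + ζ⁴) J / θ` with `J = (Q⁵;Q⁵)_∞` and `θ = (Q²;Q⁵)_∞ (Q³;Q⁵)_∞`.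

*The product.* `R(ζ;q²)` has exponents `0, 2, 4, 6` modulo `5` and `T(q)` has `0, 1`, so the residue
`4` arises only as `0 + 4`. Hence the image under `U_{5,4}` is `(ζ + ζ⁴) J_{5,2} J_{10}² / J_{10,4}`,
which is the claimed quotient because `J_{10}² / J_{10,4} = J_5 J_{10,1} / J_{5,1}`
(`prodPart_four`).

*Coefficients.* The hypothesis on `a` is an equality with a `tsum`, which is `0` for a divergent
series. If the series diverged somewhere in the disc, the product would vanish on an annulus, which
contradicts `R(ζ;0) = 1` by the identity theorem (`summable_coeff`). The coefficients with index `4`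
modulo `5` are then extracted with fifth roots of unity (`class_four`) for `q ≠ 0`, and the value at
`q = 0` follows by continuity (`main_zero`).
-/

/-- The q-Pochhammer symbol `(a;q)_∞ = ∏_{k≥0} (1 - a q^k)`. -/
noncomputable def qPochInf (a q : ℂ) : ℂ := ∏' k : ℕ, (1 - a * q ^ k)

/-- The Dyson rank of a partition: largest part minus number of parts. -/
noncomputable def partitionRank {n : ℕ} (p : n.Partition) : ℤ :=
  (p.parts.sup : ℤ) - p.parts.card

/-- The rank generating function `R(z;q) = Σ_{n≥0} Σ_m N(m,n) z^m q^n`. -/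
noncomputable def rankGF (z q : ℂ) : ℂ :=
  ∑' n : ℕ, (∑ p : n.Partition, z ^ partitionRank p) * q ^ n

/-- `Jba b a q` is `J_{b,a} = (q^a;q^b)_∞ (q^{b-a};q^b)_∞ (q^b;q^b)_∞`. -/
noncomputable def Jba (b a : ℕ) (q : ℂ) : ℂ :=
  qPochInf (q ^ a) (q ^ b) * qPochInf (q ^ (b - a)) (q ^ b) * qPochInf (q ^ b) (q ^ b)

/-- `Jb b q` is `J_b = (q^b;q^b)_∞`. -/
noncomputable def Jb (b : ℕ) (q : ℂ) : ℂ := qPochInf (q ^ b) (q ^ b)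

/-- `ζ = exp(2πi/5)`. -/
noncomputable def zeta5 : ℂ := Complex.exp (2 * Real.pi * Complex.I / 5)

namespace RankFive

open Filter Topology Finset

/-! ### q-Pochhammer symbols and convergence -/

/-- The finite q-Pochhammer symbol `(a;q)_n`. -/
noncomputable def qPoch (a q : ℂ) (n : ℕ) : ℂ := ∏ k ∈ range n, (1 - a * q ^ k)

lemma qPoch_zero (a q : ℂ) : qPoch a q 0 = 1 := by simp [qPoch]

lemma qPoch_succ (a q : ℂ) (n : ℕ) : qPoch a q (n + 1) = qPoch a q n * (1 - a * q ^ n) := by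
  simp [qPoch, prod_range_succ]

lemma qPoch_succ' (a q : ℂ) (n : ℕ) : qPoch a q (n + 1) = (1 - a) * qPoch (a * q) q n := by
  simp only [qPoch, prod_range_succ', pow_zero, mul_one]
  rw [mul_comm]
  congr 1
  refine prod_congr rfl fun k _ => ?_
  ring

lemma summable_norm_geom {q : ℂ} (hq : ‖q‖ < 1) (a : ℂ) : Summable fun k : ℕ => ‖-(a * q ^ k)‖ := by
  simp only [norm_neg, norm_mul, norm_pow]
  exact (summable_geometric_of_lt_one (norm_nonneg _) hq).mul_left _

lemma multipliable_qPoch {q : ℂ} (hq : ‖q‖ < 1) (a : ℂ) :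
    Multipliable fun k : ℕ => (1 - a * q ^ k) := by
  simp only [sub_eq_add_neg]
  exact multipliable_one_add_of_summable (summable_norm_geom hq a)

lemma tendsto_qPoch {q : ℂ} (hq : ‖q‖ < 1) (a : ℂ) :
    Tendsto (qPoch a q) atTop (𝓝 (qPochInf a q)) :=
  (multipliable_qPoch hq a).tendsto_prod_tprod_nat

lemma qPochInf_ne_zero {q : ℂ} (hq : ‖q‖ < 1) {a : ℂ} (h : ∀ k : ℕ, 1 - a * q ^ k ≠ 0) :
    qPochInf a q ≠ 0 := by
  unfold qPochInf
  simp only [sub_eq_add_neg] at h ⊢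
  exact tprod_one_add_ne_zero_of_summable h (summable_norm_geom hq a)

lemma qPoch_ne_zero {q a : ℂ} (h : ∀ k : ℕ, 1 - a * q ^ k ≠ 0) (n : ℕ) : qPoch a q n ≠ 0 :=
  prod_ne_zero_iff.2 fun k _ => h k

lemma qPochInf_succ {q : ℂ} (hq : ‖q‖ < 1) (a : ℂ) :
    qPochInf a q = (1 - a) * qPochInf (a * q) q := by
  have h1 := (tendsto_qPoch hq a).comp (tendsto_add_atTop_nat 1)
  have h2 := (tendsto_qPoch hq (a * q)).const_mul (1 - a)
  refine tendsto_nhds_unique h1 (h2.congr fun n => ?_)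
  simp [qPoch_succ']

lemma one_sub_pow_ne_zero {q : ℂ} (hq : ‖q‖ < 1) (k : ℕ) : 1 - q * q ^ k ≠ 0 := by
  intro h
  have h1 : ‖q ^ (k + 1)‖ < 1 := by
    rw [norm_pow]; exact pow_lt_one₀ (norm_nonneg _) hq (by simp)
  have h2 : q ^ (k + 1) = 1 := by rw [pow_succ']; exact (sub_eq_zero.1 h).symm
  rw [h2] at h1
  simp at h1

lemma one_sub_mul_pow_ne_zero {q a : ℂ} (hq : ‖q‖ < 1) (ha : ‖a‖ < 1) (k : ℕ) :
    1 - a * q ^ k ≠ 0 := by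
  intro h
  have h1 : ‖a * q ^ k‖ < 1 := by
    rw [norm_mul, norm_pow]
    calc ‖a‖ * ‖q‖ ^ k ≤ ‖a‖ * 1 := by
          gcongr; exact pow_le_one₀ (norm_nonneg _) hq.le
      _ < 1 := by simpa using ha
  rw [← sub_eq_zero.1 h] at h1
  simp at h1

/-- A convergent sequence is bounded. -/
lemma exists_bound_of_tendsto {f : ℕ → ℂ} {l : ℂ} (h : Tendsto f atTop (𝓝 l)) :
    ∃ C : ℝ, 0 < C ∧ ∀ n, ‖f n‖ ≤ C := by
  obtain ⟨C, hC⟩ := (Metric.isBounded_range_of_tendsto f h).exists_norm_le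
  exact ⟨max C 1, by positivity, fun n => (hC _ ⟨n, rfl⟩).trans (le_max_left _ _)⟩

lemma exists_bound_qPoch {q : ℂ} (hq : ‖q‖ < 1) (a : ℂ) :
    ∃ C : ℝ, 0 < C ∧ ∀ n, ‖qPoch a q n‖ ≤ C :=
  exists_bound_of_tendsto (tendsto_qPoch hq a)

lemma tendsto_qPoch_inv {q : ℂ} (hq : ‖q‖ < 1) {a : ℂ} (h : ∀ k : ℕ, 1 - a * q ^ k ≠ 0) :
    Tendsto (fun n => (qPoch a q n)⁻¹) atTop (𝓝 (qPochInf a q)⁻¹) :=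
  (tendsto_qPoch hq a).inv₀ (qPochInf_ne_zero hq h)

lemma exists_bound_qPoch_inv {q : ℂ} (hq : ‖q‖ < 1) {a : ℂ} (h : ∀ k : ℕ, 1 - a * q ^ k ≠ 0) :
    ∃ C : ℝ, 0 < C ∧ ∀ n, ‖(qPoch a q n)⁻¹‖ ≤ C :=
  exists_bound_of_tendsto (tendsto_qPoch_inv hq h)

/-- The triangular number `n(n+1)/2` of an integer. -/
def tri (n : ℤ) : ℤ := n * (n + 1) / 2

lemma two_mul_tri (n : ℤ) : 2 * tri n = n * (n + 1) :=
  Int.mul_ediv_cancel' (Int.even_mul_succ_self n).two_dvd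

lemma tri_add (m n : ℤ) : tri (m + n) = tri m + tri n + m * n := by
  have h1 := two_mul_tri m
  have h2 := two_mul_tri n
  have h3 := two_mul_tri (m + n)
  nlinarith

lemma tri_one : tri 1 = 1 := by decide

lemma tri_zero : tri 0 = 0 := by decide

lemma tri_neg (n : ℤ) : tri (-n) = tri n - n := by
  have h1 := two_mul_tri n
  have h2 := two_mul_tri (-n)
  nlinarith

lemma tri_nonneg (n : ℤ) : 0 ≤ tri n := by
  have h1 := two_mul_tri n
  rcases le_or_gt 0 n with h | h
  · nlinarith
  · have : n + 1 ≤ 0 := by omega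
    nlinarith

/-- `∑ w^n q^{c n(n+1)/2}` converges absolutely over `ℤ`. -/
lemma summable_tri {ρ w : ℝ} (h0 : 0 < ρ) (h1 : ρ < 1) (hw : 0 < w) :
    Summable fun n : ℤ => w ^ n * ρ ^ tri n := by
  have key : ∀ w : ℝ, 0 < w → Summable fun n : ℕ => w ^ (n : ℤ) * ρ ^ tri n := by
    intro w hw
    refine summable_of_ratio_test_tendsto_lt_one (l := 0) one_pos ?_ ?_
    · exact Eventually.of_forall fun n => by positivity
    · have h : Tendsto (fun n : ℕ => w * ρ * ρ ^ n) atTop (𝓝 (w * ρ * 0)) :=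
        (tendsto_pow_atTop_nhds_zero_of_lt_one h0.le h1).const_mul _
      rw [mul_zero] at h
      refine h.congr fun n => ?_
      have e1 : tri ((n + 1 : ℕ) : ℤ) = tri n + n + 1 := by
        push_cast; rw [tri_add, tri_one]; ring
      rw [e1, Real.norm_of_nonneg (by positivity), Real.norm_of_nonneg (by positivity)]
      have : ρ ^ (tri n) ≠ 0 := by positivity
      have : w ^ (n : ℤ) ≠ 0 := by positivity
      push_cast
      rw [zpow_add_one₀ hw.ne', zpow_add_one₀ h0.ne', zpow_add₀ h0.ne', zpow_natCast ρ n]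
      field_simp
  refine Summable.of_nat_of_neg (key w hw) ?_
  refine (key (w⁻¹ * ρ⁻¹) (by positivity)).congr fun n => ?_
  rw [tri_neg, zpow_sub₀ h0.ne', mul_zpow, inv_zpow, inv_zpow, zpow_neg]
  field_simp

lemma summable_tri_norm {q w : ℂ} (hq0 : q ≠ 0) (hq : ‖q‖ < 1) (hw : w ≠ 0) (c : ℕ) (hc : c ≠ 0) :
    Summable fun n : ℤ => ‖w ^ n * q ^ (c * tri n)‖ := by
  have := summable_tri (ρ := ‖q‖ ^ c) (w := ‖w‖) (by positivity)
    (pow_lt_one₀ (norm_nonneg _) hq hc) (by positivity)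
  refine this.congr fun n => ?_
  rw [norm_mul, norm_zpow, norm_zpow, zpow_mul, zpow_natCast]

/-- The factors `1/(1 - z q^n)` are bounded over `n ∈ ℤ`. -/
lemma exists_bound_inv {q z : ℂ} (hq0 : q ≠ 0) (hq : ‖q‖ < 1) (hz : z ≠ 0) :
    ∃ C : ℝ, 0 < C ∧ ∀ n : ℤ, ‖(1 - z * q ^ n)⁻¹‖ ≤ C := by
  have hp : Tendsto (fun n : ℕ => q ^ n) atTop (𝓝 0) := tendsto_pow_atTop_nhds_zero_of_norm_lt_one hq
  have h1 : Tendsto (fun n : ℕ => (1 - z * q ^ n)⁻¹) atTop (𝓝 (1 - z * 0)⁻¹) :=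
    ((hp.const_mul z).const_sub 1).inv₀ (by simp)
  have h2 : Tendsto (fun n : ℕ => (q ^ n) * (q ^ n - z)⁻¹) atTop (𝓝 (0 * (0 - z)⁻¹)) :=
    hp.mul ((hp.sub_const z).inv₀ (by simpa using hz))
  obtain ⟨C1, h1', hC1⟩ := exists_bound_of_tendsto h1
  obtain ⟨C2, _, hC2⟩ := exists_bound_of_tendsto h2
  refine ⟨C1 + C2, by positivity, fun n => ?_⟩
  rcases Int.eq_nat_or_neg n with ⟨m, rfl | rfl⟩
  · have := hC1 m
    rw [zpow_natCast]; linarith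
  · have := hC2 m
    rw [zpow_neg, zpow_natCast]
    have e : (1 - z * (q ^ m)⁻¹)⁻¹ = (q ^ m) * (q ^ m - z)⁻¹ := by
      have : q ^ m ≠ 0 := pow_ne_zero _ hq0
      rw [show 1 - z * (q ^ m)⁻¹ = (q ^ m - z) * (q ^ m)⁻¹ by field_simp, mul_inv, inv_inv, mul_comm]
    rw [e]; linarith

/-! ### The Jacobi triple product -/

/-- `1/(q;q)_k`, extended by zero to negative `k`. -/
noncomputable def gq (q : ℂ) (k : ℤ) : ℂ := if 0 ≤ k then (qPoch q q k.toNat)⁻¹ else 0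

lemma gq_nat (q : ℂ) (k : ℕ) : gq q k = (qPoch q q k)⁻¹ := by simp [gq]

lemma gq_neg (q : ℂ) {k : ℤ} (hk : k < 0) : gq q k = 0 := by simp [gq, hk]

lemma gq_zero (q : ℂ) : gq q 0 = 1 := by simp [gq, qPoch]

lemma gq_sub_one {q : ℂ} (hq : ‖q‖ < 1) (k : ℤ) : gq q (k - 1) = (1 - q ^ k) * gq q k := by
  rcases lt_trichotomy k 0 with h | rfl | h
  · rw [gq_neg q h, gq_neg q (by omega), mul_zero]
  · simp [gq]
  · obtain ⟨n, rfl⟩ : ∃ n : ℕ, k = (n + 1 : ℕ) := ⟨(k - 1).toNat, by omega⟩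
    have e : ((n + 1 : ℕ) : ℤ) - 1 = (n : ℕ) := by push_cast; ring
    rw [e, gq_nat, gq_nat, qPoch_succ, zpow_natCast, mul_inv, pow_succ']
    field_simp [one_sub_pow_ne_zero hq n]

lemma exists_bound_gq {q : ℂ} (hq : ‖q‖ < 1) : ∃ C : ℝ, 0 < C ∧ ∀ k, ‖gq q k‖ ≤ C := by
  obtain ⟨C, h0, hC⟩ := exists_bound_qPoch_inv hq (one_sub_pow_ne_zero hq)
  refine ⟨C, h0, fun k => ?_⟩
  unfold gq
  split_ifs
  · exact hC _
  · simpa using h0.le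

lemma tendsto_gq {q : ℂ} (hq : ‖q‖ < 1) (r : ℤ) :
    Tendsto (fun n : ℕ => gq q (n + r)) atTop (𝓝 (qPochInf q q)⁻¹) := by
  have h := tendsto_qPoch_inv hq (one_sub_pow_ne_zero hq)
  have h2 : Tendsto (fun n : ℕ => ((n : ℤ) + r).toNat) atTop atTop := by
    refine tendsto_atTop.2 fun b => ?_
    filter_upwards [eventually_ge_atTop ((b - r).toNat)] with n hn
    omega
  refine (h.comp h2).congr' ?_
  filter_upwards [eventually_ge_atTop (-r).toNat] with n hn
  have : 0 ≤ (n : ℤ) + r := by omega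
  simp [gq, this]

/-- The finite Jacobi triple product. -/
lemma hasSum_finite_jtp {q x : ℂ} (hq0 : q ≠ 0) (hq : ‖q‖ < 1) (hx : x ≠ 0) (n : ℕ) :
    HasSum (fun r : ℤ => (-x) ^ r * q ^ tri (r - 1) * (gq q (n - r) * gq q (n + r)))
      (qPoch x q n * qPoch (q / x) q n * (qPoch q q (2 * n))⁻¹) := by
  have hx' : -x ≠ 0 := neg_ne_zero.2 hx
  induction n with
  | zero =>
    simp only [qPoch_zero, mul_zero, mul_one, inv_one]
    have h1 : (1 : ℂ) = (fun r : ℤ => (-x) ^ r * q ^ tri (r - 1) *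
        (gq q (((0 : ℕ) : ℤ) - r) * gq q (((0 : ℕ) : ℤ) + r))) 0 := by
      simp [gq_zero, show tri (-1) = 0 by decide]
    rw [h1]
    refine hasSum_single 0 fun r hr => ?_
    rcases lt_or_gt_of_ne hr with h | h
    · simp [gq_neg q h]
    · simp [gq_neg q (show -r < 0 by omega)]
  | succ n ih =>
    have s1 := (Equiv.subRight (1 : ℤ)).hasSum_iff.2 ih
    have s2 := (Equiv.addRight (1 : ℤ)).hasSum_iff.2 ih
    have d1 : (1 : ℂ) - q ^ (2 * n + 1) ≠ 0 := by
      rw [pow_succ']; exact one_sub_pow_ne_zero hq _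
    have d2 : (1 : ℂ) - q ^ (2 * n + 2) ≠ 0 := by
      rw [show 2 * n + 2 = (2 * n + 1) + 1 by ring, pow_succ']; exact one_sub_pow_ne_zero hq _
    have key := (((ih.mul_left (1 + q ^ (2 * n + 1))).sub (s1.mul_left (x * q ^ n))).sub
      (s2.mul_left (q ^ (n + 1) / x))).mul_left (((1 - q ^ (2 * n + 1)) * (1 - q ^ (2 * n + 2)))⁻¹)
    have hP : qPoch x q (n + 1) * qPoch (q / x) q (n + 1) * (qPoch q q (2 * (n + 1)))⁻¹ =
        ((1 - q ^ (2 * n + 1)) * (1 - q ^ (2 * n + 2)))⁻¹ *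
      ((1 + q ^ (2 * n + 1)) * (qPoch x q n * qPoch (q / x) q n * (qPoch q q (2 * n))⁻¹) -
          x * q ^ n * (qPoch x q n * qPoch (q / x) q n * (qPoch q q (2 * n))⁻¹) -
        q ^ (n + 1) / x * (qPoch x q n * qPoch (q / x) q n * (qPoch q q (2 * n))⁻¹)) := by
      rw [qPoch_succ, qPoch_succ, show 2 * (n + 1) = 2 * n + 1 + 1 by ring, qPoch_succ, qPoch_succ,
        mul_inv, mul_inv, ← pow_succ', ← pow_succ', show 2 * n + 1 + 1 = 2 * n + 2 by ring]
      field_simp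
      ring
    rw [hP]
    refine (congrArg (fun f : ℤ → ℂ => HasSum f _) (funext fun r => ?_)).mpr key
    simp only [Function.comp, Equiv.subRight_apply, Equiv.coe_addRight]
    set A := gq q (((n + 1 : ℕ) : ℤ) - r) with hA
    set B := gq q (((n + 1 : ℕ) : ℤ) + r) with hB
    have e1 : gq q ((n : ℤ) - r) = (1 - q ^ ((n : ℤ) + 1 - r)) * A := by
      rw [hA, show (n : ℤ) - r = ((n + 1 : ℕ) : ℤ) - r - 1 by push_cast; ring, gq_sub_one hq]
      push_cast; rfl
    have e2 : gq q ((n : ℤ) + r) = (1 - q ^ ((n : ℤ) + 1 + r)) * B := by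
      rw [hB, show (n : ℤ) + r = ((n + 1 : ℕ) : ℤ) + r - 1 by push_cast; ring, gq_sub_one hq]
      push_cast; rfl
    have e3 : gq q ((n : ℤ) - (r - 1)) = A := by
      rw [hA]; congr 1; push_cast; ring
    have e4 : gq q ((n : ℤ) + (r + 1)) = B := by
      rw [hB]; congr 1; push_cast; ring
    have e5 : gq q ((n : ℤ) + (r - 1)) = (1 - q ^ ((n : ℤ) + r)) * gq q ((n : ℤ) + r) := by
      rw [← gq_sub_one hq]; congr 1; ring
    have e6 : gq q ((n : ℤ) - (r + 1)) = (1 - q ^ ((n : ℤ) - r)) * gq q ((n : ℤ) - r) := by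
      rw [← gq_sub_one hq]; congr 1; ring
    rw [e5, e6, e3, e4, e1, e2]
    have t1 : tri (r - 1 - 1) = tri (r - 1) - r + 1 := by
      have := two_mul_tri (r - 1 - 1); have := two_mul_tri (r - 1); nlinarith
    have t2 : tri (r + 1 - 1) = tri (r - 1) + r := by
      have := two_mul_tri (r + 1 - 1); have := two_mul_tri (r - 1); nlinarith
    rw [t1, t2, zpow_sub₀ hx', zpow_add₀ hx', zpow_one]
    simp only [zpow_add₀ hq0, zpow_sub₀ hq0, zpow_one, zpow_natCast]
    have := zpow_ne_zero r hq0
    have := zpow_ne_zero r hx'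
    field_simp
    ring

/-- The theta product `(x;q)_∞ (q/x;q)_∞`. -/
noncomputable def th (x q : ℂ) : ℂ := qPochInf x q * qPochInf (q / x) q

lemma summable_jtp {q x : ℂ} (hq0 : q ≠ 0) (hq : ‖q‖ < 1) (hx : x ≠ 0) :
    Summable fun r : ℤ => ‖(-x) ^ r * q ^ tri (r - 1)‖ := by
  have := summable_tri_norm hq0 hq (w := -x / q) (div_ne_zero (neg_ne_zero.2 hx) hq0) 1 one_ne_zero
  refine this.congr fun r => ?_
  have t2 : tri (r - 1) = tri r - r := by
    have := two_mul_tri (r - 1); have := two_mul_tri r; nlinarith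
  rw [t2, zpow_sub₀ hq0, div_zpow]
  push_cast
  rw [one_mul]
  congr 1
  ring

lemma qPochInf_self_ne_zero {q : ℂ} (hq : ‖q‖ < 1) : qPochInf q q ≠ 0 :=
  qPochInf_ne_zero hq (one_sub_pow_ne_zero hq)

/-- The Jacobi triple product. -/
lemma jtp {q x : ℂ} (hq0 : q ≠ 0) (hq : ‖q‖ < 1) (hx : x ≠ 0) :
    qPochInf q q * th x q = ∑' r : ℤ, (-x) ^ r * q ^ tri (r - 1) := by
  obtain ⟨C, hC0, hC⟩ := exists_bound_gq hq
  have hE := qPochInf_self_ne_zero hq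
  have h1 : Tendsto (fun n : ℕ => ∑' r : ℤ, (-x) ^ r * q ^ tri (r - 1) *
      (gq q (n - r) * gq q (n + r))) atTop
      (𝓝 (∑' r : ℤ, (-x) ^ r * q ^ tri (r - 1) * ((qPochInf q q)⁻¹ * (qPochInf q q)⁻¹))) := by
    refine tendsto_tsum_of_dominated_convergence
      (bound := fun r => ‖(-x) ^ r * q ^ tri (r - 1)‖ * (C * C)) ?_ ?_ ?_
    · exact (summable_jtp hq0 hq hx).mul_right _
    · intro r
      refine Tendsto.const_mul _ (Tendsto.mul ?_ (tendsto_gq hq r))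
      simpa [sub_eq_add_neg] using tendsto_gq hq (-r)
    · refine Eventually.of_forall fun n r => ?_
      rw [norm_mul, norm_mul (gq q _)]
      gcongr
      · exact hC _
      · exact hC _
  have h2 : Tendsto (fun n : ℕ => qPoch x q n * qPoch (q / x) q n * (qPoch q q (2 * n))⁻¹) atTop
      (𝓝 (qPochInf x q * qPochInf (q / x) q * (qPochInf q q)⁻¹)) := by
    refine ((tendsto_qPoch hq _).mul (tendsto_qPoch hq _)).mul ?_
    exact (tendsto_qPoch_inv hq (one_sub_pow_ne_zero hq)).comp
      (tendsto_id.const_mul_atTop' (by norm_num : 0 < 2))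
  have h3 := tendsto_nhds_unique (h1.congr fun n => (hasSum_finite_jtp hq0 hq hx n).tsum_eq) h2
  rw [tsum_mul_right] at h3
  rw [th]
  field_simp at h3 ⊢
  linear_combination (-1 : ℂ) * h3

lemma th_inv_mul {q x : ℂ} (hq0 : q ≠ 0) : th (q / x) q = th x q := by
  unfold th
  rw [div_div_cancel₀ hq0, mul_comm]

lemma th_mul {q x : ℂ} (hq0 : q ≠ 0) (hq : ‖q‖ < 1) (hx : x ≠ 0) : th (x * q) q = -th x q / x := by
  unfold th
  rw [qPochInf_succ hq x, show q / (x * q) = 1 / x by field_simp, qPochInf_succ hq (1 / x),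
    show 1 / x * q = q / x by ring]
  field_simp
  ring

lemma th_inv {q x : ℂ} (hq0 : q ≠ 0) (hq : ‖q‖ < 1) (hx : x ≠ 0) : th x⁻¹ q = -th x q / x := by
  rw [← th_mul hq0 hq hx, ← th_inv_mul hq0]
  congr 1
  field_simp

lemma one_sub_ne_of_zpow {q x : ℂ} (h : ∀ n : ℤ, 1 - x * q ^ n ≠ 0) (k : ℕ) : 1 - x * q ^ k ≠ 0 := by
  simpa using h k

lemma one_sub_inv_ne_of_zpow {q x : ℂ} (hq0 : q ≠ 0) (hx : x ≠ 0)
    (h : ∀ n : ℤ, 1 - x * q ^ n ≠ 0) (k : ℕ) : 1 - q / x * q ^ k ≠ 0 := by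
  have := h (-(k + 1 : ℕ))
  rw [zpow_neg, zpow_natCast] at this
  intro h'
  apply this
  have hk : q ^ (k + 1) ≠ 0 := pow_ne_zero _ hq0
  field_simp
  rw [pow_succ] at *
  field_simp at h'
  linear_combination -h'

lemma th_ne_zero {q x : ℂ} (hq0 : q ≠ 0) (hq : ‖q‖ < 1) (hx : x ≠ 0)
    (h : ∀ n : ℤ, 1 - x * q ^ n ≠ 0) : th x q ≠ 0 :=
  mul_ne_zero (qPochInf_ne_zero hq (one_sub_ne_of_zpow h))
    (qPochInf_ne_zero hq (one_sub_inv_ne_of_zpow hq0 hx h))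

/-! ### Theta functions and logarithmic derivatives -/

lemma differentiable_qPochInf {q : ℂ} (hq : ‖q‖ < 1) : Differentiable ℂ fun a => qPochInf a q := by
  intro a₀
  have hsum : Summable fun n : ℕ => (‖a₀‖ + 1) * ‖q‖ ^ n :=
    (summable_geometric_of_lt_one (norm_nonneg _) hq).mul_left _
  have h := Summable.hasProdLocallyUniformlyOn_nat_one_add (f := fun (n : ℕ) (a : ℂ) => -(a * q ^ n))
    (K := Metric.ball (0 : ℂ) (‖a₀‖ + 1)) Metric.isOpen_ball hsum
    (Eventually.of_forall fun n x hx => by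
      rw [norm_neg, norm_mul, norm_pow]
      gcongr
      simpa using (mem_ball_zero_iff.1 hx).le) (fun n => by fun_prop)
  have hd := h.differentiableOn (.of_forall fun _ => by
    simpa [Finset.prod_fn] using DifferentiableOn.finsetProd (fun _ _ => by fun_prop))
    Metric.isOpen_ball
  have := hd.differentiableAt (Metric.isOpen_ball.mem_nhds (x := a₀) (by simp))
  simpa only [qPochInf, sub_eq_add_neg] using this

lemma differentiableAt_th {q x : ℂ} (hq : ‖q‖ < 1) (hx : x ≠ 0) :
    DifferentiableAt ℂ (fun u => th u q) x := by
  unfold th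
  have h := differentiable_qPochInf hq
  refine (h x).mul ?_
  exact (h (q / x)).comp (f := fun u => q / u) x (by fun_prop (disch := exact hx))

/-- The logarithmic derivative `x θ'(x)/θ(x)` of the theta product `θ(x) = th x q`. -/
noncomputable def lam (x q : ℂ) : ℂ := x * deriv (fun u => th u q) x / th x q

lemma hasDerivAt_th_mul {q x : ℂ} (hq : ‖q‖ < 1) (hx : x ≠ 0) (h : th x q ≠ 0) :
    HasDerivAt (fun t => th (x * t) q) (lam x q * th x q) 1 := by
  have h1 : HasDerivAt (fun u => th u q) (deriv (fun u => th u q) x) (x * 1) := by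
    rw [mul_one]; exact (differentiableAt_th hq hx).hasDerivAt
  have h2 : HasDerivAt (fun t : ℂ => x * t) x 1 := by
    simpa using (hasDerivAt_id (1 : ℂ)).const_mul x
  have h3 := h1.comp (1 : ℂ) h2
  rw [lam, div_mul_cancel₀ _ h, mul_comm]
  exact h3

lemma lam_inv_mul {q x : ℂ} (hq0 : q ≠ 0) (hq : ‖q‖ < 1) (hx : x ≠ 0) :
    lam (q / x) q = -lam x q := by
  have h1 : HasDerivAt (fun u => th (q / u) q) (deriv (fun u => th u q) (q / x) * (-q / x ^ 2)) x :=
    HasDerivAt.comp (h₂ := fun u => th u q) (h := fun u => q / u) x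
      (differentiableAt_th hq (div_ne_zero hq0 hx)).hasDerivAt
      (by simpa only [div_eq_mul_inv, neg_mul, mul_neg] using (hasDerivAt_inv hx).const_mul q)
  simp only [th_inv_mul hq0] at h1
  rw [lam, lam, th_inv_mul hq0, h1.deriv]
  field_simp

lemma lam_mul {q x : ℂ} (hq0 : q ≠ 0) (hq : ‖q‖ < 1) (hx : x ≠ 0) (h : th x q ≠ 0) :
    lam (x * q) q = lam x q - 1 := by
  have h1 : HasDerivAt (fun u => th (u * q) q) (deriv (fun u => th u q) (x * q) * q) x :=
    HasDerivAt.comp (h₂ := fun u => th u q) (h := fun u => u * q) x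
      (differentiableAt_th hq (mul_ne_zero hx hq0)).hasDerivAt
      (by simpa using (hasDerivAt_id x).mul_const q)
  have h2 : HasDerivAt (fun u => -th u q / u)
      ((-deriv (fun u => th u q) x * x - -th x q * 1) / x ^ 2) x :=
    (differentiableAt_th hq hx).hasDerivAt.neg.div (hasDerivAt_id x) hx
  have h3 : (fun u => th (u * q) q) =ᶠ[𝓝 x] fun u => -th u q / u := by
    filter_upwards [isOpen_ne.mem_nhds hx] with u hu using th_mul hq0 hq hu
  have h4 := (h1.congr_of_eventuallyEq h3.symm).unique h2
  rw [lam, lam, th_mul hq0 hq hx]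
  have h5 : deriv (fun u => th u q) (x * q) =
      (-deriv (fun u => th u q) x * x - -th x q * 1) / x ^ 2 / q := by
    rw [← h4]; field_simp
  rw [h5]
  field_simp
  ring

lemma lam_inv {q x : ℂ} (hq0 : q ≠ 0) (hq : ‖q‖ < 1) (hx : x ≠ 0) (h : th x q ≠ 0) :
    lam x⁻¹ q = 1 - lam x q := by
  have h1 : th x⁻¹ q ≠ 0 := by rw [th_inv hq0 hq hx]; exact div_ne_zero (neg_ne_zero.2 h) hx
  have h2 := lam_mul hq0 hq (inv_ne_zero hx) h1
  rw [show x⁻¹ * q = q / x by ring, lam_inv_mul hq0 hq hx] at h2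
  linear_combination -h2

/-! ### The three-term theta relation -/

/-- Even part of the theta series, `∑ x^{2k} q^{k²}`. -/
noncomputable def beta0 (x q : ℂ) : ℂ := ∑' k : ℤ, x ^ (2 * k) * q ^ (k ^ 2)

/-- Odd part of the theta series, `∑ x^{2k+1} q^{k²+k}`. -/
noncomputable def beta1 (x q : ℂ) : ℂ := ∑' k : ℤ, x ^ (2 * k + 1) * q ^ (k ^ 2 + k)

lemma summable_beta1 {q x : ℂ} (hq0 : q ≠ 0) (hq : ‖q‖ < 1) (hx : x ≠ 0) :
    Summable fun k : ℤ => ‖x ^ (2 * k + 1) * q ^ (k ^ 2 + k)‖ := by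
  refine ((summable_tri_norm hq0 hq (w := x ^ 2) (pow_ne_zero _ hx) 2 two_ne_zero).mul_left
    ‖x‖).congr fun k => ?_
  rw [← norm_mul]
  congr 1
  rw [show ((2 : ℕ) : ℤ) * tri k = k ^ 2 + k by push_cast; rw [two_mul_tri]; ring,
    zpow_add₀ hx, zpow_one, ← zpow_natCast x 2, ← zpow_mul]
  push_cast
  ring

lemma summable_beta0 {q x : ℂ} (hq0 : q ≠ 0) (hq : ‖q‖ < 1) (hx : x ≠ 0) :
    Summable fun k : ℤ => ‖x ^ (2 * k) * q ^ (k ^ 2)‖ := by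
  refine (summable_tri_norm hq0 hq (w := x ^ 2 / q) (div_ne_zero (pow_ne_zero _ hx) hq0) 2
    two_ne_zero).congr fun k => ?_
  congr 1
  rw [show ((2 : ℕ) : ℤ) * tri k = k ^ 2 + k by push_cast; rw [two_mul_tri]; ring,
    div_zpow, ← zpow_natCast x 2, ← zpow_mul, zpow_add₀ hq0]
  have := zpow_ne_zero k hq0
  push_cast
  field_simp

/-- Splitting of `ℤ × ℤ` by the parity of the difference of the coordinates. -/
def parityEquiv : (ℤ × ℤ) ⊕ (ℤ × ℤ) ≃ ℤ × ℤ where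
  toFun := Sum.elim (fun p => (p.1 + p.2, p.1 - p.2)) (fun p => (p.1 + p.2 + 1, p.1 - p.2))
  invFun p := if (p.1 + p.2) % 2 = 0 then Sum.inl ((p.1 + p.2) / 2, (p.1 - p.2) / 2)
    else Sum.inr ((p.1 + p.2) / 2, (p.1 - p.2) / 2)
  left_inv := by
    rintro (⟨a, b⟩ | ⟨a, b⟩)
    · change (if (a + b + (a - b)) % 2 = 0 then Sum.inl ((a + b + (a - b)) / 2,
        (a + b - (a - b)) / 2) else _) = _
      rw [if_pos (by omega)]
      congr 2 <;> omega
    · change (if (a + b + 1 + (a - b)) % 2 = 0 then _ else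
        Sum.inr ((a + b + 1 + (a - b)) / 2, (a + b + 1 - (a - b)) / 2)) = _
      rw [if_neg (by omega)]
      congr 2 <;> omega
  right_inv := by
    rintro ⟨m, n⟩
    dsimp only
    split_ifs with h
    · simp only [Sum.elim_inl, Prod.mk.injEq]; omega
    · simp only [Sum.elim_inr, Prod.mk.injEq]; omega

/-- The theta function `E(q) θ(x)`, which has the triple product expansion. -/
noncomputable def jj (x q : ℂ) : ℂ := qPochInf q q * th x q

/-- A product of two theta series, rearranged along the two parity classes of the pair of
summation indices; `three_term` is a polynomial consequence of these formulas. -/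
lemma jj_mul_jj {q x y : ℂ} (hq0 : q ≠ 0) (hq : ‖q‖ < 1) (hx : x ≠ 0) (hy : y ≠ 0) :
    jj (x * y) q * jj (x / y) q =
      x * (beta1 x q * beta0 y q - beta0 x q * beta1 y q) := by
  have hxy := mul_ne_zero hx hy
  have hxy' := div_ne_zero hx hy
  have s1 := summable_jtp hq0 hq hxy
  have s2 := summable_jtp hq0 hq hxy'
  have a0 := summable_beta0 hq0 hq hx
  have a1 := summable_beta1 hq0 hq hx
  have b0 := summable_beta0 hq0 hq hy
  have b1 := summable_beta1 hq0 hq hy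
  have sp := summable_mul_of_summable_norm s1 s2
  have sp' := parityEquiv.summable_iff.2 sp
  rw [jj, jj, jtp hq0 hq hxy, jtp hq0 hq hxy', tsum_mul_tsum_of_summable_norm s1 s2,
    ← parityEquiv.tsum_eq]
  have e0 : ∀ p : ℤ × ℤ, (-(x * y)) ^ (p.1 + p.2) * q ^ tri (p.1 + p.2 - 1) *
      ((-(x / y)) ^ (p.1 - p.2) * q ^ tri (p.1 - p.2 - 1)) =
      x ^ (2 * p.1) * q ^ (p.1 ^ 2 - p.1) * (y ^ (2 * p.2) * q ^ (p.2 ^ 2)) := by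
    rintro ⟨a, b⟩
    have h1 : tri (a + b - 1) + tri (a - b - 1) = (a ^ 2 - a) + b ^ 2 := by
      have := two_mul_tri (a + b - 1); have := two_mul_tri (a - b - 1); nlinarith
    have h2 : q ^ tri (a + b - 1) * q ^ tri (a - b - 1) = q ^ (a ^ 2 - a) * q ^ (b ^ 2) := by
      rw [← zpow_add₀ hq0, h1, zpow_add₀ hq0]
    have h3 : (-(x * y)) ^ (a + b) * (-(x / y)) ^ (a - b) = x ^ (2 * a) * y ^ (2 * b) := by
      rw [neg_eq_neg_one_mul, neg_eq_neg_one_mul (x / y), mul_zpow, mul_zpow, mul_zpow, div_zpow,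
        zpow_add₀ hx, zpow_sub₀ hx, zpow_add₀ hy, zpow_sub₀ hy, zpow_add₀ (by norm_num : (-1 : ℂ) ≠ 0),
        zpow_sub₀ (by norm_num : (-1 : ℂ) ≠ 0), two_mul, two_mul, zpow_add₀ hx, zpow_add₀ hy]
      have := zpow_ne_zero a hx
      have := zpow_ne_zero b hx
      have := zpow_ne_zero a hy
      have := zpow_ne_zero b hy
      have := zpow_ne_zero b (by norm_num : (-1 : ℂ) ≠ 0)
      have h4 : (-1 : ℂ) ^ a * (-1) ^ a = 1 := by rw [← mul_zpow]; simp
      field_simp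
      linear_combination h4
    dsimp only
    linear_combination q ^ tri (a + b - 1) * q ^ tri (a - b - 1) * h3 + x ^ (2 * a) * y ^ (2 * b) * h2
  have e1 : ∀ p : ℤ × ℤ, (-(x * y)) ^ (p.1 + p.2 + 1) * q ^ tri (p.1 + p.2 + 1 - 1) *
      ((-(x / y)) ^ (p.1 - p.2) * q ^ tri (p.1 - p.2 - 1)) =
      -(x * (x ^ (2 * p.1) * q ^ (p.1 ^ 2) * (y ^ (2 * p.2 + 1) * q ^ (p.2 ^ 2 + p.2)))) := by
    rintro ⟨a, b⟩
    have h1 : tri (a + b + 1 - 1) + tri (a - b - 1) = a ^ 2 + (b ^ 2 + b) := by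
      have := two_mul_tri (a + b + 1 - 1); have := two_mul_tri (a - b - 1); nlinarith
    have h2 : q ^ tri (a + b + 1 - 1) * q ^ tri (a - b - 1) = q ^ (a ^ 2) * q ^ (b ^ 2 + b) := by
      rw [← zpow_add₀ hq0, h1, zpow_add₀ hq0]
    have h3 : (-(x * y)) ^ (a + b + 1) * (-(x / y)) ^ (a - b) =
        -(x * (x ^ (2 * a) * y ^ (2 * b + 1))) := by
      rw [neg_eq_neg_one_mul, neg_eq_neg_one_mul (x / y), mul_zpow, mul_zpow, mul_zpow, div_zpow]
      simp only [zpow_add₀ hx, zpow_sub₀ hx, zpow_add₀ hy, zpow_sub₀ hy,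
        zpow_add₀ (by norm_num : (-1 : ℂ) ≠ 0), zpow_one,
        zpow_sub₀ (by norm_num : (-1 : ℂ) ≠ 0), two_mul]
      have := zpow_ne_zero a hx
      have := zpow_ne_zero b hx
      have := zpow_ne_zero a hy
      have := zpow_ne_zero b hy
      have := zpow_ne_zero b (by norm_num : (-1 : ℂ) ≠ 0)
      have h4 : (-1 : ℂ) ^ a * (-1) ^ a = 1 := by rw [← mul_zpow]; simp
      field_simp
      linear_combination -h4
    dsimp only
    linear_combination q ^ tri (a + b + 1 - 1) * q ^ tri (a - b - 1) * h3 -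
      x * x ^ (2 * a) * y ^ (2 * b + 1) * h2
  have a0' : Summable fun k : ℤ => ‖x ^ (2 * k) * q ^ (k ^ 2 - k)‖ := by
    have := (Equiv.subRight (1 : ℤ)).summable_iff.2 (a1.mul_left ‖x‖)
    refine this.congr fun k => ?_
    simp only [Function.comp, Equiv.subRight_apply]
    rw [← norm_mul, ← mul_assoc, ← zpow_one_add₀ hx]
    congr 3 <;> ring
  have e2 : ∑' k : ℤ, x ^ (2 * k) * q ^ (k ^ 2 - k) = x * beta1 x q := by
    rw [beta1, ← tsum_mul_left, ← (Equiv.subRight (1 : ℤ)).tsum_eq (fun k : ℤ => x * _)]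
    refine tsum_congr fun k => ?_
    simp only [Equiv.subRight_apply]
    rw [← mul_assoc, ← zpow_one_add₀ hx]
    congr 2 <;> ring
  refine (Summable.tsum_sum (sp'.comp_injective Sum.inl_injective)
    (sp'.comp_injective Sum.inr_injective)).trans ?_
  simp only [parityEquiv, Function.comp, Equiv.coe_fn_mk, Sum.elim_inl, Sum.elim_inr]
  rw [tsum_congr e0, tsum_congr e1, tsum_neg, tsum_mul_left,
    ← tsum_mul_tsum_of_summable_norm a0' b0, ← tsum_mul_tsum_of_summable_norm a0 b1, e2]
  unfold beta0 beta1
  ring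

/-- An instance of Weierstrass's three-term relation, chosen so that differentiation at `t = 1`
gives `three_lam`. -/
lemma three_term {q x t : ℂ} (hq0 : q ≠ 0) (hq : ‖q‖ < 1) (hx : x ≠ 0) (ht : t ≠ 0) :
    -th (x * t) q ^ 2 * th x⁻¹ q * th (x ^ 3) q + th (x⁻¹ * t) q * th (x ^ 3 * t) q * th x q ^ 2 +
      x * th (x ^ 2 * t) q * th t q * th ((x ^ 2)⁻¹) q * th (x ^ 2) q = 0 := by
  have hE := qPochInf_self_ne_zero hq
  have hxt := mul_ne_zero hx ht
  have hx2 : (x ^ 2)⁻¹ ≠ 0 := inv_ne_zero (pow_ne_zero _ hx)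
  have d1 := jj_mul_jj hq0 hq hxt one_ne_zero
  have d2 := jj_mul_jj hq0 hq hx hx2
  have d3 := jj_mul_jj hq0 hq hxt hx2
  have d4 := jj_mul_jj hq0 hq hx one_ne_zero
  have d5 := jj_mul_jj hq0 hq hxt hx
  have d6 := jj_mul_jj hq0 hq one_ne_zero hx2
  rw [show x * t / 1 = x * t by ring, show x * t * 1 = x * t by ring] at d1
  rw [show x * (x ^ 2)⁻¹ = x⁻¹ by field_simp, show x / (x ^ 2)⁻¹ = x ^ 3 by field_simp] at d2
  rw [show x * t * (x ^ 2)⁻¹ = x⁻¹ * t by field_simp,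
    show x * t / (x ^ 2)⁻¹ = x ^ 3 * t by field_simp] at d3
  rw [mul_one, div_one] at d4
  rw [show x * t * x = x ^ 2 * t by ring, show x * t / x = t by field_simp] at d5
  rw [one_mul, show 1 / (x ^ 2)⁻¹ = x ^ 2 by field_simp, one_mul] at d6
  unfold jj at d1 d2 d3 d4 d5 d6
  have key : qPochInf q q ^ 4 * (-th (x * t) q ^ 2 * th x⁻¹ q * th (x ^ 3) q +
      th (x⁻¹ * t) q * th (x ^ 3 * t) q * th x q ^ 2 +
      x * th (x ^ 2 * t) q * th t q * th ((x ^ 2)⁻¹) q * th (x ^ 2) q) = 0 := by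
    calc _ = -((qPochInf q q * th (x * t) q) * (qPochInf q q * th (x * t) q)) *
          ((qPochInf q q * th x⁻¹ q) * (qPochInf q q * th (x ^ 3) q)) +
        ((qPochInf q q * th (x⁻¹ * t) q) * (qPochInf q q * th (x ^ 3 * t) q)) *
          ((qPochInf q q * th x q) * (qPochInf q q * th x q)) +
        x * ((qPochInf q q * th (x ^ 2 * t) q) * (qPochInf q q * th t q)) *
          ((qPochInf q q * th ((x ^ 2)⁻¹) q) * (qPochInf q q * th (x ^ 2) q)) := by ring
      _ = 0 := by rw [d1, d2, d3, d4, d5, d6]; ring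
  exact (mul_eq_zero.1 key).resolve_left (pow_ne_zero _ hE)

/-- `θ(t)/(1-t)`, with the removable singularity at `t = 1` filled in. -/
noncomputable def thr (t q : ℂ) : ℂ := qPochInf (q * t) q * qPochInf (q / t) q

lemma th_eq_thr {q : ℂ} (hq : ‖q‖ < 1) (t : ℂ) : th t q = (1 - t) * thr t q := by
  rw [th, thr, qPochInf_succ hq t, mul_comm t q, mul_assoc]

lemma thr_one (q : ℂ) : thr 1 q = qPochInf q q ^ 2 := by
  simp [thr, sq]

lemma thr_inv (t q : ℂ) : thr t⁻¹ q = thr t q := by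
  simp only [thr, div_inv_eq_mul, ← div_eq_mul_inv]
  ring

lemma differentiableAt_thr {q t : ℂ} (hq : ‖q‖ < 1) (ht : t ≠ 0) :
    DifferentiableAt ℂ (fun t => thr t q) t := by
  unfold thr
  have h := differentiable_qPochInf hq
  refine DifferentiableAt.mul ?_ ?_
  · exact (h (q * t)).comp (f := fun u => q * u) t (by fun_prop)
  · exact (h (q / t)).comp (f := fun u => q / u) t (by fun_prop (disch := exact ht))

/-- The symmetry `t ↦ 1/t` makes `t = 1` a critical point of `θ(t)/(1-t)`. -/
lemma hasDerivAt_thr {q : ℂ} (hq : ‖q‖ < 1) : HasDerivAt (fun t => thr t q) 0 1 := by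
  have h1 := (differentiableAt_thr hq one_ne_zero).hasDerivAt
  have h2 : HasDerivAt (fun t => thr t⁻¹ q) (deriv (fun t => thr t q) 1 * (-(1 ^ 2)⁻¹)) 1 := by
    refine HasDerivAt.comp (h₂ := fun t => thr t q) (h := fun t : ℂ => t⁻¹) (1 : ℂ) ?_
      (hasDerivAt_inv one_ne_zero)
    rw [inv_one]; exact h1
  simp only [thr_inv] at h2
  have h3 := h1.unique h2
  have : deriv (fun t => thr t q) 1 = 0 := by
    have : (2 : ℂ) * deriv (fun t => thr t q) 1 = 0 := by linear_combination h3
    simpa using this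
  rwa [this] at h1

lemma hasDerivAt_th_one {q : ℂ} (hq : ‖q‖ < 1) :
    HasDerivAt (fun t => th t q) (-qPochInf q q ^ 2) 1 := by
  have h : HasDerivAt (fun t => (1 - t) * thr t q) (-1 * thr 1 q + (1 - 1) * 0) 1 :=
    ((hasDerivAt_id (1 : ℂ)).const_sub 1).mul (hasDerivAt_thr hq)
  simp only [th_eq_thr hq]
  rw [thr_one] at h
  simpa using h

/-- The three-term relation differentiated at `t = 1`. -/
lemma three_lam {q x : ℂ} (hq0 : q ≠ 0) (hq : ‖q‖ < 1) (hx : x ≠ 0) (h1 : th x q ≠ 0)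
    (h3 : th (x ^ 3) q ≠ 0) (h2 : th (x ^ 2) q ≠ 0) :
    (3 * lam x q - 1 - lam (x ^ 3) q) * (th x q ^ 3 * th (x ^ 3) q) =
      -qPochInf q q ^ 2 * th (x ^ 2) q ^ 3 := by
  have hi : th x⁻¹ q ≠ 0 := by rw [th_inv hq0 hq hx]; exact div_ne_zero (neg_ne_zero.2 h1) hx
  have d1 := hasDerivAt_th_mul hq hx h1
  have d2 := hasDerivAt_th_mul hq (inv_ne_zero hx) hi
  have d3 := hasDerivAt_th_mul hq (pow_ne_zero 3 hx) h3
  have d4 := hasDerivAt_th_mul hq (pow_ne_zero 2 hx) h2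
  have d5 := hasDerivAt_th_one hq
  have key := ((((d1.pow 2).neg.mul_const (th x⁻¹ q)).mul_const (th (x ^ 3) q)).add
    ((d2.mul d3).mul_const (th x q ^ 2))).add
    ((((d4.const_mul x).mul d5).mul_const (th ((x ^ 2)⁻¹) q)).mul_const (th (x ^ 2) q))
  have hz := key.congr_of_eventuallyEq (f₁ := fun _ : ℂ => (0 : ℂ)) (by
    filter_upwards [isOpen_ne.mem_nhds (one_ne_zero : (1 : ℂ) ≠ 0)] with t ht
    have := three_term hq0 hq hx (t := t) ht
    simpa using this.symm)
  have e := hz.unique (hasDerivAt_const (1 : ℂ) (0 : ℂ))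
  have t1 : th 1 q = 0 := by simp [th_eq_thr hq]
  simp only [mul_one, t1, mul_zero, zero_add] at e
  rw [lam_inv hq0 hq hx h1, th_inv hq0 hq hx, th_inv hq0 hq (pow_ne_zero 2 hx)] at e
  field_simp at e
  push_cast at e
  linear_combination e

/-! ### Finite partial fractions -/

/-- Partial fractions of `z^e / ∏ (1 - z x_i)` for `e` below the number of nodes. -/
lemma partial_fractions {ι : Type*} [DecidableEq ι] (s : Finset ι) (x : ι → ℂ) (e : ℕ)
    (he : e < #s) (hinj : Set.InjOn x s) (hx : ∀ i ∈ s, x i ≠ 0) {z : ℂ} (hz : z ≠ 0)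
    (hzx : ∀ i ∈ s, 1 - z * x i ≠ 0) :
    z ^ e / ∏ i ∈ s, (1 - z * x i) =
      ∑ i ∈ s, (x i ^ e * ∏ j ∈ s.erase i, (1 - x j / x i))⁻¹ / (1 - z * x i) := by
  set k := #s - 1 - e with hk
  have hu : ∀ i ∈ s, z⁻¹ ≠ x i := by
    rintro i hi h
    apply hzx i hi
    rw [← h, mul_inv_cancel₀ hz, sub_self]
  have h1 : (Polynomial.X ^ k : Polynomial ℂ) =
      Lagrange.interpolate s x fun i => (Polynomial.X ^ k : Polynomial ℂ).eval (x i) :=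
    Lagrange.eq_interpolate hinj (by
      rw [Polynomial.degree_X_pow]; exact_mod_cast (by omega : k < #s))
  have h2 := Lagrange.eval_interpolate_not_at_node
    (fun i => (Polynomial.X ^ k : Polynomial ℂ).eval (x i)) (x := z⁻¹) hu
  rw [← h1] at h2
  simp only [Polynomial.eval_pow, Polynomial.eval_X, Lagrange.eval_nodal] at h2
  have h3 : ∏ i ∈ s, (1 - z * x i) = z ^ #s * ∏ i ∈ s, (z⁻¹ - x i) := by
    rw [← prod_const, ← prod_mul_distrib]
    refine prod_congr rfl fun i _ => ?_
    field_simp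
  have h4 : ∏ i ∈ s, (z⁻¹ - x i) ≠ 0 := prod_ne_zero_iff.2 fun i hi => sub_ne_zero.2 (hu i hi)
  have h5 : z ^ e / ∏ i ∈ s, (1 - z * x i) = z⁻¹ * (z⁻¹ ^ k / ∏ i ∈ s, (z⁻¹ - x i)) := by
    have : z ^ #s = z ^ e * z ^ k * z := by rw [← pow_add, ← pow_succ]; congr 1; omega
    rw [h3, this, inv_pow]
    field_simp
  rw [h5, h2, mul_div_cancel_left₀ _ h4, mul_sum]
  refine sum_congr rfl fun i hi => ?_
  have hxi := hx i hi
  have h6 : ∏ j ∈ s.erase i, (x i - x j) = x i ^ (e + k) * ∏ j ∈ s.erase i, (1 - x j / x i) := by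
    rw [show e + k = #(s.erase i) by rw [card_erase_of_mem hi]; omega, ← prod_const,
      ← prod_mul_distrib]
    refine prod_congr rfl fun j _ => ?_
    field_simp
  have h7 : z⁻¹ - x i ≠ 0 := sub_ne_zero.2 (hu i hi)
  have h8 : 1 - z * x i = z * (z⁻¹ - x i) := by field_simp
  rw [Lagrange.nodalWeight, prod_inv_distrib, h6, h8, pow_add]
  simp only [mul_inv, div_eq_mul_inv]
  field_simp

lemma prod_Icc_split (f : ℤ → ℂ) (a b : ℕ) :
    ∏ k ∈ Icc (-(b : ℤ)) a, f k = (∏ k ∈ range (a + 1), f k) * ∏ k ∈ range b, f (-((k : ℤ) + 1)) := by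
  induction b with
  | zero =>
    induction a with
    | zero => simp
    | succ a ih =>
      rw [prod_range_succ, mul_right_comm, ← ih]
      rw [show Icc (-((0 : ℕ) : ℤ)) ((a + 1 : ℕ) : ℤ) = insert ((a + 1 : ℕ) : ℤ)
        (Icc (-((0 : ℕ) : ℤ)) a) by ext; simp; omega, prod_insert (by simp), mul_comm]
  | succ b ih =>
    rw [prod_range_succ (fun k : ℕ => f (-((k : ℤ) + 1))), ← mul_assoc, ← ih]
    rw [show Icc (-((b + 1 : ℕ) : ℤ)) (a : ℤ) = insert (-((b : ℤ) + 1)) (Icc (-(b : ℤ)) a) by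
      ext; simp; omega, prod_insert (by simp), mul_comm]

lemma prod_neg_range {y b : ℂ} (hy : y ≠ 0) (hb : b ≠ 0) (M : ℕ) :
    ∏ k ∈ range M, (1 - b * y ^ (-((k : ℤ) + 1))) =
      qPoch (y / b) y M * ((-b) ^ M * y ^ (-tri M)) := by
  induction M with
  | zero => simp [qPoch, tri_zero]
  | succ M ih =>
    rw [prod_range_succ, ih, qPoch_succ, show tri ((M + 1 : ℕ) : ℤ) = tri M + M + 1 by
      push_cast; rw [tri_add, tri_one]; ring]
    simp only [zpow_neg, zpow_add₀ hy, zpow_natCast, zpow_one]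
    field_simp
    ring

/-- The factors of one family of poles, `b y^k` for `-M₂ ≤ k ≤ M₁`, written with finite
q-Pochhammer symbols. -/
lemma prod_block {y b : ℂ} (hy : y ≠ 0) (hb : b ≠ 0) (M₁ M₂ : ℕ) :
    ∏ k ∈ Icc (-(M₂ : ℤ)) M₁, (1 - b * y ^ k) =
      qPoch b y (M₁ + 1) * (qPoch (y / b) y M₂ * ((-b) ^ M₂ * y ^ (-tri M₂))) := by
  rw [prod_Icc_split, prod_neg_range hy hb]
  simp [qPoch]

lemma prod_block_erase {y : ℂ} (hy : y ≠ 0) (M₁ M₂ : ℕ) :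
    ∏ k ∈ (Icc (-(M₂ : ℤ)) M₁).erase 0, (1 - y ^ k) =
      qPoch y y M₁ * (qPoch y y M₂ * ((-1) ^ M₂ * y ^ (-tri M₂))) := by
  have h1 : ∏ k ∈ (Icc (-(M₂ : ℤ)) M₁).erase 0, (1 - y ^ k) =
      ∏ k ∈ (Icc (-(M₂ : ℤ)) M₁).erase 0, (if k = 0 then 1 else 1 - y ^ k) :=
    prod_congr rfl fun k hk => by rw [if_neg (ne_of_mem_erase hk)]
  have h2 := prod_neg_range hy one_ne_zero M₂
  rw [div_one] at h2
  rw [h1, prod_erase _ (by simp), prod_Icc_split, prod_range_succ', ← h2]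
  simp only [Nat.cast_zero, if_true, mul_one, one_mul, qPoch]
  congr 1
  · refine prod_congr rfl fun k _ => ?_
    rw [if_neg (by positivity), zpow_natCast, pow_succ']

lemma prod_shift (f : ℤ → ℂ) {N : ℕ} {n : ℤ} (hn : n ∈ Icc (-(N : ℤ)) N) :
    ∏ m ∈ Icc (-(N : ℤ)) N, f (m - n) =
      ∏ k ∈ Icc (-(((N : ℤ) + n).toNat : ℤ)) ((N : ℤ) - n).toNat, f k := by
  rw [mem_Icc] at hn
  refine prod_nbij' (fun m => m - n) (fun k => k + n) ?_ ?_ ?_ ?_ ?_ <;> intro a <;>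
    simp only [mem_Icc] <;> intros <;> first | omega | rfl | trivial

lemma prod_shift_erase (f : ℤ → ℂ) {N : ℕ} {n : ℤ} (hn : n ∈ Icc (-(N : ℤ)) N) :
    ∏ m ∈ (Icc (-(N : ℤ)) N).erase n, f (m - n) =
      ∏ k ∈ (Icc (-(((N : ℤ) + n).toNat : ℤ)) ((N : ℤ) - n).toNat).erase 0, f k := by
  rw [mem_Icc] at hn
  refine prod_nbij' (fun m => m - n) (fun k => k + n) ?_ ?_ ?_ ?_ ?_ <;> intro a <;>
    simp only [mem_erase, mem_Icc] <;> intros <;> first | omega | rfl | trivial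

lemma prod_product_erase {ι κ : Type*} [DecidableEq ι] [DecidableEq κ] [Fintype ι] (I : Finset κ)
    (F : ι → κ → ℂ) (i : ι) (n : κ) :
    ∏ j ∈ (univ ×ˢ I).erase (i, n), F j.1 j.2 =
      (∏ m ∈ I.erase n, F i m) * ∏ l ∈ univ.erase i, ∏ m ∈ I, F l m := by
  have h1 : (univ ×ˢ I).erase (i, n) = ((univ.erase i) ×ˢ I) ∪ ({i} ×ˢ (I.erase n)) := by
    ext ⟨l, m⟩
    simp only [mem_erase, mem_product, mem_union, mem_singleton, mem_univ, true_and, ne_eq,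
      Prod.mk.injEq, and_true]
    by_cases h : l = i <;> simp [h]
  rw [h1, prod_union, prod_product, prod_product, prod_singleton, mul_comm]
  rw [disjoint_left]
  rintro ⟨l, m⟩
  simp +contextual
  intro h _ h'
  exact h h'.symm

/-- The Appell series `∑ (-1)^m y^{3m(m+1)/2} w^m / (1 - z y^m)` over `m ∈ ℤ`; when some
`z y^m = 1` that term is dropped by the convention `x / 0 = 0`. -/
noncomputable def appell (y w z : ℂ) : ℂ :=
  ∑' m : ℤ, (-1) ^ m * y ^ (3 * tri m) * w ^ m / (1 - z * y ^ m)

/-- Coefficients of the finite partial fraction expansion. -/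
noncomputable def pfc (y : ℂ) (a : Fin 3 → ℂ) (N : ℕ) (i : Fin 3) (n : ℤ) : ℂ :=
  gq y (N - n) * gq y (N + n) * ∏ l ∈ univ.erase i,
    ((qPoch (a l / a i) y (((N : ℤ) - n).toNat + 1))⁻¹ *
      (qPoch (y / (a l / a i)) y ((N : ℤ) + n).toNat)⁻¹)

/-- The residues in `partial_fractions` for the nodes `a_i y^n`, `|n| ≤ N`, in closed form. -/
lemma coeff_identity {y : ℂ} (hy : y ≠ 0) {a : Fin 3 → ℂ} (ha : ∀ i, a i ≠ 0)
    (hprod : ∏ i, a i = 1) (N : ℕ) (i : Fin 3) {n : ℤ} (hn : n ∈ Icc (-(N : ℤ)) N) :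
    ((-1) ^ N * y ^ (-(3 * tri N))) * ((a i * y ^ n) ^ (3 * N) *
      ∏ j ∈ ((univ : Finset (Fin 3)) ×ˢ Icc (-(N : ℤ)) N).erase (i, n),
        (1 - (a j.1 * y ^ j.2) / (a i * y ^ n)))⁻¹ =
      (-1) ^ n * y ^ (3 * tri n) * (a i ^ 3) ^ n * pfc y a N i n := by
  have hn' := mem_Icc.1 hn
  have hyn := zpow_ne_zero n hy
  rw [prod_product_erase (Icc (-(N : ℤ)) N)
    (fun l m => 1 - (a l * y ^ m) / (a i * y ^ n)) i n]
  have e1 : ∏ m ∈ (Icc (-(N : ℤ)) N).erase n, (1 - (a i * y ^ m) / (a i * y ^ n)) =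
      ∏ m ∈ (Icc (-(N : ℤ)) N).erase n, (1 - y ^ (m - n)) :=
    prod_congr rfl fun m _ => by rw [zpow_sub₀ hy, mul_div_mul_left _ _ (ha i)]
  have e2 : ∀ l, ∏ m ∈ Icc (-(N : ℤ)) N, (1 - (a l * y ^ m) / (a i * y ^ n)) =
      qPoch (a l / a i) y (((N : ℤ) - n).toNat + 1) *
        (qPoch (y / (a l / a i)) y ((N : ℤ) + n).toNat *
          ((-(a l / a i)) ^ ((N : ℤ) + n).toNat * y ^ (-tri ((N : ℤ) + n).toNat))) := fun l => by
    rw [← prod_block hy (div_ne_zero (ha l) (ha i)),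
      ← prod_shift (fun k => 1 - a l / a i * y ^ k) hn]
    exact prod_congr rfl fun m _ => by rw [zpow_sub₀ hy, mul_div_mul_comm]
  rw [e1, prod_shift_erase (fun k => 1 - y ^ k) hn, prod_block_erase hy,
    prod_congr rfl fun l _ => e2 l]
  obtain ⟨A, hA⟩ : ∃ A : ℕ, ((N : ℤ) - n) = A := ⟨((N : ℤ) - n).toNat, by omega⟩
  obtain ⟨B, hB⟩ : ∃ B : ℕ, ((N : ℤ) + n) = B := ⟨((N : ℤ) + n).toNat, by omega⟩
  rw [pfc]
  simp only [hA, hB, Int.toNat_natCast, gq_nat]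
  have hBr : (∏ l ∈ univ.erase i, (-(a l / a i))) = (a i ^ 3)⁻¹ := by
    have h1 : a i * ∏ l ∈ univ.erase i, a l = 1 := by
      rw [mul_prod_erase _ _ (mem_univ i), hprod]
    have h2 : ∏ l ∈ univ.erase i, (-(a l / a i)) = ∏ l ∈ univ.erase i, (a l * (-(a i)⁻¹)) :=
      prod_congr rfl fun l _ => by ring
    rw [h2, prod_mul_distrib, prod_const, card_erase_of_mem (mem_univ i), card_univ,
      Fintype.card_fin]
    rw [eq_inv_of_mul_eq_one_right h1, neg_sq, inv_pow, ← mul_inv, ← pow_succ']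
  have hn2 : n = (B : ℤ) - N := by omega
  have e3 : ∏ l ∈ univ.erase i, (qPoch (a l / a i) y (A + 1) * (qPoch (y / (a l / a i)) y B *
      ((-(a l / a i)) ^ B * y ^ (-tri B)))) =
      (∏ l ∈ univ.erase i, (qPoch (a l / a i) y (A + 1) * qPoch (y / (a l / a i)) y B)) *
        (((a i ^ 3)⁻¹) ^ B * (y ^ (-tri B)) ^ 2) := by
    rw [← hBr, ← prod_pow, show (2 : ℕ) = #(univ.erase i) by
      rw [card_erase_of_mem (mem_univ i), card_univ, Fintype.card_fin], ← prod_const,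
      ← prod_mul_distrib, ← prod_mul_distrib]
    exact prod_congr rfl fun l _ => by ring
  rw [e3]
  simp only [← mul_inv]
  rw [prod_inv_distrib]
  set Z := ∏ l ∈ univ.erase i, (qPoch (a l / a i) y (A + 1) * qPoch (y / (a l / a i)) y B)
  have t1 : y ^ (-(3 * tri N)) = y ^ (3 * tri n) * y ^ (3 * N * n) * (y ^ (-tri B)) ^ 3 := by
    rw [← zpow_natCast, ← zpow_mul, ← zpow_add₀ hy, ← zpow_add₀ hy]
    congr 1
    rw [← hB, tri_add]
    push_cast
    ring
  have t2 : (a i * y ^ n) ^ (3 * N) = (a i ^ 3) ^ N * y ^ (3 * N * n) := by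
    rw [mul_pow, pow_mul, ← zpow_natCast (y ^ n), ← zpow_mul]
    congr 2
    push_cast
    ring
  have t3 : (a i ^ 3) ^ n = (a i ^ 3) ^ B / (a i ^ 3) ^ N := by
    rw [hn2, zpow_sub₀ (pow_ne_zero _ (ha i)), zpow_natCast, zpow_natCast]
  have t4 : (-1 : ℂ) ^ n = (-1) ^ B / (-1) ^ N := by
    rw [hn2, zpow_sub₀ (by norm_num), zpow_natCast, zpow_natCast]
  rw [t1, t2, t3, t4]
  have hai := ha i
  have h1 : y ^ (-tri B) ≠ 0 := zpow_ne_zero _ hy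
  have h2 : y ^ (3 * N * n) ≠ 0 := zpow_ne_zero _ hy
  have hs : ((-1 : ℂ) ^ B) * (-1) ^ B = 1 := by rw [← mul_pow]; simp
  have hs' : ((-1 : ℂ) ^ N) * (-1) ^ N = 1 := by rw [← mul_pow]; simp
  have hsi : ((-1 : ℂ) ^ B)⁻¹ = (-1) ^ B := inv_eq_of_mul_eq_one_left hs
  have hsi' : ((-1 : ℂ) ^ N)⁻¹ = (-1) ^ N := inv_eq_of_mul_eq_one_left hs'
  simp only [div_eq_mul_inv, mul_inv, hsi, hsi', inv_pow, inv_inv]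
  field_simp

/-! ### Partial fractions of theta quotients -/

/-- The finite form of `appell_pf`: partial fractions over the nodes `a_i y^n`, `|n| ≤ N`. The
sum over `n` may run over all of `ℤ` because `pfc` vanishes for `|n| > N`. -/
lemma finite_pf {y : ℂ} (hy : y ≠ 0) (hy1 : ‖y‖ < 1) {a : Fin 3 → ℂ} (ha : ∀ i, a i ≠ 0)
    (hprod : ∏ i, a i = 1) (hinj : ∀ i l, i ≠ l → ∀ n : ℤ, 1 - a l / a i * y ^ n ≠ 0)
    {z : ℂ} (hz : z ≠ 0) (hza : ∀ i, ∀ n : ℤ, 1 - z * a i * y ^ n ≠ 0) (N : ℕ) :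
    ∏ i, (qPoch (z * a i) y (N + 1) * qPoch (y / (z * a i)) y N)⁻¹ =
      ∑ i, ∑' n : ℤ, (-1) ^ n * y ^ (3 * tri n) * (a i ^ 3) ^ n * pfc y a N i n /
        (1 - z * a i * y ^ n) := by
  set I := Icc (-(N : ℤ)) N with hI
  have h1 := partial_fractions ((univ : Finset (Fin 3)) ×ˢ I) (fun p => a p.1 * y ^ p.2) (3 * N)
    (by rw [card_product, hI, Int.card_Icc]; simp)
    (by
      rintro ⟨i, n⟩ - ⟨l, m⟩ - h
      simp only at h
      have hil : i = l := by
        by_contra hne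
        apply hinj i l hne (m - n)
        rw [zpow_sub₀ hy, ← mul_div_mul_comm, ← h, div_self, sub_self]
        exact mul_ne_zero (ha i) (zpow_ne_zero _ hy)
      subst hil
      have h2 := mul_left_cancel₀ (ha i) h
      have h3 : n = m := by
        have h4 := congrArg norm h2
        rw [norm_zpow, norm_zpow] at h4
        exact zpow_right_injective₀ (norm_pos_iff.2 hy) hy1.ne h4
      rw [h3])
    (fun p _ => mul_ne_zero (ha _) (zpow_ne_zero _ hy)) hz
    (fun p _ => by rw [← mul_assoc]; exact hza _ _)
  have h2 : ∏ p ∈ (univ : Finset (Fin 3)) ×ˢ I, (1 - z * (a p.1 * y ^ p.2)) =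
      (∏ i, (qPoch (z * a i) y (N + 1) * qPoch (y / (z * a i)) y N)) *
        ((-1) ^ N * z ^ (3 * N) * y ^ (-(3 * tri N))) := by
    rw [prod_product]
    simp only [← mul_assoc]
    have e1 : ∀ i, ∏ m ∈ I, (1 - z * a i * y ^ m) =
        (qPoch (z * a i) y (N + 1) * qPoch (y / (z * a i)) y N) *
          (((-z) ^ N * y ^ (-tri N)) * a i ^ N) := fun i => by
      rw [hI, prod_block hy (mul_ne_zero hz (ha i)), neg_mul_eq_neg_mul, mul_pow]
      ring
    suffices e2 : ∏ i, (((-z) ^ N * y ^ (-tri N)) * a i ^ N) =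
        (-1) ^ N * z ^ (3 * N) * y ^ (-(3 * tri N)) by
      rw [prod_congr rfl fun i _ => e1 i, prod_mul_distrib, e2]
      simp only [← mul_assoc]
    rw [prod_mul_distrib, prod_pow, hprod, prod_const, card_univ, Fintype.card_fin, one_pow,
      mul_one]
    rw [mul_pow, ← zpow_natCast (y ^ _), ← zpow_mul, ← pow_mul, mul_comm N 3, neg_pow z,
      pow_mul (-1 : ℂ), show (-1 : ℂ) ^ 3 = -1 by norm_num]
    congr 2
    push_cast
    ring
  have hB : ∏ i, (qPoch (z * a i) y (N + 1) * qPoch (y / (z * a i)) y N) ≠ 0 := by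
    intro h
    rw [h, zero_mul] at h2
    refine prod_ne_zero_iff.2 (fun p _ => ?_) h2
    rw [← mul_assoc]; exact hza _ _
  have hs' : ((-1 : ℂ) ^ N) * (-1) ^ N = 1 := by rw [← mul_pow]; simp
  have hy3 : y ^ (-(3 * tri N)) ≠ 0 := zpow_ne_zero _ hy
  have h3 : ∏ i, (qPoch (z * a i) y (N + 1) * qPoch (y / (z * a i)) y N)⁻¹ =
      ((-1) ^ N * y ^ (-(3 * tri N))) *
        (z ^ (3 * N) / ∏ p ∈ (univ : Finset (Fin 3)) ×ˢ I, (1 - z * (a p.1 * y ^ p.2))) := by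
    rw [h2, prod_inv_distrib]
    have := pow_ne_zero (3 * N) hz
    have := pow_ne_zero N (neg_ne_zero.2 (one_ne_zero (α := ℂ)))
    field_simp
  rw [h3, h1, mul_sum, sum_product]
  refine sum_congr rfl fun i _ => ?_
  rw [tsum_eq_sum (s := I)]
  · refine sum_congr rfl fun n hn => ?_
    rw [← coeff_identity hy ha hprod N i hn, mul_div_assoc, mul_assoc z]
  · intro n hn
    rw [hI, mem_Icc, not_and_or, not_le, not_le] at hn
    rw [pfc]
    rcases hn with h | h
    · rw [gq_neg y (show (N : ℤ) + n < 0 by omega)]; simp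
    · rw [gq_neg y (show (N : ℤ) - n < 0 by omega)]; simp

lemma tendsto_toNat_add (r : ℤ) : Tendsto (fun n : ℕ => ((n : ℤ) + r).toNat) atTop atTop := by
  refine tendsto_atTop.2 fun b => ?_
  filter_upwards [eventually_ge_atTop ((b - r).toNat)] with n hn
  omega

lemma tendsto_pfc {y : ℂ} (hy : y ≠ 0) (hy1 : ‖y‖ < 1) {a : Fin 3 → ℂ} (ha : ∀ i, a i ≠ 0)
    (hinj : ∀ i l, i ≠ l → ∀ n : ℤ, 1 - a l / a i * y ^ n ≠ 0) (i : Fin 3) (n : ℤ) :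
    Tendsto (fun N : ℕ => pfc y a N i n) atTop
      (𝓝 ((qPochInf y y)⁻¹ * (qPochInf y y)⁻¹ * ∏ l ∈ univ.erase i, (th (a l / a i) y)⁻¹)) := by
  have e : ∀ N : ℕ, (N : ℤ) - n = N + -n := fun N => sub_eq_add_neg _ _
  simp only [pfc, e]
  refine ((tendsto_gq hy1 _).mul (tendsto_gq hy1 _)).mul (tendsto_finsetProd _ fun l hl => ?_)
  have hl' := hinj i l (ne_of_mem_erase hl).symm
  rw [th, mul_inv]
  refine Tendsto.mul ?_ ?_
  · exact (tendsto_qPoch_inv hy1 (one_sub_ne_of_zpow hl')).comp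
      ((tendsto_add_atTop_nat 1).comp (tendsto_toNat_add (-n)))
  · exact (tendsto_qPoch_inv hy1 (one_sub_inv_ne_of_zpow hy (div_ne_zero (ha l) (ha i)) hl')).comp
      (tendsto_toNat_add n)

lemma exists_bound_pfc {y : ℂ} (hy : y ≠ 0) (hy1 : ‖y‖ < 1) {a : Fin 3 → ℂ} (ha : ∀ i, a i ≠ 0)
    (hinj : ∀ i l, i ≠ l → ∀ n : ℤ, 1 - a l / a i * y ^ n ≠ 0) (i : Fin 3) :
    ∃ K : ℝ, 0 < K ∧ ∀ N n, ‖pfc y a N i n‖ ≤ K := by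
  obtain ⟨C, hC0, hC⟩ := exists_bound_gq hy1
  have h : ∀ l, ∃ D : ℝ, 0 < D ∧ (l ≠ i → ∀ M M', ‖(qPoch (a l / a i) y M)⁻¹ *
      (qPoch (y / (a l / a i)) y M')⁻¹‖ ≤ D) := by
    intro l
    by_cases hl : l = i
    · exact ⟨1, one_pos, fun h => absurd hl h⟩
    · have hl' := hinj i l (Ne.symm hl)
      obtain ⟨D, hD0, hD⟩ := exists_bound_qPoch_inv hy1 (one_sub_ne_of_zpow hl')
      obtain ⟨D', hD0', hD'⟩ := exists_bound_qPoch_inv hy1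
        (one_sub_inv_ne_of_zpow hy (div_ne_zero (ha l) (ha i)) hl')
      refine ⟨D * D', by positivity, fun _ M M' => ?_⟩
      rw [norm_mul]
      exact mul_le_mul (hD _) (hD' _) (norm_nonneg _) hD0.le
  choose D hD0 hD using h
  refine ⟨C * C * ∏ l ∈ univ.erase i, D l, by
    have := prod_pos fun l (_ : l ∈ univ.erase i) => hD0 l
    positivity, fun N n => ?_⟩
  rw [pfc, norm_mul, norm_mul, norm_prod]
  have h1 : ∏ l ∈ univ.erase i, ‖(qPoch (a l / a i) y (((N : ℤ) - n).toNat + 1))⁻¹ *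
      (qPoch (y / (a l / a i)) y ((N : ℤ) + n).toNat)⁻¹‖ ≤ ∏ l ∈ univ.erase i, D l :=
    prod_le_prod (fun _ _ => norm_nonneg _) fun l hl => hD l (ne_of_mem_erase hl) _ _
  have h2 := hC ((N : ℤ) - n)
  have h3 := hC ((N : ℤ) + n)
  gcongr

lemma summable_appell_coeff {y w : ℂ} (hy : y ≠ 0) (hy1 : ‖y‖ < 1) (hw : w ≠ 0) :
    Summable fun n : ℤ => ‖(-1) ^ n * y ^ (3 * tri n) * w ^ n‖ := by
  refine (summable_tri_norm hy hy1 (w := w) hw 3 (by norm_num)).congr fun n => ?_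
  simp only [norm_mul, norm_zpow, norm_neg, norm_one, one_zpow, one_mul, Nat.cast_ofNat]
  ring

/-- Partial fraction expansion of a product of three reciprocal theta functions into
Appell series. -/
lemma appell_pf {y : ℂ} (hy : y ≠ 0) (hy1 : ‖y‖ < 1) {a : Fin 3 → ℂ} (ha : ∀ i, a i ≠ 0)
    (hprod : ∏ i, a i = 1) (hinj : ∀ i l, i ≠ l → ∀ n : ℤ, 1 - a l / a i * y ^ n ≠ 0)
    {z : ℂ} (hz : z ≠ 0) (hza : ∀ i, ∀ n : ℤ, 1 - z * a i * y ^ n ≠ 0) :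
    ∏ i, (th (z * a i) y)⁻¹ =
      ∑ i, (qPochInf y y)⁻¹ * (qPochInf y y)⁻¹ * (∏ l ∈ univ.erase i, (th (a l / a i) y)⁻¹) *
        appell y (a i ^ 3) (z * a i) := by
  have hzi : ∀ i, z * a i ≠ 0 := fun i => mul_ne_zero hz (ha i)
  have h1 : Tendsto (fun N : ℕ => ∏ i, (qPoch (z * a i) y (N + 1) * qPoch (y / (z * a i)) y N)⁻¹)
      atTop (𝓝 (∏ i, (th (z * a i) y)⁻¹)) := by
    refine tendsto_finsetProd _ fun i _ => ?_
    simp only [th, mul_inv]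
    exact ((tendsto_qPoch_inv hy1 (one_sub_ne_of_zpow (hza i))).comp (tendsto_add_atTop_nat 1)).mul
      (tendsto_qPoch_inv hy1 (one_sub_inv_ne_of_zpow hy (hzi i) (hza i)))
  refine tendsto_nhds_unique h1 ?_
  simp only [finite_pf hy hy1 ha hprod hinj hz hza]
  refine tendsto_finsetSum _ fun i _ => ?_
  obtain ⟨K, hK0, hK⟩ := exists_bound_pfc hy hy1 ha hinj i
  obtain ⟨C, hC0, hC⟩ := exists_bound_inv hy hy1 (hzi i)
  rw [appell, ← tsum_mul_left]
  refine tendsto_tsum_of_dominated_convergence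
    (bound := fun n => ‖(-1) ^ n * y ^ (3 * tri n) * (a i ^ 3) ^ n‖ * (K * C)) ?_ ?_ ?_
  · exact (summable_appell_coeff hy hy1 (pow_ne_zero 3 (ha i))).mul_right _
  · intro n
    rw [mul_div_assoc', mul_comm (_ * _) ((-1) ^ n * _ * _)]
    exact ((tendsto_pfc hy hy1 ha hinj i n).const_mul _).div_const _
  · refine Eventually.of_forall fun N n => ?_
    rw [div_eq_mul_inv, norm_mul, norm_mul, mul_assoc]
    have h2 := hK N n
    have h3 := hC n
    gcongr

/-! ### Relations between Appell series -/

/-- The symmetry `m ↦ -m` of the Appell series. -/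
lemma appell_inv {y w z : ℂ} (hy : y ≠ 0) (hz : z ≠ 0) :
    appell y w z = -z⁻¹ * appell y (y ^ (-2 : ℤ) * w⁻¹) z⁻¹ := by
  rw [appell, appell, ← (Equiv.neg ℤ).tsum_eq, ← tsum_mul_left]
  refine tsum_congr fun m => ?_
  simp only [Equiv.neg_apply]
  have hym := zpow_ne_zero m hy
  have e1 : 1 - z * y ^ (-m) = (-z * y ^ (-m)) * (1 - z⁻¹ * y ^ m) := by
    rw [zpow_neg]; field_simp; ring
  have e2 : (-1 : ℂ) ^ (-m) = (-1) ^ m := by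
    rw [zpow_neg, ← inv_zpow]; norm_num
  have e3 : y ^ (3 * tri (-m)) = y ^ (3 * tri m) * (y ^ m) ^ (-3 : ℤ) := by
    rw [← zpow_mul, ← zpow_add₀ hy, tri_neg]; congr 1; ring
  have e4 : (y ^ (-2 : ℤ) * w⁻¹) ^ m = (y ^ m) ^ (-2 : ℤ) * (w ^ m)⁻¹ := by
    rw [mul_zpow, ← zpow_mul, ← zpow_mul, inv_zpow, mul_comm m]
  rw [e1, e2, e3, e4, ← div_div, ← mul_div_assoc]
  congr 1
  rw [zpow_neg w, zpow_neg y]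
  generalize y ^ m = Y at *
  generalize y ^ (3 * tri m) = Z at *
  generalize (w ^ m)⁻¹ = W at *
  simp only [zpow_neg, show (3 : ℤ) = ((3 : ℕ) : ℤ) by rfl, show (2 : ℤ) = ((2 : ℕ) : ℤ) by rfl,
    zpow_natCast]
  field_simp

/-- The shift `m ↦ m + 1` in the Appell series. -/
lemma appell_shift {y w z : ℂ} (hy : y ≠ 0) (hw : w ≠ 0) :
    appell y w z = -y ^ 3 * w * appell y (y ^ 3 * w) (z * y) := by
  rw [appell, appell, ← (Equiv.addRight (1 : ℤ)).tsum_eq, ← tsum_mul_left]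
  refine tsum_congr fun m => ?_
  simp only [Equiv.coe_addRight]
  have e3 : y ^ (3 * tri (m + 1)) = y ^ (3 * tri m) * (y ^ 3) ^ m * y ^ 3 := by
    rw [← zpow_natCast y 3, ← zpow_mul, ← zpow_add₀ hy, ← zpow_add₀ hy, tri_add, tri_one]
    congr 1; push_cast; ring
  rw [e3, zpow_add_one₀ hw, zpow_add_one₀ (by norm_num), zpow_add_one₀ hy, mul_zpow,
    ← mul_div_assoc, mul_comm (y ^ m) y, ← mul_assoc z]
  congr 1
  ring

lemma one_sub_inv_zpow_ne {y x : ℂ} (h : ∀ n : ℤ, 1 - x * y ^ n ≠ 0)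
    (n : ℤ) : 1 - x⁻¹ * y ^ n ≠ 0 := by
  intro h1
  apply h (-n)
  have h2 : x⁻¹ * y ^ n = 1 := (sub_eq_zero.1 h1).symm
  rw [zpow_neg, ← inv_inv x, ← mul_inv, h2, inv_one, sub_self]

/-- The expansion of `appell_pf` at the three nodes `1, s, s⁻¹`. -/
lemma appell_three {y s z : ℂ} (hy : y ≠ 0) (hy1 : ‖y‖ < 1) (hs : s ≠ 0) (hz : z ≠ 0)
    (h1 : ∀ n : ℤ, 1 - s * y ^ n ≠ 0) (h2 : ∀ n : ℤ, 1 - s ^ 2 * y ^ n ≠ 0)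
    (hz0 : ∀ n : ℤ, 1 - z * y ^ n ≠ 0) (hz1 : ∀ n : ℤ, 1 - z * s * y ^ n ≠ 0)
    (hz2 : ∀ n : ℤ, 1 - z * s⁻¹ * y ^ n ≠ 0) :
    qPochInf y y ^ 2 * th s y * th (s ^ 2) y / (th z y * th (z * s) y * th (z * s⁻¹) y) =
      -s * th (s ^ 2) y / th s y * appell y 1 z + s ^ 3 * appell y (s ^ 3) (z * s) +
        appell y (s⁻¹ ^ 3) (z * s⁻¹) := by
  have hs2 : s ^ 2 ≠ 0 := pow_ne_zero _ hs
  have h1' := one_sub_inv_zpow_ne h1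
  have h2' := one_sub_inv_zpow_ne h2
  have key := appell_pf hy hy1 (a := ![1, s, s⁻¹])
    (by intro i; fin_cases i <;> simp [hs])
    (by simp [Fin.prod_univ_three, hs])
    (by
      intro i l hil n
      have e1 : s / s⁻¹ = s ^ 2 := by field_simp
      have e2 : s⁻¹ / s = (s ^ 2)⁻¹ := by field_simp
      fin_cases i <;> fin_cases l <;> first | exact absurd rfl hil | skip
      all_goals simp only [Fin.zero_eta, Fin.mk_one, Fin.reduceFinMk, Matrix.cons_val,
        Matrix.cons_val_zero, Matrix.cons_val_one, div_one, one_div, inv_inv, e1, e2]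
      all_goals first | exact h1 n | exact h2 n | exact h1' n | exact h2' n)
    hz
    (by
      intro i n
      fin_cases i
      · simpa using hz0 n
      · simpa using hz1 n
      · simpa using hz2 n)
  have hE := qPochInf_self_ne_zero hy1
  have t1 := th_ne_zero hy hy1 hs h1
  have t2 := th_ne_zero hy hy1 hs2 h2
  have e0 : (univ : Finset (Fin 3)).erase 0 = {1, 2} := by decide
  have e1 : (univ : Finset (Fin 3)).erase 1 = {0, 2} := by decide
  have e2 : (univ : Finset (Fin 3)).erase 2 = {0, 1} := by decide
  rw [Fin.prod_univ_three, Fin.sum_univ_three, e0, e1, e2, prod_pair (by decide),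
    prod_pair (by decide), prod_pair (by decide)] at key
  simp only [Matrix.cons_val_zero, Matrix.cons_val_one, Matrix.cons_val, mul_one, div_one,
    one_pow, one_div, inv_inv, show s / s⁻¹ = s ^ 2 by field_simp,
    show s⁻¹ / s = (s ^ 2)⁻¹ by field_simp, th_inv hy hy1 hs, th_inv hy hy1 hs2] at key
  calc _ = qPochInf y y ^ 2 * th s y * th (s ^ 2) y *
        ((th z y)⁻¹ * (th (z * s) y)⁻¹ * (th (z * s⁻¹) y)⁻¹) := by
        rw [div_eq_mul_inv, mul_inv, mul_inv]
    _ = _ := by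
        rw [key]
        generalize appell y 1 z = A0
        generalize appell y (s ^ 3) (z * s) = A1
        generalize appell y (s⁻¹ ^ 3) (z * s⁻¹) = A2
        field_simp

/-- The Appell series at `z t` with the term singular at `t = 1` removed. -/
noncomputable def appellR (y w z t : ℂ) : ℂ :=
  ∑' n : ℤ, (-1) ^ n * y ^ (3 * tri n) * w ^ n *
    (if 1 - z * y ^ n = 0 then 0 else (1 - z * t * y ^ n)⁻¹)

/-- The factors `1/(1 - z t y^n)` that are regular at `t = 1` are bounded uniformly in `n` and
in `t` near `1`. -/
lemma uniform_inv {y z : ℂ} (hy : y ≠ 0) (hy1 : ‖y‖ < 1) (hz : z ≠ 0) :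
    ∃ C : ℝ, 0 < C ∧ ∀ᶠ t in 𝓝 (1 : ℂ), ∀ n : ℤ, 1 - z * y ^ n ≠ 0 →
      1 - z * t * y ^ n ≠ 0 ∧ ‖(1 - z * t * y ^ n)⁻¹‖ ≤ C := by
  obtain ⟨C, hC0, hC⟩ := exists_bound_inv hy hy1 hz
  refine ⟨C * 2, by positivity, ?_⟩
  have hδ : (0 : ℝ) < 1 / (2 * (1 + C)) := by positivity
  filter_upwards [Metric.ball_mem_nhds (1 : ℂ) hδ] with t ht n hn
  rw [Metric.mem_ball, dist_eq_norm] at ht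
  have hCn := hC n
  set v := (1 - z * y ^ n)⁻¹ with hv
  have e1 : z * y ^ n * v = v - 1 := by
    have : (1 - z * y ^ n) * v = 1 := mul_inv_cancel₀ hn
    linear_combination -this
  set u := (t - 1) * (z * y ^ n * v) with hu
  have e2 : 1 - z * t * y ^ n = (1 - z * y ^ n) * (1 - u) := by
    have : (1 - z * y ^ n) * v = 1 := mul_inv_cancel₀ hn
    rw [hu]; linear_combination (t - 1) * z * y ^ n * this
  have hu1 : ‖u‖ ≤ 1 / 2 := by
    rw [hu, e1, norm_mul]
    have h3 : ‖v - 1‖ ≤ 1 + C := by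
      calc ‖v - 1‖ ≤ ‖v‖ + ‖(1 : ℂ)‖ := norm_sub_le _ _
        _ ≤ 1 + C := by rw [norm_one]; linarith
    calc ‖t - 1‖ * ‖v - 1‖ ≤ 1 / (2 * (1 + C)) * (1 + C) := by gcongr
      _ = 1 / 2 := by field_simp
  have hu2 : 1 / 2 ≤ ‖1 - u‖ := by
    have := norm_sub_norm_le (1 : ℂ) u
    rw [norm_one] at this
    linarith
  have hu3 : 1 - u ≠ 0 := norm_pos_iff.1 (by linarith)
  refine ⟨by rw [e2]; exact mul_ne_zero hn hu3, ?_⟩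
  rw [e2, mul_inv, norm_mul, norm_inv (1 - u)]
  have : ‖1 - u‖⁻¹ ≤ 2 := by
    rw [show (2 : ℝ) = (1 / 2)⁻¹ by norm_num]
    exact inv_anti₀ (by norm_num) hu2
  gcongr

lemma tendsto_appellR {y w z : ℂ} (hy : y ≠ 0) (hy1 : ‖y‖ < 1) (hw : w ≠ 0) (hz : z ≠ 0) :
    Tendsto (appellR y w z) (𝓝 1) (𝓝 (appell y w z)) := by
  obtain ⟨C, hC0, hC⟩ := uniform_inv hy hy1 hz
  refine tendsto_tsum_of_dominated_convergence
    (bound := fun n => ‖(-1) ^ n * y ^ (3 * tri n) * w ^ n‖ * C) ?_ ?_ ?_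
  · exact (summable_appell_coeff hy hy1 hw).mul_right _
  · intro n
    rw [div_eq_mul_inv]
    refine Tendsto.const_mul _ ?_
    split_ifs with h
    · rw [h, inv_zero]; exact tendsto_const_nhds
    · have h1 : Tendsto (fun t : ℂ => 1 - z * t * y ^ n) (𝓝 1) (𝓝 (1 - z * 1 * y ^ n)) :=
        Continuous.tendsto (by fun_prop) _
      rw [mul_one] at h1
      exact h1.inv₀ h
  · filter_upwards [hC] with t ht n
    rw [norm_mul]
    gcongr
    split_ifs with h
    · simpa using hC0.le
    · exact (ht n h).2

lemma appellR_eq {y w z : ℂ} (h : ∀ n : ℤ, 1 - z * y ^ n ≠ 0) (t : ℂ) :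
    appellR y w z t = appell y w (z * t) := by
  refine tsum_congr fun n => ?_
  rw [if_neg (h n), div_eq_mul_inv]

lemma one_sub_zpow_eq_zero {y : ℂ} (hy1 : ‖y‖ < 1) (n : ℤ) :
    1 - 1 * y ^ n = 0 ↔ n = 0 := by
  constructor
  · intro h
    have h1 := congrArg norm (sub_eq_zero.1 h)
    rw [one_mul, norm_one, norm_zpow, eq_comm, zpow_eq_one_iff_right₀ (norm_nonneg _) hy1.ne] at h1
    exact h1
  · rintro rfl; simp

/-- Separation of the term of `appell y w t` that is singular at `t = 1`. -/
lemma appell_eq_add {y w t : ℂ} (hy : y ≠ 0) (hy1 : ‖y‖ < 1) (hw : w ≠ 0) (ht : t ≠ 0) :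
    appell y w t = (1 - t)⁻¹ + appellR y w 1 t := by
  have hsum : Summable fun m : ℤ => (-1) ^ m * y ^ (3 * tri m) * w ^ m / (1 - t * y ^ m) := by
    obtain ⟨C, hC0, hC⟩ := exists_bound_inv hy hy1 ht
    refine Summable.of_norm_bounded ((summable_appell_coeff hy hy1 hw).mul_right C) fun n => ?_
    rw [div_eq_mul_inv, norm_mul]
    have := hC n
    gcongr
  rw [appell, hsum.tsum_eq_add_tsum_ite 0, appellR]
  congr 1
  · simp [tri_zero]
  · refine tsum_congr fun n => ?_
    by_cases hn : n = 0
    · rw [if_pos hn, if_pos ((one_sub_zpow_eq_zero hy1 n).2 hn), mul_zero]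
    · rw [if_neg hn, if_neg fun h => hn ((one_sub_zpow_eq_zero hy1 n).1 h), div_eq_mul_inv, one_mul]

/-- The confluent case of `appell_three`: the limit `z → s`. -/
lemma appell_confluent {y s : ℂ} (hy : y ≠ 0) (hy1 : ‖y‖ < 1) (hs : s ≠ 0)
    (h1 : ∀ n : ℤ, 1 - s * y ^ n ≠ 0) (h2 : ∀ n : ℤ, 1 - s ^ 2 * y ^ n ≠ 0) :
    lam s y + lam (s ^ 2) y =
      -s * th (s ^ 2) y / th s y * appell y 1 s + s ^ 3 * appell y (s ^ 3) (s ^ 2) +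
        appell y (s⁻¹ ^ 3) 1 := by
  have hs2 : s ^ 2 ≠ 0 := pow_ne_zero _ hs
  have hE := qPochInf_self_ne_zero hy1
  have t1 := th_ne_zero hy hy1 hs h1
  have t2 := th_ne_zero hy hy1 hs2 h2
  set h : ℂ → ℂ := fun t => qPochInf y y ^ 2 * th s y * th (s ^ 2) y /
    (th (s * t) y * th (s ^ 2 * t) y * thr t y) with hh
  have hd : HasDerivAt h (-(lam s y + lam (s ^ 2) y)) 1 := by
    have d1 := hasDerivAt_th_mul hy1 hs t1
    have d2 := hasDerivAt_th_mul hy1 hs2 t2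
    have d3 := (d1.fun_mul d2).fun_mul (hasDerivAt_thr hy1)
    have d4 := (hasDerivAt_const (1 : ℂ) (qPochInf y y ^ 2 * th s y * th (s ^ 2) y)).fun_div d3
      (by simp [thr_one, t1, t2, hE])
    refine d4.congr_deriv ?_
    simp only [mul_one, thr_one]
    field_simp
    ring
  have hh1 : h 1 = 1 := by
    simp only [hh, mul_one, thr_one]
    field_simp
  have L1 := ((hasDerivAt_iff_tendsto_slope.1 hd).neg)
  rw [neg_neg] at L1
  have L2 : Tendsto (fun t => -s * th (s ^ 2) y / th s y * appellR y 1 s t +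
      s ^ 3 * appellR y (s ^ 3) (s ^ 2) t + appellR y (s⁻¹ ^ 3) 1 t) (𝓝[≠] 1)
      (𝓝 (-s * th (s ^ 2) y / th s y * appell y 1 s + s ^ 3 * appell y (s ^ 3) (s ^ 2) +
        appell y (s⁻¹ ^ 3) 1)) := by
    refine Tendsto.mono_left ?_ nhdsWithin_le_nhds
    exact (((tendsto_appellR hy hy1 one_ne_zero hs).const_mul _).add
      ((tendsto_appellR hy hy1 (pow_ne_zero _ hs) hs2).const_mul _)).add
      (tendsto_appellR hy hy1 (pow_ne_zero _ (inv_ne_zero hs)) one_ne_zero)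
  refine tendsto_nhds_unique L1 (L2.congr' ?_)
  obtain ⟨_, _, b0⟩ := uniform_inv hy hy1 (one_ne_zero (α := ℂ))
  obtain ⟨_, _, b1⟩ := uniform_inv hy hy1 hs
  obtain ⟨_, _, b2⟩ := uniform_inv hy hy1 hs2
  filter_upwards [nhdsWithin_le_nhds b0, nhdsWithin_le_nhds b1, nhdsWithin_le_nhds b2,
    nhdsWithin_le_nhds (isOpen_ne.mem_nhds (one_ne_zero (α := ℂ))), self_mem_nhdsWithin]
    with t c0 c1 c2 ht0 ht1
  have ht1' : 1 - t ≠ 0 := sub_ne_zero.2 (Ne.symm ht1)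
  have c0' : ∀ n : ℤ, 1 - t * y ^ n ≠ 0 := by
    intro n
    by_cases hn : n = 0
    · simpa [hn] using ht1'
    · simpa using (c0 n (by rwa [Ne, one_sub_zpow_eq_zero hy1])).1
  have e1 : s * t * s = s ^ 2 * t := by ring
  have e2 : s * t * s⁻¹ = t := by field_simp
  have key := appell_three hy hy1 hs (mul_ne_zero hs ht0) h1 h2 (fun n => (c1 n (h1 n)).1)
    (fun n => by rw [e1]; exact (c2 n (h2 n)).1) (fun n => by rw [e2]; exact c0' n)
  rw [e1, e2, appell_eq_add hy hy1 (pow_ne_zero _ (inv_ne_zero hs)) ht0, th_eq_thr hy1 t] at key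
  rw [appellR_eq h1, appellR_eq h2, slope_def_field, hh1]
  simp only [hh]
  have ht2 : t - 1 ≠ 0 := sub_ne_zero.2 ht1
  have e3 : -((qPochInf y y ^ 2 * th s y * th (s ^ 2) y /
      (th (s * t) y * th (s ^ 2 * t) y * thr t y) - 1) / (t - 1)) =
      qPochInf y y ^ 2 * th s y * th (s ^ 2) y /
      (th (s * t) y * th (s ^ 2 * t) y * ((1 - t) * thr t y)) - (1 - t)⁻¹ := by
    rw [mul_left_comm (th (s * t) y * _), ← div_div, div_right_comm,
      show t - 1 = -(1 - t) by ring]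
    field_simp
  rw [e3, key]
  ring

/-! ### Five-dissection of theta functions and of Euler's product -/

/-- Splitting a bilateral sum into residue classes modulo `5`. -/
lemma tsum_split5 {f : ℤ → ℂ} (hf : Summable f) :
    ∑' n, f n = ∑ k : Fin 5, ∑' m : ℤ, f (5 * m + (k : ℕ)) := by
  let e : Fin 5 × ℤ ≃ ℤ := (Equiv.prodComm _ _).trans (Int.divModEquiv 5).symm
  have he : ∀ p : Fin 5 × ℤ, e p = 5 * p.2 + (p.1 : ℕ) := fun p => by
    simp [e, Int.divModEquiv, mul_comm]
  have h1 := (e.summable_iff.2 hf).tsum_prod.trans (tsum_fintype _)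
  rw [← e.tsum_eq]
  simp only [Function.comp, he] at h1 ⊢
  exact h1

lemma qPoch_mul (a q : ℂ) (m n : ℕ) :
    qPoch a q (m * n) = ∏ i ∈ range m, qPoch (a * q ^ i) (q ^ m) n := by
  induction n with
  | zero => simp [qPoch_zero]
  | succ n ih =>
    simp only [qPoch_succ, prod_mul_distrib]
    rw [← ih, mul_add, mul_one, qPoch, prod_range_add]
    congr 1
    refine prod_congr rfl fun i _ => ?_
    rw [← pow_mul, pow_add, mul_comm (q ^ (m * n)), mul_assoc]

/-- Splitting `(a;q)_∞` by the residue of the index modulo `m`. -/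
lemma qPochInf_split {q : ℂ} (hq : ‖q‖ < 1) (a : ℂ) {m : ℕ} (hm : m ≠ 0) :
    qPochInf a q = ∏ i ∈ range m, qPochInf (a * q ^ i) (q ^ m) := by
  have hqm : ‖q ^ m‖ < 1 := by rw [norm_pow]; exact pow_lt_one₀ (norm_nonneg _) hq hm
  have h1 : Tendsto (fun n => qPoch a q (m * n)) atTop (𝓝 (qPochInf a q)) :=
    (tendsto_qPoch hq a).comp (tendsto_id.const_mul_atTop' (by omega))
  simp only [qPoch_mul] at h1
  exact tendsto_nhds_unique h1 (tendsto_finsetProd _ fun i _ => tendsto_qPoch hqm _)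

lemma norm_pow_lt {q : ℂ} (hq : ‖q‖ < 1) {m : ℕ} (hm : m ≠ 0) : ‖q ^ m‖ < 1 := by
  rw [norm_pow]; exact pow_lt_one₀ (norm_nonneg _) hq hm

/-- The 5-dissection of `(ξq;q)_∞ (ξ⁻¹q;q)_∞ (q;q)_∞` for a primitive fifth root of unity. -/
lemma theta_dissection {q ξ : ℂ} (hq0 : q ≠ 0) (hq : ‖q‖ < 1) (h5 : ξ ^ 5 = 1) (h1 : ξ ≠ 1) :
    qPochInf q q * thr ξ q = jj ((q ^ 5) ^ 2) ((q ^ 5) ^ 5) +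
      q * (ξ ^ 2 + ξ ^ 3) * jj (q ^ 5) ((q ^ 5) ^ 5) := by
  have hξ : ξ ≠ 0 := by rintro rfl; norm_num at h5
  set Q := q ^ 5 with hQ
  have hQ0 : Q ≠ 0 := pow_ne_zero _ hq0
  have hQ1 : ‖Q‖ < 1 := norm_pow_lt hq (by norm_num)
  set y := Q ^ 5 with hy
  have hy0 : y ≠ 0 := pow_ne_zero _ hQ0
  have hy1 : ‖y‖ < 1 := norm_pow_lt hQ1 (by norm_num)
  have key := jtp hq0 hq hξ
  rw [tsum_split5 (summable_jtp hq0 hq hξ).of_norm] at key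
  have hk : ∀ k : ℕ, ∑' m : ℤ, (-ξ) ^ (5 * m + (k : ℤ)) * q ^ tri (5 * m + (k : ℤ) - 1) =
      (-ξ) ^ k * q ^ tri ((k : ℤ) - 1) * jj (Q ^ (k + 2)) y := by
    intro k
    rw [jj, jtp hy0 hy1 (pow_ne_zero _ hQ0), ← tsum_mul_left]
    refine tsum_congr fun m => ?_
    have e1 : (-ξ) ^ (5 * m + (k : ℤ)) = (-1) ^ m * (-ξ) ^ k := by
      rw [zpow_add₀ (neg_ne_zero.2 hξ), zpow_mul, zpow_natCast]
      congr 2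
      rw [show (5 : ℤ) = ((5 : ℕ) : ℤ) by rfl, zpow_natCast, neg_pow, h5]
      norm_num
    have e2 : q ^ tri (5 * m + (k : ℤ) - 1) =
        q ^ tri ((k : ℤ) - 1) * (Q ^ (k + 2)) ^ m * y ^ tri (m - 1) := by
      rw [hy, hQ]
      simp only [← zpow_natCast, ← zpow_mul]
      rw [← zpow_add₀ hq0, ← zpow_add₀ hq0]
      congr 1
      have a1 := two_mul_tri (5 * m + (k : ℤ) - 1)
      have a2 := two_mul_tri ((k : ℤ) - 1)
      have a3 := two_mul_tri (m - 1)
      push_cast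
      linarith
    rw [e1, e2, neg_eq_neg_one_mul (Q ^ (k + 2)), mul_zpow]
    ring
  have f3 : jj (Q ^ 3) y = jj (Q ^ 2) y := by
    rw [jj, jj, ← th_inv_mul hy0, hy, show Q ^ 5 / Q ^ 3 = Q ^ 2 by field_simp]
  have f4 : jj (Q ^ 4) y = jj Q y := by
    rw [jj, jj, ← th_inv_mul hy0, hy, show Q ^ 5 / Q ^ 4 = Q by field_simp]
  have f5 : jj (Q ^ 5) y = 0 := by
    have := th_mul hy0 hy1 one_ne_zero
    rw [one_mul, th_eq_thr hy1 1] at this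
    rw [jj, ← hy, this]
    simp
  have f6 : jj (Q ^ 6) y = -jj Q y / Q := by
    rw [jj, jj, show Q ^ 6 = Q * y by rw [hy]; ring, th_mul hy0 hy1 hQ0]
    ring
  rw [Fin.sum_univ_five] at key
  simp only [hk] at key
  have v0 : tri ((((0 : Fin 5) : ℕ) : ℤ) - 1) = 0 := by decide
  have v1 : tri ((((1 : Fin 5) : ℕ) : ℤ) - 1) = 0 := by decide
  have v2 : tri ((((2 : Fin 5) : ℕ) : ℤ) - 1) = 1 := by decide
  have v4 : tri ((((4 : Fin 5) : ℕ) : ℤ) - 1) = (6 : ℕ) := by decide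
  rw [v0, v1, v2, v4, zpow_zero, zpow_one, zpow_natCast] at key
  simp only [Fin.coe_ofNat_eq_mod, Nat.reduceMod, Nat.reduceAdd, f3, f4, f5, f6] at key
  rw [th_eq_thr hq] at key
  have h1' : 1 - ξ ≠ 0 := sub_ne_zero.2 (Ne.symm h1)
  refine mul_left_cancel₀ h1' ?_
  have e6 : q ^ 6 * (-jj Q y / Q) = -q * jj Q y := by
    rw [show q ^ 6 = q * Q by rw [hQ]; ring]; field_simp
  linear_combination key + ξ ^ 4 * e6

lemma root_sum {ξ : ℂ} (h5 : ξ ^ 5 = 1) (h1 : ξ ≠ 1) : 1 + ξ + ξ ^ 2 + ξ ^ 3 + ξ ^ 4 = 0 := by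
  have h1' : 1 - ξ ≠ 0 := sub_ne_zero.2 (Ne.symm h1)
  refine mul_left_cancel₀ h1' ?_
  linear_combination -h5

/-- The product over all fifth roots of unity: `∏_{k<5} (1 - ξ^k x) = 1 - x^5`
applied to every factor. -/
lemma thr_mul_thr {q ξ : ℂ} (hq : ‖q‖ < 1) (h5 : ξ ^ 5 = 1) (h1 : ξ ≠ 1) :
    thr ξ q * thr (ξ ^ 2) q * qPochInf q q = qPochInf (q ^ 5) (q ^ 5) := by
  have hξ : ξ ≠ 0 := by rintro rfl; norm_num at h5
  have hs := root_sum h5 h1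
  have i1 : q / ξ = q * ξ ^ 4 := by field_simp; linear_combination -q * h5
  have i2 : q / ξ ^ 2 = q * ξ ^ 3 := by field_simp; linear_combination -q * h5
  rw [thr, thr, i1, i2]
  have L := (((tendsto_qPoch hq (q * ξ)).mul (tendsto_qPoch hq (q * ξ ^ 4))).mul
    ((tendsto_qPoch hq (q * ξ ^ 2)).mul (tendsto_qPoch hq (q * ξ ^ 3)))).mul (tendsto_qPoch hq q)
  refine tendsto_nhds_unique L ((tendsto_qPoch (norm_pow_lt hq (by norm_num)) (q ^ 5)).congr ?_)
  intro n
  simp only [qPoch, ← prod_mul_distrib]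
  refine prod_congr rfl fun k _ => ?_
  set x := q * q ^ k with hx
  have a1 : (1 - q * ξ * q ^ k) * (1 - q * ξ ^ 4 * q ^ k) = 1 - (ξ + ξ ^ 4) * x + x ^ 2 := by
    rw [hx]; linear_combination (q * q ^ k) ^ 2 * h5
  have a2 : (1 - q * ξ ^ 2 * q ^ k) * (1 - q * ξ ^ 3 * q ^ k) = 1 - (ξ ^ 2 + ξ ^ 3) * x + x ^ 2 := by
    rw [hx]; linear_combination (q * q ^ k) ^ 2 * h5
  have a3 : q ^ 5 * (q ^ 5) ^ k = x ^ 5 := by rw [hx]; ring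
  have b1 : ξ ^ 2 + ξ ^ 3 = -1 - (ξ + ξ ^ 4) := by linear_combination hs
  have b2 : (ξ + ξ ^ 4) * (-1 - (ξ + ξ ^ 4)) = -1 := by
    rw [← b1]; linear_combination hs + (ξ + ξ ^ 2) * h5
  rw [a1, a2, a3, b1]
  linear_combination (-x ^ 2 * (1 - x)) * b2

lemma qPochInf_five {Q : ℂ} (hQ0 : Q ≠ 0) (hQ1 : ‖Q‖ < 1) :
    qPochInf Q Q = qPochInf (Q ^ 5) (Q ^ 5) * th Q (Q ^ 5) * th (Q ^ 2) (Q ^ 5) := by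
  rw [qPochInf_split hQ1 Q (m := 5) (by norm_num)]
  simp only [prod_range_succ, prod_range_zero, one_mul, pow_zero, mul_one, pow_one, th,
    show Q ^ 5 / Q = Q ^ 4 by field_simp, show Q ^ 5 / Q ^ 2 = Q ^ 3 by field_simp,
    show Q * Q = Q ^ 2 by ring, show Q * Q ^ 2 = Q ^ 3 by ring, show Q * Q ^ 3 = Q ^ 4 by ring,
    show Q * Q ^ 4 = Q ^ 5 by ring]
  ring

/-- The 5-dissection of Euler's product. -/
lemma euler_dissection {q ξ : ℂ} (hq0 : q ≠ 0) (hq : ‖q‖ < 1) (h5 : ξ ^ 5 = 1) (h1 : ξ ≠ 1) :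
    qPochInf q q * th (q ^ 5) ((q ^ 5) ^ 5) * th ((q ^ 5) ^ 2) ((q ^ 5) ^ 5) =
      qPochInf ((q ^ 5) ^ 5) ((q ^ 5) ^ 5) * (th ((q ^ 5) ^ 2) ((q ^ 5) ^ 5) ^ 2 -
        q * th (q ^ 5) ((q ^ 5) ^ 5) * th ((q ^ 5) ^ 2) ((q ^ 5) ^ 5) -
        q ^ 2 * th (q ^ 5) ((q ^ 5) ^ 5) ^ 2) := by
  have h5' : (ξ ^ 2) ^ 5 = 1 := by rw [← pow_mul, mul_comm, pow_mul, h5, one_pow]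
  have h1' : ξ ^ 2 ≠ 1 := by
    intro h
    apply h1
    linear_combination h5 - ξ * (ξ ^ 2 + 1) * h
  have hs := root_sum h5 h1
  have hQ0 : q ^ 5 ≠ 0 := pow_ne_zero _ hq0
  have hQ1 : ‖q ^ 5‖ < 1 := norm_pow_lt hq (by norm_num)
  have hJ := qPochInf_self_ne_zero (norm_pow_lt hQ1 (show 5 ≠ 0 by norm_num))
  have e1 := theta_dissection hq0 hq h5 h1
  have e2 := theta_dissection hq0 hq h5' h1'
  have e3 := thr_mul_thr hq h5 h1
  rw [qPochInf_five hQ0 hQ1] at e3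
  simp only [jj] at e1 e2
  set J := qPochInf ((q ^ 5) ^ 5) ((q ^ 5) ^ 5)
  set A := th (q ^ 5) ((q ^ 5) ^ 5)
  set B := th ((q ^ 5) ^ 2) ((q ^ 5) ^ 5)
  have b1 : ξ ^ 2 + ξ ^ 3 = -1 - (ξ + ξ ^ 4) := by linear_combination hs
  have b3 : (ξ ^ 2) ^ 2 + (ξ ^ 2) ^ 3 = ξ + ξ ^ 4 := by linear_combination ξ * h5
  have b2 : (ξ + ξ ^ 4) * (-1 - (ξ + ξ ^ 4)) = -1 := by
    rw [← b1]; linear_combination hs + (ξ + ξ ^ 2) * h5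
  rw [b1] at e1
  rw [b3] at e2
  refine mul_left_cancel₀ hJ ?_
  have e4 : (qPochInf q q * thr ξ q) * (qPochInf q q * thr (ξ ^ 2) q) =
      qPochInf q q * (J * A * B) := by rw [← e3]; ring
  rw [e1, e2] at e4
  linear_combination -e4 + (q ^ 2 * J ^ 2 * A ^ 2) * b2

/-! ### The rank generating function by largest part -/

/-- `∑ w^{number of parts}` over the partitions of `n` all of whose parts are at most `L`. -/
noncomputable def dpt (w : ℂ) (L n : ℕ) : ℂ :=
  ∑ p : n.Partition with ∀ i ∈ p.parts, i ≤ L, w ^ p.parts.card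

/-- Removing one part equal to `L` from the partitions whose largest part is `L`. -/
lemma sum_largest_part (w : ℂ) {L n : ℕ} (h1 : 1 ≤ L) (h2 : L ≤ n) :
    ∑ p : n.Partition with ((∀ i ∈ p.parts, i ≤ L) ∧ L ∈ p.parts), w ^ p.parts.card =
      w * dpt w L (n - L) := by
  rw [dpt, mul_sum]
  refine sum_bij' (fun p hp => Nat.Partition.partitionWithPartEquiv h1 h2
      ⟨p, (mem_filter.1 hp).2.2⟩)
    (fun p _ => ((Nat.Partition.partitionWithPartEquiv h1 h2).symm p).1) ?_ ?_ ?_ ?_ ?_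
  · intro p hp
    simp only [mem_filter, mem_univ, true_and] at hp ⊢
    intro i hi
    rw [Nat.Partition.partitionWithPartEquiv_apply_parts] at hi
    exact hp.1 i (Multiset.mem_of_mem_erase hi)
  · intro p hp
    simp only [mem_filter, mem_univ, true_and] at hp ⊢
    rw [Nat.Partition.partitionWithPartEquiv_symm_apply_parts]
    refine ⟨fun i hi => ?_, Multiset.mem_cons_self _ _⟩
    rcases Multiset.mem_cons.1 hi with h | h
    · exact h.le
    · exact hp i h
  · intro p hp
    simp
  · intro p hp
    simp
  · intro p hp
    have hp' := (mem_filter.1 hp).2.2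
    rw [Nat.Partition.partitionWithPartEquiv_apply_parts, ← pow_succ',
      Multiset.card_erase_of_mem hp']
    congr 1
    have := Multiset.card_pos_iff_exists_mem.2 ⟨L, hp'⟩
    rw [Nat.pred_eq_sub_one]
    omega

lemma dpt_zero (w : ℂ) (n : ℕ) : dpt w 0 n = if n = 0 then 1 else 0 := by
  rw [dpt]
  split_ifs with h
  · subst h
    rw [filter_true_of_mem]
    · simp
    · intro p _ i hi
      have := Multiset.single_le_sum (s := p.parts) (by simp) i hi
      rwa [p.parts_sum] at this
  · rw [filter_false_of_mem]
    · simp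
    · intro p _ hp
      have : p.parts.sum = 0 := Multiset.sum_eq_zero fun i hi => Nat.le_zero.1 (hp i hi)
      rw [p.parts_sum] at this
      exact h this

lemma part_le {n : ℕ} (p : n.Partition) {i : ℕ} (hi : i ∈ p.parts) : i ≤ n := by
  have := Multiset.single_le_sum (s := p.parts) (by simp) i hi
  rwa [p.parts_sum] at this

lemma dpt_succ (w : ℂ) (L n : ℕ) :
    dpt w (L + 1) n = dpt w L n + if L + 1 ≤ n then w * dpt w (L + 1) (n - (L + 1)) else 0 := by
  have h : dpt w (L + 1) n = dpt w L n + ∑ p : n.Partition with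
      ((∀ i ∈ p.parts, i ≤ L + 1) ∧ L + 1 ∈ p.parts), w ^ p.parts.card := by
    rw [dpt, dpt, ← sum_union]
    · refine sum_congr ?_ fun _ _ => rfl
      ext p
      simp only [mem_filter, mem_univ, true_and, mem_union]
      constructor
      · intro h
        by_cases h' : L + 1 ∈ p.parts
        · exact Or.inr ⟨h, h'⟩
        · refine Or.inl fun i hi => ?_
          have := h i hi
          have : i ≠ L + 1 := fun e => h' (e ▸ hi)
          omega
      · rintro (h | h)
        · exact fun i hi => (h i hi).trans (Nat.le_succ L)
        · exact h.1
    · rw [disjoint_left]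
      intro p hp hp'
      simp only [mem_filter, mem_univ, true_and] at hp hp'
      have := hp _ hp'.2
      omega
  rw [h]
  congr 1
  split_ifs with hn
  · exact sum_largest_part w (by omega) hn
  · refine sum_eq_zero fun p hp => ?_
    simp only [mem_filter, mem_univ, true_and] at hp
    exact absurd (part_le p hp.2) hn

lemma sum_range_shift_le {u : ℕ → ℝ} (hu : ∀ n, 0 ≤ u n) (L N : ℕ) :
    ∑ n ∈ range N, (if L ≤ n then u (n - L) else 0) ≤ ∑ n ∈ range N, u n := by
  calc ∑ n ∈ range N, (if L ≤ n then u (n - L) else 0)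
      ≤ ∑ n ∈ range (L + N), (if L ≤ n then u (n - L) else 0) := by
        refine sum_le_sum_of_subset_of_nonneg (range_mono (by omega)) fun i _ _ => ?_
        split_ifs
        · exact hu _
        · exact le_rfl
    _ = ∑ n ∈ range N, u n := by
        rw [sum_range_add, sum_eq_zero, zero_add]
        · refine sum_congr rfl fun n _ => ?_
          simp
        · intro i hi
          simp only [mem_range] at hi
          simp [hi]

/-- The partial sums of `∑ |dpt w L n q^n|` are bounded by the generating function of all
partitions into parts at most `L`. -/
lemma sum_norm_dpt_le {w q : ℂ} (hw : ‖w‖ = 1) (hq : ‖q‖ < 1) (L N : ℕ) :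
    ∑ n ∈ range N, ‖dpt w L n * q ^ n‖ ≤ ∏ i ∈ range L, (1 - ‖q‖ ^ (i + 1))⁻¹ := by
  induction L with
  | zero =>
    simp only [dpt_zero, range_zero, prod_empty]
    rcases Nat.eq_zero_or_pos N with h | h
    · simp [h]
    · rw [sum_eq_single 0]
      · simp
      · intro b _ hb
        simp [hb]
      · intro hN
        exact absurd (mem_range.2 h) hN
  | succ L ih =>
    have hr : ‖q‖ ^ (L + 1) < 1 := pow_lt_one₀ (norm_nonneg _) hq (by simp)
    have key : ∑ n ∈ range N, ‖dpt w (L + 1) n * q ^ n‖ ≤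
        ∑ n ∈ range N, ‖dpt w L n * q ^ n‖ +
          ‖q‖ ^ (L + 1) * ∑ n ∈ range N, ‖dpt w (L + 1) n * q ^ n‖ := by
      calc ∑ n ∈ range N, ‖dpt w (L + 1) n * q ^ n‖
          ≤ ∑ n ∈ range N, (‖dpt w L n * q ^ n‖ + ‖q‖ ^ (L + 1) *
            (if L + 1 ≤ n then ‖dpt w (L + 1) (n - (L + 1)) * q ^ (n - (L + 1))‖ else 0)) := by
            refine sum_le_sum fun n _ => ?_
            rw [dpt_succ, add_mul]
            refine (norm_add_le _ _).trans ?_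
            gcongr
            split_ifs with h
            · simp only [norm_mul, norm_pow, hw]
              have : ‖q‖ ^ n = ‖q‖ ^ (L + 1) * ‖q‖ ^ (n - (L + 1)) := by
                rw [← pow_add]; congr 1; omega
              rw [this]
              apply le_of_eq
              ring
            · simp
        _ ≤ _ := by
            rw [sum_add_distrib, ← mul_sum]
            refine add_le_add le_rfl (mul_le_mul_of_nonneg_left ?_ (by positivity))
            exact sum_range_shift_le (u := fun n => ‖dpt w (L + 1) n * q ^ n‖)
              (fun _ => norm_nonneg _) _ _
    rw [prod_range_succ, ← div_eq_mul_inv, le_div_iff₀ (by linarith)]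
    linarith

lemma summable_dpt {w q : ℂ} (hw : ‖w‖ = 1) (hq : ‖q‖ < 1) (L : ℕ) :
    Summable fun n => ‖dpt w L n * q ^ n‖ :=
  summable_of_sum_range_le (fun _ => norm_nonneg _) (sum_norm_dpt_le hw hq L)

lemma exists_bound_dpt {q : ℂ} (hq : ‖q‖ < 1) : ∃ C : ℝ, 0 < C ∧ ∀ w : ℂ, ‖w‖ = 1 →
    ∀ L, ∑' n, ‖dpt w L n * q ^ n‖ ≤ C := by
  have hr : ‖((‖q‖ : ℝ) : ℂ)‖ < 1 := by simpa using hq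
  obtain ⟨C, hC, h⟩ := exists_bound_qPoch_inv hr (one_sub_pow_ne_zero hr)
  refine ⟨C, hC, fun w hw L => ?_⟩
  refine (Real.tsum_le_of_sum_range_le (fun _ => norm_nonneg _) (sum_norm_dpt_le hw hq L)).trans ?_
  refine le_trans ?_ (h L)
  rw [qPoch, norm_inv, norm_prod, ← prod_inv_distrib]
  apply le_of_eq
  refine prod_congr rfl fun i _ => ?_
  rw [← pow_succ', ← Complex.ofReal_pow, ← Complex.ofReal_one, ← Complex.ofReal_sub,
    Complex.norm_real, Real.norm_of_nonneg]
  have : ‖q‖ ^ (i + 1) ≤ 1 := pow_le_one₀ (norm_nonneg _) hq.le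
  linarith

lemma norm_mul_lt {w q : ℂ} (hw : ‖w‖ = 1) (hq : ‖q‖ < 1) : ‖w * q‖ < 1 := by
  rw [norm_mul, hw, one_mul]; exact hq

/-- The generating function of partitions into parts at most `L`, weighted by `w` to the number
of parts. -/
lemma tsum_dpt {w q : ℂ} (hw : ‖w‖ = 1) (hq : ‖q‖ < 1) (L : ℕ) :
    ∑' n, dpt w L n * q ^ n = (qPoch (w * q) q L)⁻¹ := by
  induction L with
  | zero =>
    rw [tsum_eq_single 0]
    · simp [dpt_zero, qPoch]
    · intro n hn
      simp [dpt_zero, hn]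
  | succ L ih =>
    have hs := (summable_dpt hw hq (L + 1)).of_norm
    have hs0 := (summable_dpt hw hq L).of_norm
    set S := ∑' n, dpt w (L + 1) n * q ^ n with hS
    have hsh : HasSum (fun n => if L + 1 ≤ n then w * dpt w (L + 1) (n - (L + 1)) * q ^ n else 0)
        (w * q ^ (L + 1) * S) := by
      rw [← hasSum_nat_add_iff' (L + 1), sum_eq_zero, sub_zero]
      · refine (hs.hasSum.mul_left (w * q ^ (L + 1))).congr_fun ?_
        intro n
        simp only [le_add_iff_nonneg_left, zero_le, if_true, Nat.add_sub_cancel, pow_add]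
        ring
      · intro i hi
        rw [mem_range] at hi
        rw [if_neg (by omega)]
    have hsum := hs0.hasSum.add hsh
    have h2 : S = (qPoch (w * q) q L)⁻¹ + w * q ^ (L + 1) * S := by
      rw [← ih, ← hsum.tsum_eq, hS]
      refine tsum_congr fun n => ?_
      rw [dpt_succ, add_mul, ite_mul, zero_mul]
    have hne := one_sub_mul_pow_ne_zero hq (norm_mul_lt hw hq)
    have h3 : 1 - w * q ^ (L + 1) ≠ 0 := by
      have := hne L
      rwa [mul_assoc, ← pow_succ'] at this
    have h4 := qPoch_ne_zero hne L
    rw [qPoch_succ, mul_assoc, ← pow_succ', mul_inv]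
    field_simp
    field_simp at h2
    linear_combination h2

lemma sup_eq_iff {n : ℕ} (p : n.Partition) (l : ℕ) :
    p.parts.sup = l + 1 ↔ (∀ i ∈ p.parts, i ≤ l + 1) ∧ l + 1 ∈ p.parts := by
  constructor
  · intro h
    have h1 : ∀ i ∈ p.parts, i ≤ l + 1 := Multiset.sup_le.1 h.le
    refine ⟨h1, ?_⟩
    by_contra hl
    have : p.parts.sup ≤ l := Multiset.sup_le.2 fun i hi => by
      have := h1 i hi
      have : i ≠ l + 1 := fun e => hl (e ▸ hi)
      omega
    omega
  · rintro ⟨h1, h2⟩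
    exact le_antisymm (Multiset.sup_le.2 h1) (Multiset.le_sup h2)

/-- The rank polynomial: the coefficient of `q^n` in `R(z;q)`. -/
noncomputable def rankPoly (z : ℂ) (n : ℕ) : ℂ := ∑ p : n.Partition, z ^ partitionRank p

lemma rankPoly_zero (z : ℂ) : rankPoly z 0 = 1 := by
  simp [rankPoly, partitionRank]

lemma rankPoly_succ {z : ℂ} (hz : z ≠ 0) (n : ℕ) :
    rankPoly z (n + 1) = ∑ x ∈ antidiagonal n, z ^ x.1 * dpt z⁻¹ (x.1 + 1) x.2 := by
  rw [Nat.sum_antidiagonal_eq_sum_range_succ_mk, rankPoly,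
    ← sum_fiberwise_of_maps_to (s := univ) (t := range (n + 1)) (g := fun p => p.parts.sup - 1)]
  · refine sum_congr rfl fun l hl => ?_
    have hl' := mem_range.1 hl
    have h := sum_largest_part z⁻¹ (L := l + 1) (n := n + 1) (by omega) (by omega)
    rw [Nat.add_sub_add_right] at h
    have h2 : z ^ l * dpt z⁻¹ (l + 1) (n - l) =
        z ^ (l + 1) * (z⁻¹ * dpt z⁻¹ (l + 1) (n - l)) := by
      rw [pow_succ]; field_simp
    simp only
    rw [h2, ← h, mul_sum]
    refine sum_congr ?_ ?_
    · ext p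
      simp only [mem_filter, mem_univ, true_and]
      rw [← sup_eq_iff]
      have : p.parts.sup ≠ 0 := by
        intro h0
        have hall : ∀ i ∈ p.parts, i = 0 := fun i hi =>
          Nat.le_zero.1 (h0 ▸ Multiset.le_sup hi)
        have := Multiset.sum_eq_zero hall
        rw [p.parts_sum] at this
        omega
      omega
    · intro p hp
      simp only [mem_filter, mem_univ, true_and] at hp
      rw [partitionRank, (sup_eq_iff p l).2 hp, zpow_sub₀ hz, zpow_natCast, zpow_natCast,
        inv_pow]
      rfl
  · intro p _
    have : p.parts.sup ≤ n + 1 := Multiset.sup_le.2 fun i hi => part_le p hi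
    rw [mem_range]
    omega

/-- The double series behind the expansion of `R(z;q)` by largest part. -/
noncomputable def rankTerm (z q : ℂ) (x : ℕ × ℕ) : ℂ :=
  z ^ x.1 * q ^ (x.1 + 1) * (dpt z⁻¹ (x.1 + 1) x.2 * q ^ x.2)

lemma summable_rankTerm {z q : ℂ} (hz : ‖z‖ = 1) (hq : ‖q‖ < 1) :
    Summable fun x => ‖rankTerm z q x‖ := by
  have hw : ‖z⁻¹‖ = 1 := by rw [norm_inv, hz, inv_one]
  obtain ⟨C, hC, h⟩ := exists_bound_dpt hq
  have e : ∀ l m, ‖rankTerm z q (l, m)‖ = ‖q‖ ^ (l + 1) * ‖dpt z⁻¹ (l + 1) m * q ^ m‖ := by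
    intro l m
    simp only [rankTerm, norm_mul, norm_pow, hz, one_pow, one_mul]
  refine (summable_prod_of_nonneg fun _ => norm_nonneg _).2 ⟨fun l => ?_, ?_⟩
  · simp only [e]
    exact (summable_dpt hw hq (l + 1)).mul_left _
  · simp only [e, tsum_mul_left]
    refine Summable.of_nonneg_of_le (fun l => by positivity) (fun l => ?_)
      (((summable_geometric_of_lt_one (norm_nonneg _) hq).mul_left ‖q‖).mul_right C)
    rw [pow_succ']
    gcongr
    exact h _ hw _

lemma sum_rankTerm {z q : ℂ} (hz : z ≠ 0) (n : ℕ) :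
    rankPoly z (n + 1) * q ^ (n + 1) = ∑ x ∈ antidiagonal n, rankTerm z q x := by
  rw [rankPoly_succ hz, sum_mul]
  refine sum_congr rfl fun x hx => ?_
  rw [rankTerm, ← mem_antidiagonal.1 hx]
  ring

lemma summable_rankPoly {z q : ℂ} (hz : ‖z‖ = 1) (hq : ‖q‖ < 1) :
    Summable fun n => ‖rankPoly z n * q ^ n‖ := by
  have hz0 : z ≠ 0 := by rintro rfl; simp at hz
  rw [← summable_nat_add_iff 1]
  have h1 := (HasAntidiagonal.sigmaAntidiagonalEquivProd (A := ℕ)).summable_iff.2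
    (summable_rankTerm hz hq)
  refine Summable.of_nonneg_of_le (fun _ => norm_nonneg _) (fun n => ?_) h1.sigma
  rw [sum_rankTerm hz0, tsum_fintype]
  refine (norm_sum_le _ _).trans ?_
  rw [← sum_coe_sort]
  rfl

/-- The expansion of `R(z;q)` by largest part, for `|z| = 1`. -/
lemma rankGF_largest_part {z q : ℂ} (hz : ‖z‖ = 1) (hq : ‖q‖ < 1) :
    HasSum (fun l : ℕ => z ^ l * q ^ (l + 1) * (qPoch (z⁻¹ * q) q (l + 1))⁻¹)
      (rankGF z q - 1) := by
  have hz0 : z ≠ 0 := by rintro rfl; simp at hz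
  have hw : ‖z⁻¹‖ = 1 := by rw [norm_inv, hz, inv_one]
  have hsum := (summable_rankTerm hz hq).of_norm
  have h1 := (HasAntidiagonal.sigmaAntidiagonalEquivProd (A := ℕ)).hasSum_iff.2 hsum.hasSum
  have h2 := h1.sigma fun n => (hasSum_fintype _)
  have h3 := hsum.hasSum.prod_fiberwise fun l => (hsum.prod_factor l).hasSum
  have h4 : ∑' n, rankPoly z (n + 1) * q ^ (n + 1) = ∑' x, rankTerm z q x := by
    refine (HasSum.tsum_eq ?_)
    refine h2.congr_fun fun n => ?_
    rw [sum_rankTerm hz0, ← sum_coe_sort]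
    rfl
  have h5 : rankGF z q - 1 = ∑' x, rankTerm z q x := by
    rw [← h4]
    have := (summable_rankPoly hz hq).of_norm.tsum_eq_zero_add
    rw [rankPoly_zero] at this
    have e : rankGF z q = ∑' n, rankPoly z n * q ^ n := rfl
    rw [e, this]
    simp
  rw [h5]
  refine h3.congr_fun fun l => ?_
  simp only [rankTerm]
  rw [tsum_mul_left, tsum_dpt hw hq]

/-! ### Durfee rectangles -/

/-- The finite partial fraction expansion with one family of poles. -/
lemma finite_pf_one {q z : ℂ} (hq0 : q ≠ 0) (hq : ‖q‖ < 1) (hz : z ≠ 0)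
    (h : ∀ n : ℤ, 1 - z * q ^ n ≠ 0) (N : ℕ) :
    (qPoch z q (N + 1) * qPoch (q / z) q N)⁻¹ =
      ∑' r : ℤ, (-1) ^ r * q ^ tri r * (gq q (N - r) * gq q (N + r)) / (1 - z * q ^ r) := by
  set I := Icc (-(N : ℤ)) N with hI
  have h1 := partial_fractions I (fun r : ℤ => q ^ r) N (by rw [hI, Int.card_Icc]; omega)
    (by
      intro n _ m _ hnm
      have h4 := congrArg norm hnm
      simp only [norm_zpow] at h4
      exact zpow_right_injective₀ (norm_pos_iff.2 hq0) hq.ne h4)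
    (fun r _ => zpow_ne_zero _ hq0) hz (fun r _ => h r)
  rw [hI, prod_block hq0 hz] at h1
  have hzN : z ^ N ≠ 0 := pow_ne_zero _ hz
  have hqN : q ^ (-tri N) ≠ 0 := zpow_ne_zero _ hq0
  have hs : ((-1 : ℂ) ^ N) * (-1) ^ N = 1 := by rw [← mul_pow]; simp
  have hs0 : ((-1 : ℂ) ^ N) ≠ 0 := by simp
  have h2 : (qPoch z q (N + 1) * qPoch (q / z) q N)⁻¹ = ((-1) ^ N * q ^ (-tri N)) *
      (z ^ N / (qPoch z q (N + 1) * (qPoch (q / z) q N * ((-z) ^ N * q ^ (-tri N))))) := by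
    have hp : qPoch z q (N + 1) ≠ 0 := qPoch_ne_zero (one_sub_ne_of_zpow h) _
    have hp2 : qPoch (q / z) q N ≠ 0 := qPoch_ne_zero (one_sub_inv_ne_of_zpow hq0 hz h) _
    rw [neg_pow z]
    field_simp
  rw [h2, h1, tsum_eq_sum (s := I), mul_sum]
  · refine sum_congr rfl fun r hr => ?_
    have hr' := mem_Icc.1 hr
    rw [mul_div_assoc', prod_congr rfl fun m _ => by rw [← zpow_sub₀ hq0],
      prod_shift_erase (fun k => 1 - q ^ k) hr, prod_block_erase hq0]
    congr 1
    obtain ⟨A, hA⟩ : ∃ A : ℕ, ((N : ℤ) - r) = A := ⟨((N : ℤ) - r).toNat, by omega⟩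
    obtain ⟨B, hB⟩ : ∃ B : ℕ, ((N : ℤ) + r) = B := ⟨((N : ℤ) + r).toNat, by omega⟩
    simp only [hA, hB, Int.toNat_natCast, gq_nat]
    have hn2 : r = (B : ℤ) - N := by omega
    have t1 : q ^ (-tri N) = q ^ tri r * ((q ^ r) ^ N * q ^ (-tri B)) := by
      rw [← zpow_natCast, ← zpow_mul, ← zpow_add₀ hq0, ← zpow_add₀ hq0]
      congr 1
      rw [← hB, tri_add]
      ring
    have t2 : (-1 : ℂ) ^ r = (-1) ^ B * (-1) ^ N := by
      rw [hn2, zpow_sub₀ (by norm_num), zpow_natCast, zpow_natCast, div_eq_mul_inv,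
        inv_eq_of_mul_eq_one_right hs]
    have hs' : ((-1 : ℂ) ^ B) * (-1) ^ B = 1 := by rw [← mul_pow]; simp
    have hpA := qPoch_ne_zero (one_sub_pow_ne_zero hq) A
    have hpB := qPoch_ne_zero (one_sub_pow_ne_zero hq) B
    have hqB : q ^ (-tri B) ≠ 0 := zpow_ne_zero _ hq0
    have hqr : (q ^ r) ^ N ≠ 0 := pow_ne_zero _ (zpow_ne_zero _ hq0)
    have hs1 : ((-1 : ℂ) ^ B) ≠ 0 := by simp
    rw [t1, t2]
    field_simp
    linear_combination (-hs')
  · intro n hn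
    rw [hI, mem_Icc, not_and_or, not_le, not_le] at hn
    rcases hn with h | h
    · rw [gq_neg q (show (N : ℤ) + n < 0 by omega)]; simp
    · rw [gq_neg q (show (N : ℤ) - n < 0 by omega)]; simp

/-- The terms of the Durfee rectangle series. -/
noncomputable def durf (q : ℂ) (m k : ℕ) : ℂ :=
  q ^ (k ^ 2 + m * k) * ((qPoch q q k)⁻¹ * (qPoch q q (k + m))⁻¹)

lemma exists_bound_durf {q : ℂ} (hq : ‖q‖ < 1) :
    ∃ C : ℝ, 0 < C ∧ ∀ m k, ‖durf q m k‖ ≤ C * ‖q‖ ^ k := by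
  obtain ⟨C, hC, h⟩ := exists_bound_qPoch_inv hq (one_sub_pow_ne_zero hq)
  refine ⟨C * C, by positivity, fun m k => ?_⟩
  rw [durf, norm_mul, norm_mul, norm_pow, mul_comm]
  have : ‖q‖ ^ (k ^ 2 + m * k) ≤ ‖q‖ ^ k :=
    pow_le_pow_of_le_one (norm_nonneg _) hq.le (by nlinarith [Nat.le_self_pow two_ne_zero k])
  gcongr
  · exact h _
  · exact h _

lemma summable_durf {q : ℂ} (hq : ‖q‖ < 1) (m : ℕ) : Summable (durf q m) := by
  obtain ⟨C, hC, h⟩ := exists_bound_durf hq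
  exact Summable.of_norm_bounded ((summable_geometric_of_lt_one (norm_nonneg _) hq).mul_left C)
    (h m)

/-- A second-order recurrence in `m`. As the series is bounded in `m` and the recurrence
contracts the consecutive differences, it is constant in `m` (`durf_const`). -/
lemma durf_rec {q : ℂ} (hq : ‖q‖ < 1) (m : ℕ) :
    ∑' k, durf q m k - ∑' k, durf q (m + 1) k =
      q ^ (m + 1) * (∑' k, durf q (m + 2) k - ∑' k, durf q (m + 1) k) := by
  have h0 := summable_durf hq m
  have h1 := summable_durf hq (m + 1)
  have h2 := summable_durf hq (m + 2)
  -- `u k` telescopes: it is the contribution of the factor `1 - q^k`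
  let u : ℕ → ℂ := fun k =>
    q ^ (k ^ 2 + m * k) * (1 - q ^ k) * ((qPoch q q k)⁻¹ * (qPoch q q (k + m + 1))⁻¹)
  have hne := fun k => qPoch_ne_zero (one_sub_pow_ne_zero hq) k
  have hf := fun k => one_sub_pow_ne_zero hq k
  have hu1 : ∀ k, u (k + 1) = q ^ (m + 1) * durf q (m + 2) k := by
    intro k
    simp only [u, durf]
    have := hf k
    rw [show k + 1 + m + 1 = k + (m + 2) by ring, qPoch_succ q q k, pow_succ' q k]
    have := hne k
    have := hne (k + (m + 2))
    field_simp
    ring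
  have hu : HasSum u (q ^ (m + 1) * ∑' k, durf q (m + 2) k) := by
    rw [← hasSum_nat_add_iff' 1]
    have : ∑ i ∈ range 1, u i = 0 := by simp [u]
    rw [this, sub_zero]
    exact (h2.hasSum.mul_left _).congr_fun hu1
  have hd : HasSum (fun k => u k - q ^ (m + 1) * durf q (m + 1) k)
      (q ^ (m + 1) * ∑' k, durf q (m + 2) k - q ^ (m + 1) * ∑' k, durf q (m + 1) k) :=
    hu.sub (h1.hasSum.mul_left _)
  rw [← h0.tsum_sub h1, mul_sub, ← hd.tsum_eq]
  refine tsum_congr fun k => ?_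
  simp only [u, durf]
  have := hf (k + m)
  rw [show k + (m + 1) = (k + m) + 1 by ring, qPoch_succ q q (k + m)]
  have := hne k
  have := hne (k + m)
  field_simp
  ring

lemma durf_const {q : ℂ} (hq : ‖q‖ < 1) (m : ℕ) :
    ∑' k, durf q m k = ∑' k, durf q (m + 1) k := by
  obtain ⟨C, hC, h⟩ := exists_bound_durf hq
  have hb : ∀ m, ‖∑' k, durf q m k‖ ≤ ∑' k, C * ‖q‖ ^ k := fun m =>
    tsum_of_norm_bounded ((summable_geometric_of_lt_one (norm_nonneg _) hq).mul_left C).hasSum (h m)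
  set M := ∑' k, C * ‖q‖ ^ k
  have key : ∀ j m, ‖∑' k, durf q m k - ∑' k, durf q (m + 1) k‖ ≤ ‖q‖ ^ j * (M + M) := by
    intro j
    induction j with
    | zero =>
      intro m
      rw [pow_zero, one_mul]
      exact (norm_sub_le _ _).trans (add_le_add (hb _) (hb _))
    | succ j ih =>
      intro m
      rw [durf_rec hq, norm_mul, norm_sub_rev, pow_succ' ‖q‖, mul_assoc]
      have h1 : ‖q ^ (m + 1)‖ ≤ ‖q‖ := by
        rw [norm_pow]
        exact pow_le_of_le_one (norm_nonneg _) hq.le (by simp)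
      exact mul_le_mul h1 (ih (m + 1)) (norm_nonneg _) (norm_nonneg _)
  have hlim : Tendsto (fun j : ℕ => ‖q‖ ^ j * (M + M)) atTop (𝓝 (0 * (M + M))) :=
    (tendsto_pow_atTop_nhds_zero_of_lt_one (norm_nonneg _) hq).mul_const _
  rw [zero_mul] at hlim
  have := ge_of_tendsto' hlim fun j => key j m
  exact sub_eq_zero.1 (norm_le_zero_iff.1 this)

/-- Durfee rectangles: `∑ q^{k²+mk}/((q)_k (q)_{k+m}) = 1/(q)_∞`. -/
lemma durfee {q : ℂ} (hq : ‖q‖ < 1) (m : ℕ) : ∑' k, durf q m k = (qPochInf q q)⁻¹ := by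
  obtain ⟨C, hC, h⟩ := exists_bound_durf hq
  have hc : ∀ m, ∑' k, durf q m k = ∑' k, durf q 0 k := fun m => by
    induction m with
    | zero => rfl
    | succ m ih => rw [← durf_const hq, ih]
  have hlim : Tendsto (fun m => ∑' k, durf q m k) atTop
      (𝓝 (∑' k, if k = 0 then (qPochInf q q)⁻¹ else 0)) := by
    refine tendsto_tsum_of_dominated_convergence (bound := fun k => C * ‖q‖ ^ k)
      ((summable_geometric_of_lt_one (norm_nonneg _) hq).mul_left C) (fun k => ?_)
      (Eventually.of_forall fun m k => h m k)
    have ht : Tendsto (fun m => (qPoch q q (k + m))⁻¹) atTop (𝓝 (qPochInf q q)⁻¹) := by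
      have := (tendsto_qPoch_inv hq (one_sub_pow_ne_zero hq)).comp (tendsto_add_atTop_nat k)
      exact this.congr fun m => by simp [add_comm]
    split_ifs with hk
    · subst hk
      refine ht.congr fun m => ?_
      simp [durf, qPoch]
    · have hp : Tendsto (fun m : ℕ => (q ^ k) ^ m) atTop (𝓝 0) :=
        tendsto_pow_atTop_nhds_zero_of_norm_lt_one
          (by rw [norm_pow]; exact pow_lt_one₀ (norm_nonneg _) hq hk)
      have := (hp.mul ht).const_mul (q ^ (k ^ 2) * (qPoch q q k)⁻¹)
      rw [zero_mul, mul_zero] at this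
      refine this.congr fun m => ?_
      rw [durf, pow_add, mul_comm m k, pow_mul]
      ring
  rw [tsum_ite_eq] at hlim
  refine tendsto_nhds_unique ?_ hlim
  rw [tendsto_congr hc, hc m]
  exact tendsto_const_nhds

/-! ### Watson's series and the Appell–Lerch form of the rank generating function -/

/-- The Rogers–Fine series `F(b,t) = ∑ t^n/(bq;q)_n`. -/
noncomputable def rogersFine (q b t : ℂ) : ℂ := ∑' n : ℕ, t ^ n * (qPoch (b * q) q n)⁻¹

lemma summable_rogersFine {q b t : ℂ} (hq : ‖q‖ < 1) (hb : ‖b * q‖ < 1) (ht : ‖t‖ < 1) :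
    Summable fun n : ℕ => t ^ n * (qPoch (b * q) q n)⁻¹ := by
  obtain ⟨C, hC, h⟩ := exists_bound_qPoch_inv hq (one_sub_mul_pow_ne_zero hq hb)
  refine Summable.of_norm_bounded ((summable_geometric_of_lt_one (norm_nonneg _) ht).mul_right C)
    fun n => ?_
  rw [norm_mul, norm_pow]
  gcongr
  exact h n

lemma norm_mul_lt_one {a q : ℂ} (ha : ‖a‖ < 1) (hq : ‖q‖ < 1) : ‖a * q‖ < 1 := by
  rw [norm_mul]
  nlinarith [norm_nonneg a, norm_nonneg q]

lemma one_sub_ne {a : ℂ} (ha : ‖a‖ < 1) : 1 - a ≠ 0 := by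
  intro h
  rw [← sub_eq_zero.1 h] at ha
  simp at ha

/-- The Rogers–Fine functional equation. -/
lemma rogersFine_step {q b t : ℂ} (hq : ‖q‖ < 1) (hb : ‖b * q‖ < 1) (ht : ‖t‖ < 1) :
    (1 - t) * rogersFine q b t =
      1 + b * t * q / (1 - b * q) * rogersFine q (b * q) (t * q) := by
  have hbq := norm_mul_lt_one hb hq
  have hs := summable_rogersFine hq hb ht
  have hs2 := summable_rogersFine hq hbq (norm_mul_lt_one ht hq)
  have hne := qPoch_ne_zero (one_sub_mul_pow_ne_zero hq hb)
  have h1 := hs.tsum_eq_zero_add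
  have h2 : HasSum (fun n : ℕ => t ^ (n + 1) * (qPoch (b * q) q (n + 1))⁻¹ -
      t * (t ^ n * (qPoch (b * q) q n)⁻¹))
      (b * t * q / (1 - b * q) * rogersFine q (b * q) (t * q)) := by
    refine (hs2.hasSum.mul_left (b * t * q / (1 - b * q))).congr_fun fun n => ?_
    have e := qPoch_succ' (b * q) q n
    have e2 := qPoch_succ (b * q) q n
    have hb1 := one_sub_ne hb
    have h3 : qPoch (b * q * q) q n ≠ 0 :=
      qPoch_ne_zero (one_sub_mul_pow_ne_zero hq hbq) n
    have h4 := hne n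
    have h5 : 1 - b * q * q ^ n ≠ 0 := one_sub_mul_pow_ne_zero hq hb n
    have e3 : (qPoch (b * q) q n)⁻¹ = (1 - b * q * q ^ n) / ((1 - b * q) * qPoch (b * q * q) q n) := by
      rw [← e, e2]
      field_simp
    rw [e3, e, mul_pow]
    field_simp
    ring
  have h3 := ((summable_nat_add_iff 1).2 hs).hasSum.sub (hs.hasSum.mul_left t)
  have h4 := h3.unique h2
  simp only [pow_zero, qPoch_zero, inv_one, mul_one] at h1
  rw [← h4, rogersFine]
  linear_combination h1

section Rank

variable {z w q : ℂ}

/-- The iterates of the Rogers–Fine equation along the diagonal `(wq^{k+1}, zq^{k+1})`. -/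
noncomputable def rfIter (z w q : ℂ) (k : ℕ) : ℂ :=
  q ^ (2 * k + 1) / (1 - w * q ^ (k + 1)) * rogersFine q (w * q ^ (k + 1)) (z * q ^ (k + 1))

lemma norm_mul_pow_lt (hw : ‖w‖ = 1) (hq : ‖q‖ < 1) (k : ℕ) : ‖w * q ^ (k + 1)‖ < 1 := by
  rw [norm_mul, hw, one_mul, norm_pow]
  exact pow_lt_one₀ (norm_nonneg _) hq (by simp)

lemma rfIter_step (hz : ‖z‖ = 1) (hw : ‖w‖ = 1) (hzw : z * w = 1) (hq : ‖q‖ < 1) (k : ℕ) :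
    rfIter z w q k = q ^ (2 * k + 1) / ((1 - w * q ^ (k + 1)) * (1 - z * q ^ (k + 1))) *
      (1 + rfIter z w q (k + 1)) := by
  have hwk := norm_mul_pow_lt hw hq k
  have hzk := norm_mul_pow_lt hz hq k
  have h := rogersFine_step hq (norm_mul_lt_one hwk hq) hzk
  have h1 := one_sub_ne hwk
  have h2 := one_sub_ne hzk
  have h3 := one_sub_ne (norm_mul_lt_one hwk hq)
  have e : ∀ a : ℂ, a * q ^ (k + 1) * q = a * q ^ (k + 1 + 1) := fun a => by ring
  have e2 : w * q ^ (k + 1) * (z * q ^ (k + 1)) * q = q ^ (2 * (k + 1) + 1) := by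
    linear_combination q ^ (2 * k + 3) * hzw
  rw [e2, e, e] at h
  rw [rfIter, show (1 + rfIter z w q (k + 1)) =
    (1 - z * q ^ (k + 1)) * rogersFine q (w * q ^ (k + 1)) (z * q ^ (k + 1)) from h.symm]
  generalize rogersFine q (w * q ^ (k + 1)) (z * q ^ (k + 1)) = F
  generalize 1 - z * q ^ (k + 1) = u at h2 ⊢
  generalize 1 - w * q ^ (k + 1) = v at h1 ⊢
  field_simp

/-- The terms of Watson's series for the rank generating function. -/
noncomputable def watson (z w q : ℂ) (n : ℕ) : ℂ :=
  q ^ (n ^ 2) * ((qPoch (z * q) q n)⁻¹ * (qPoch (w * q) q n)⁻¹)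

/-- Expansion by largest part followed by `N` steps of the Rogers–Fine equation; the remainder
vanishes as `N → ∞`. -/
lemma rankGF_partial (hz : ‖z‖ = 1) (hw : ‖w‖ = 1) (hzw : z * w = 1) (hq : ‖q‖ < 1) (N : ℕ) :
    rankGF z q = ∑ n ∈ range N, watson z w q n + watson z w q N * (1 + rfIter z w q N) := by
  induction N with
  | zero =>
    have h := rankGF_largest_part hz hq
    have hzi : z⁻¹ = w := inv_eq_of_mul_eq_one_right hzw
    rw [hzi] at h
    have h2 : HasSum (fun l : ℕ => z ^ l * q ^ (l + 1) * (qPoch (w * q) q (l + 1))⁻¹)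
        (rfIter z w q 0) := by
      have hs := summable_rogersFine (b := w * q) (t := z * q) hq
        (norm_mul_lt_one (norm_mul_lt hw hq) hq) (norm_mul_lt hz hq)
      have e : rfIter z w q 0 = q / (1 - w * q) * rogersFine q (w * q) (z * q) := by
        simp [rfIter]
      rw [e]
      refine (hs.hasSum.mul_left (q / (1 - w * q))).congr_fun fun n => ?_
      rw [qPoch_succ', mul_inv]
      ring
    have h3 := h.unique h2
    simp only [range_zero, sum_empty, zero_add, ← h3, watson, qPoch_zero]
    ring
  | succ N ih =>
    rw [ih, sum_range_succ, rfIter_step hz hw hzw hq N]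
    simp only [watson, qPoch_succ, mul_inv, div_eq_mul_inv]
    rw [show (N + 1) ^ 2 = N ^ 2 + (2 * N + 1) by ring, pow_add, pow_succ' q N]
    ring

lemma exists_bound_watson (hz : ‖z‖ = 1) (hw : ‖w‖ = 1) (hq : ‖q‖ < 1) :
    ∃ C : ℝ, 0 < C ∧ ∀ n, ‖watson z w q n‖ ≤ C * ‖q‖ ^ n := by
  obtain ⟨C, hC, h⟩ := exists_bound_qPoch_inv hq (one_sub_mul_pow_ne_zero hq (norm_mul_lt hz hq))
  obtain ⟨D, hD, h'⟩ := exists_bound_qPoch_inv hq (one_sub_mul_pow_ne_zero hq (norm_mul_lt hw hq))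
  refine ⟨C * D, by positivity, fun n => ?_⟩
  rw [watson, norm_mul, norm_mul, norm_pow, mul_comm]
  have : ‖q‖ ^ (n ^ 2) ≤ ‖q‖ ^ n :=
    pow_le_pow_of_le_one (norm_nonneg _) hq.le (Nat.le_self_pow two_ne_zero n)
  gcongr
  · exact h _
  · exact h' _

lemma qPoch_mul_shift (a q : ℂ) (m n : ℕ) :
    qPoch a q (m + n) = qPoch a q m * qPoch (a * q ^ m) q n := by
  rw [qPoch, prod_range_add, qPoch, qPoch]
  congr 1
  exact prod_congr rfl fun k _ => by ring

lemma exists_bound_rfIter (hz : ‖z‖ = 1) (hw : ‖w‖ = 1) (hq : ‖q‖ < 1) :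
    ∃ C : ℝ, ∀ n, ‖1 + rfIter z w q n‖ ≤ C := by
  have hne := one_sub_mul_pow_ne_zero hq (norm_mul_lt hw hq)
  obtain ⟨C, hC, h⟩ := exists_bound_qPoch_inv hq hne
  obtain ⟨D, hD, h'⟩ := exists_bound_qPoch hq (w * q)
  have hq1 : 0 < 1 - ‖q‖ := by linarith
  refine ⟨1 + D * C * (1 - ‖q‖)⁻¹, fun n => ?_⟩
  refine (norm_add_le _ _).trans ?_
  rw [norm_one]
  gcongr
  -- Absorb the prefactor into the series, turning it into a tail of `1/(wq;q)_m`.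
  have e : rfIter z w q n = ∑' m : ℕ, q ^ (2 * n + 1) * ((z * q ^ (n + 1)) ^ m *
      (qPoch (w * q) q n * (qPoch (w * q) q (n + (m + 1)))⁻¹)) := by
    rw [rfIter, rogersFine, ← tsum_mul_left]
    refine tsum_congr fun m => ?_
    have hp := qPoch_ne_zero hne n
    rw [qPoch_mul_shift, qPoch_succ', mul_inv, mul_inv, ← mul_assoc (qPoch (w * q) q n),
      mul_inv_cancel₀ hp, show w * q * q ^ n = w * q ^ (n + 1) by ring]
    ring
  rw [e]
  have hg := (summable_geometric_of_lt_one (norm_nonneg q) hq).mul_left (D * C)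
  rw [← tsum_geometric_of_lt_one (norm_nonneg _) hq, ← tsum_mul_left]
  refine tsum_of_norm_bounded hg.hasSum fun m => ?_
  rw [norm_mul, norm_mul, norm_mul, norm_pow, norm_pow, norm_mul, hz, one_mul, norm_pow]
  have h1 : ‖q‖ ^ (2 * n + 1) ≤ 1 := pow_le_one₀ (norm_nonneg _) hq.le
  have h2 : (‖q‖ ^ (n + 1)) ^ m ≤ ‖q‖ ^ m := by
    gcongr
    exact pow_le_of_le_one (norm_nonneg _) hq.le (by simp)
  calc _ ≤ 1 * (‖q‖ ^ m * (D * C)) := by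
        gcongr
        · exact h' _
        · exact h _
    _ = _ := by ring

/-- Watson's form of the rank generating function. -/
lemma hasSum_watson (hz : ‖z‖ = 1) (hw : ‖w‖ = 1) (hzw : z * w = 1) (hq : ‖q‖ < 1) :
    HasSum (watson z w q) (rankGF z q) := by
  obtain ⟨C, hC, h⟩ := exists_bound_watson hz hw hq
  obtain ⟨D, hD⟩ := exists_bound_rfIter hz hw hq
  have hs : Summable (watson z w q) := Summable.of_norm_bounded
    ((summable_geometric_of_lt_one (norm_nonneg _) hq).mul_left C) h
  have h0 : Tendsto (fun N => watson z w q N * (1 + rfIter z w q N)) atTop (𝓝 0) := by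
    refine squeeze_zero_norm (fun N => ?_) (a := fun N => C * ‖q‖ ^ N * D) ?_
    · rw [norm_mul]
      gcongr
      · exact h N
      · exact hD N
    · have := ((tendsto_pow_atTop_nhds_zero_of_lt_one (norm_nonneg _) hq).const_mul C).mul_const D
      simpa using this
  have h1 := hs.hasSum.tendsto_sum_nat.add h0
  rw [add_zero] at h1
  have h2 : rankGF z q = ∑' n, watson z w q n :=
    tendsto_nhds_unique (tendsto_const_nhds.congr fun N => rankGF_partial hz hw hzw hq N) h1
  rw [h2]
  exact hs.hasSum

/-- The Durfee rectangle identity in the form in which it arises when the partial fractions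
`finite_pf_one` are inserted into Watson's series. -/
lemma tsum_gq_mul_gq (hq : ‖q‖ < 1) (r : ℤ) :
    ∑' n : ℕ, q ^ (n ^ 2) * (gq q (n - r) * gq q (n + r)) = q ^ (r.natAbs ^ 2) * (qPochInf q q)⁻¹ := by
  set k := r.natAbs with hk
  have hs : HasSum (fun n : ℕ => q ^ (n ^ 2) * (gq q (n - r) * gq q (n + r)))
      (q ^ (k ^ 2) * (qPochInf q q)⁻¹) := by
    rw [← hasSum_nat_add_iff' k, sum_eq_zero, sub_zero, ← durfee hq (2 * k)]
    · refine ((summable_durf hq (2 * k)).hasSum.mul_left (q ^ (k ^ 2))).congr_fun fun j => ?_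
      have e : gq q ((j + k : ℕ) - r) * gq q ((j + k : ℕ) + r) =
          (qPoch q q j)⁻¹ * (qPoch q q (j + 2 * k))⁻¹ := by
        rcases le_total 0 r with h | h
        · rw [show ((j + k : ℕ) : ℤ) - r = (j : ℕ) by omega,
            show ((j + k : ℕ) : ℤ) + r = (j + 2 * k : ℕ) by omega, gq_nat, gq_nat]
        · rw [show ((j + k : ℕ) : ℤ) + r = (j : ℕ) by omega,
            show ((j + k : ℕ) : ℤ) - r = (j + 2 * k : ℕ) by omega, gq_nat, gq_nat, mul_comm]
      rw [e, durf]
      ring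
    · intro i hi
      have hi' := mem_range.1 hi
      rcases le_total 0 r with h | h
      · rw [gq_neg q (show (i : ℤ) - r < 0 by omega)]; simp
      · rw [gq_neg q (show (i : ℤ) + r < 0 by omega)]; simp
  exact hs.tsum_eq

lemma one_sub_mul_zpow_ne (hz : ‖z‖ = 1) (hz1 : z ≠ 1) (hq0 : q ≠ 0) (hq : ‖q‖ < 1) (n : ℤ) :
    1 - z * q ^ n ≠ 0 := by
  intro h
  have h1 : z * q ^ n = 1 := (sub_eq_zero.1 h).symm
  have h2 := congrArg norm h1
  rw [norm_mul, hz, one_mul, norm_one, norm_zpow, ← zpow_zero ‖q‖] at h2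
  have h3 := zpow_right_injective₀ (norm_pos_iff.2 hq0) hq.ne h2
  rw [h3, zpow_zero, mul_one] at h1
  exact hz1 h1

/-- The Appell–Lerch series for the rank generating function. -/
lemma rankGF_appell (hz : ‖z‖ = 1) (hz1 : z ≠ 1) (hq0 : q ≠ 0) (hq : ‖q‖ < 1) :
    qPochInf q q * rankGF z q =
      (1 - z) * ∑' r : ℤ, (-1) ^ r * q ^ (tri r + r ^ 2) / (1 - z * q ^ r) := by
  have hz0 : z ≠ 0 := by rintro rfl; simp at hz
  have hw : ‖z⁻¹‖ = 1 := by rw [norm_inv, hz, inv_one]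
  have hne := one_sub_mul_zpow_ne hz hz1 hq0 hq
  have hE := qPochInf_self_ne_zero hq
  obtain ⟨C, hC, hCb⟩ := exists_bound_gq hq
  obtain ⟨D, hD, hDb⟩ := exists_bound_inv hq0 hq hz0
  let f : ℕ → ℤ → ℂ := fun n r =>
    (-1) ^ r * q ^ tri r / (1 - z * q ^ r) * (q ^ (n ^ 2) * (gq q (n - r) * gq q (n + r)))
  have hf : Summable (Function.uncurry f) := by
    have ht := summable_tri_norm (w := 1) hq0 hq one_ne_zero 1 one_ne_zero
    have hg := summable_geometric_of_lt_one (norm_nonneg q) hq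
    have hm := (hg.mul_of_nonneg ht (fun _ => by positivity) (fun _ => norm_nonneg _)).mul_left
      (D * (C * C))
    refine Summable.of_norm_bounded hm ?_
    rintro ⟨n, r⟩
    simp only [Function.uncurry, f, div_eq_mul_inv, norm_mul, norm_zpow, norm_neg, norm_one,
      one_zpow, one_mul, Nat.cast_one, norm_pow]
    have h1 : ‖q‖ ^ (n ^ 2) ≤ ‖q‖ ^ n :=
      pow_le_pow_of_le_one (norm_nonneg _) hq.le (Nat.le_self_pow two_ne_zero n)
    calc _ ≤ ‖q‖ ^ tri r * D * (‖q‖ ^ n * (C * C)) := by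
          gcongr
          · exact hDb r
          · exact hCb _
          · exact hCb _
      _ = _ := by ring
  have h1 : ∀ n, watson z z⁻¹ q n = (1 - z) * ∑' r, f n r := by
    intro n
    have h := finite_pf_one hq0 hq hz0 hne n
    have h0 : 1 - z ≠ 0 := sub_ne_zero.2 hz1.symm
    rw [qPoch_succ', mul_assoc, mul_inv, div_eq_mul_inv q z, mul_comm q z⁻¹] at h
    have h2 : watson z z⁻¹ q n = (1 - z) * (q ^ (n ^ 2) *
        ((1 - z)⁻¹ * (qPoch (z * q) q n * qPoch (z⁻¹ * q) q n)⁻¹)) := by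
      rw [watson, mul_inv]
      field_simp
    rw [h2, h, ← tsum_mul_left]
    congr 1
    refine tsum_congr fun r => ?_
    simp only [f]
    ring
  have h2 := hasSum_watson hz hw (mul_inv_cancel₀ hz0) hq
  rw [← h2.tsum_eq, tsum_congr h1, tsum_mul_left, ← hf.tsum_comm, mul_left_comm, ← tsum_mul_left]
  congr 1
  refine tsum_congr fun r => ?_
  simp only [f]
  rw [tsum_mul_left, tsum_gq_mul_gq hq, zpow_add₀ hq0,
    show r ^ 2 = ((r.natAbs ^ 2 : ℕ) : ℤ) by push_cast; rw [sq_abs], zpow_natCast]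
  field_simp

end Rank

/-! ### Specialisation to a fifth root of unity -/

/-- The terms of `S_j = ∑_{n≠0} (-1)^n q^{n(3n+1)/2 + jn}/(1 - q^{5n})`; the term at `n = 0`
is dropped by the convention `x / 0 = 0`. -/
noncomputable def sTerm (q : ℂ) (j n : ℤ) : ℂ :=
  (-1) ^ n * q ^ (tri n + n ^ 2 + j * n) / (1 - q ^ (5 * n))

/-- The series `S_j`. -/
noncomputable def sSum (q : ℂ) (j : ℤ) : ℂ := ∑' n : ℤ, sTerm q j n

lemma tri_add_sq (n : ℤ) : tri n + n ^ 2 = 3 * tri n - n := by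
  have := two_mul_tri n
  linarith [this, (by ring : n * (n + 1) = n ^ 2 + n)]

lemma zpow_ne_one {q : ℂ} (hq0 : q ≠ 0) (hq : ‖q‖ < 1) {n : ℤ} (hn : n ≠ 0) : q ^ n ≠ 1 := by
  intro h
  have h2 := congrArg norm h
  rw [norm_one, norm_zpow, ← zpow_zero ‖q‖] at h2
  exact hn (zpow_right_injective₀ (norm_pos_iff.2 hq0) hq.ne h2)

lemma summable_sTerm {q : ℂ} (hq0 : q ≠ 0) (hq : ‖q‖ < 1) (j : ℤ) : Summable (sTerm q j) := by
  have hs := summable_appell_coeff hq0 hq (zpow_ne_zero (j - 1) hq0)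
  obtain ⟨C, hC, h⟩ := exists_bound_inv (pow_ne_zero 5 hq0) (norm_pow_lt hq (m := 5) (by norm_num))
    one_ne_zero
  refine Summable.of_norm_bounded (hs.mul_right C) fun n => ?_
  have e : sTerm q j n = (-1) ^ n * q ^ (3 * tri n) * (q ^ (j - 1)) ^ n *
      (1 - 1 * (q ^ 5) ^ n)⁻¹ := by
    have e1 : q ^ (3 * tri n - n + j * n) = q ^ (3 * tri n) * (q ^ (j - 1)) ^ n := by
      rw [← zpow_mul, ← zpow_add₀ hq0]; congr 1; ring
    have e2 : q ^ (5 * n) = (q ^ 5) ^ n := by rw [zpow_mul]; norm_cast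
    rw [sTerm, div_eq_mul_inv, tri_add_sq, one_mul, e1, e2]
    ring
  rw [e, norm_mul]
  gcongr
  exact h n

/-- The symmetry `n ↦ -n`, which leaves only `S_0` and `S_1` to be dissected. -/
lemma sSum_neg {q : ℂ} (hq0 : q ≠ 0) (j : ℤ) : sSum q (4 - j) = -sSum q j := by
  rw [sSum, sSum, ← (Equiv.neg ℤ).tsum_eq, ← tsum_neg]
  refine tsum_congr fun n => ?_
  simp only [Equiv.neg_apply, sTerm]
  rcases eq_or_ne n 0 with h | h
  · subst h; simp
  have e2 : (-1 : ℂ) ^ (-n) = (-1) ^ n := by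
    rw [zpow_neg, ← inv_zpow]; norm_num
  have e3 : q ^ (tri (-n) + (-n) ^ 2 + (4 - j) * -n) =
      q ^ (tri n + n ^ 2 + j * n) * q ^ (5 * -n) := by
    rw [← zpow_add₀ hq0, tri_neg]; congr 1; ring
  have e4 : q ^ (5 * -n) ≠ 0 := zpow_ne_zero _ hq0
  have e5 : q ^ (5 * n) = (q ^ (5 * -n))⁻¹ := by rw [← zpow_neg]; congr 1; ring
  rw [e2, e3, e5]
  generalize q ^ (5 * -n) = u at e4
  rcases eq_or_ne u 1 with h1 | h1
  · subst h1; simp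
  have h2 : 1 - u ≠ 0 := sub_ne_zero.2 h1.symm
  have h3 : 1 - u⁻¹ ≠ 0 := by
    intro h; apply h1; have := (sub_eq_zero.1 h).symm; rwa [inv_eq_one] at this
  have h4 : u - 1 ≠ 0 := sub_ne_zero.2 h1
  field_simp
  ring

lemma norm_root {ξ : ℂ} (h5 : ξ ^ 5 = 1) : ‖ξ‖ = 1 :=
  Complex.norm_eq_one_of_pow_eq_one h5 (by norm_num)

/-- Rationalising the denominators `1 - ξ q^r` at a fifth root of unity. -/
lemma rankGF_sSum {q ξ : ℂ} (hq0 : q ≠ 0) (hq : ‖q‖ < 1) (h5 : ξ ^ 5 = 1) (h1 : ξ ≠ 1) :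
    qPochInf q q * rankGF ξ q = 1 + (2 - (ξ + ξ ^ 4)) * sSum q 0 +
      (2 * (ξ + ξ ^ 4) + 1) * sSum q 1 := by
  have hz := norm_root h5
  rw [rankGF_appell hz h1 hq0 hq]
  have hne := one_sub_mul_zpow_ne hz h1 hq0 hq
  have h1' : 1 - ξ ≠ 0 := sub_ne_zero.2 h1.symm
  have hsum : HasSum (fun r : ℤ => (-1) ^ r * q ^ (tri r + r ^ 2) / (1 - ξ * q ^ r))
      ((1 - ξ)⁻¹ + ∑ j ∈ range 5, ξ ^ j * sSum q j) := by
    refine HasSum.congr_fun ((hasSum_ite_eq (0 : ℤ) (1 - ξ)⁻¹).add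
      (hasSum_sum fun (j : ℕ) (_ : j ∈ range 5) =>
        (summable_sTerm hq0 hq j).hasSum.mul_left (ξ ^ j))) fun r => ?_
    split_ifs with hr
    · subst hr
      simp [sTerm, tri_zero]
    · have hx : 1 - q ^ (5 * r) ≠ 0 := sub_ne_zero.2 (zpow_ne_one hq0 hq (by omega)).symm
      have e : q ^ (5 * r) = (q ^ r) ^ 5 := by rw [mul_comm, zpow_mul]; norm_cast
      rw [e] at hx
      have e2 : ∀ j : ℕ, q ^ (tri r + r ^ 2 + j * r) = q ^ (tri r + r ^ 2) * (q ^ r) ^ j := fun j => by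
        rw [zpow_add₀ hq0, mul_comm (j : ℤ), zpow_mul, zpow_natCast]
      simp only [sTerm, e2, e]
      have := hne r
      generalize q ^ r = x at *
      simp only [sum_range_succ, range_zero, sum_empty]
      field_simp
      linear_combination (x ^ 5 * q ^ (tri r + r ^ 2) * (-1) ^ r) * h5
  have s2 : sSum q 2 = 0 := by
    have := sSum_neg hq0 2
    norm_num at this
    linear_combination this / 2
  have s3 : sSum q 3 = -sSum q 1 := by
    have := sSum_neg hq0 1
    norm_num at this
    exact this
  have s4 : sSum q 4 = -sSum q 0 := by
    have := sSum_neg hq0 0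
    norm_num at this
    exact this
  rw [hsum.tsum_eq, mul_add, mul_inv_cancel₀ h1']
  simp only [sum_range_succ, range_zero, sum_empty, Nat.cast_zero, Nat.cast_one, Nat.cast_ofNat]
  rw [s2, s3, s4]
  have hs := root_sum h5 h1
  linear_combination sSum q 0 * h5 - sSum q 1 * hs

/-- The Appell–Lerch sum `A(Q^k; Q^l)` to the base `Q^5`. -/
noncomputable def apQ (Q : ℂ) (k l : ℤ) : ℂ := appell (Q ^ 5) (Q ^ k) (Q ^ l)

/-- The terms of `S_j` in one residue class modulo `5` form an Appell–Lerch sum to the base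
`q^25`. -/
lemma sTerm_class {q : ℂ} (hq0 : q ≠ 0) (j r : ℤ) :
    ∑' m : ℤ, sTerm q j (5 * m + r) =
      (-1) ^ r * q ^ (tri r + r ^ 2 + j * r) * apQ (q ^ 5) (3 * r - 7 + j) r := by
  rw [apQ, appell, ← tsum_mul_left]
  refine tsum_congr fun m => ?_
  rw [sTerm, mul_div_assoc']
  have hm : ((-1 : ℂ)) ^ (5 * m + r) = (-1) ^ r * (-1) ^ m := by
    rw [zpow_add₀ (by norm_num), zpow_mul, mul_comm]
    norm_num
  have e1 : 1 - q ^ (5 * (5 * m + r)) = 1 - (q ^ 5) ^ r * ((q ^ 5) ^ 5) ^ m := by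
    congr 1
    simp only [← zpow_natCast, ← zpow_mul, ← zpow_add₀ hq0]
    congr 1
    push_cast
    ring
  rw [hm, e1]
  congr 1
  have e2 : q ^ (tri (5 * m + r) + (5 * m + r) ^ 2 + j * (5 * m + r)) =
      q ^ (tri r + r ^ 2 + j * r) *
        (((q ^ 5) ^ 5) ^ (3 * tri m) * ((q ^ 5) ^ (3 * r - 7 + j)) ^ m) := by
    simp only [← zpow_natCast, ← zpow_mul, ← zpow_add₀ hq0]
    congr 1
    have h1 := two_mul_tri (5 * m + r)
    have h2 := two_mul_tri m
    have h3 := two_mul_tri r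
    push_cast
    linarith [h1, h2, h3, (by ring : (5 * m + r) * (5 * m + r + 1) =
      25 * (m * (m + 1)) - 20 * m + 10 * m * r + r * (r + 1))]
  rw [e2]
  ring

/-- The 5-dissection of `S_j` into Appell–Lerch sums. -/
lemma sSum_split {q : ℂ} (hq0 : q ≠ 0) (hq : ‖q‖ < 1) (j : ℤ) :
    sSum q j = q ^ (0 : ℤ) * apQ (q ^ 5) (j - 7) 0 - q ^ (2 + j) * apQ (q ^ 5) (j - 4) 1 +
      q ^ (7 + 2 * j) * apQ (q ^ 5) (j - 1) 2 - q ^ (15 + 3 * j) * apQ (q ^ 5) (j + 2) 3 -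
      q ^ (1 - j) * apQ (q ^ 5) (j - 10) (-1) := by
  have h := sTerm_class hq0 j
  have e4 : ∑' m : ℤ, sTerm q j (5 * m + (4 : ℕ)) = ∑' m : ℤ, sTerm q j (5 * m + (-1)) := by
    rw [← (Equiv.addRight (-1 : ℤ)).tsum_eq]
    refine tsum_congr fun m => ?_
    simp only [Equiv.coe_addRight]
    congr 1
    push_cast
    ring
  have t0 : tri 0 = 0 := by decide
  have t1 : tri 1 = 1 := by decide
  have t2 : tri 2 = 3 := by decide
  have t3 : tri 3 = 6 := by decide
  have t4 : tri (-1) = 0 := by decide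
  rw [sSum, tsum_split5 (summable_sTerm hq0 hq j), Fin.sum_univ_five]
  rw [show (((4 : Fin 5) : ℕ) : ℤ) = (4 : ℕ) from rfl, e4]
  rw [show (((0 : Fin 5) : ℕ) : ℤ) = 0 from rfl, show (((1 : Fin 5) : ℕ) : ℤ) = 1 from rfl,
    show (((2 : Fin 5) : ℕ) : ℤ) = 2 from rfl, show (((3 : Fin 5) : ℕ) : ℤ) = 3 from rfl,
    h, h, h, h, h, t0, t1, t2, t3, t4]
  norm_num
  rw [show (-7 + j) = j - 7 by ring, show (-4 + j) = j - 4 by ring, show (-1 + j) = j - 1 by ring,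
    show (2 + j) = j + 2 by ring, show (-10 + j) = j - 10 by ring, show 7 + j * 2 = 7 + 2 * j by ring,
    show 15 + j * 3 = 15 + 3 * j by ring, show 1 + -j = 1 - j by ring]
  ring

section Q

variable {Q : ℂ}

lemma apQ_inv (hQ0 : Q ≠ 0) (k l : ℤ) : apQ Q k l = -Q ^ (-l) * apQ Q (-10 - k) (-l) := by
  rw [apQ, appell_inv (pow_ne_zero 5 hQ0) (zpow_ne_zero l hQ0), apQ, ← zpow_neg, ← zpow_neg]
  congr 2
  simp only [← zpow_natCast, ← zpow_mul, ← zpow_add₀ hQ0]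
  congr 1

lemma apQ_shift (hQ0 : Q ≠ 0) (k l : ℤ) :
    apQ Q k l = -Q ^ (15 + k) * apQ Q (15 + k) (l + 5) := by
  rw [apQ, appell_shift (pow_ne_zero 5 hQ0) (zpow_ne_zero k hQ0), apQ]
  have e : (Q ^ 5) ^ 3 * Q ^ k = Q ^ (15 + k) := by
    simp only [← zpow_natCast, ← zpow_mul, ← zpow_add₀ hQ0]
    congr 1
  have e2 : Q ^ l * Q ^ 5 = Q ^ (l + 5) := by
    simp only [← zpow_natCast, ← zpow_add₀ hQ0]
    congr 1
  rw [neg_mul, e, e2]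

lemma ne_mod_five (hQ0 : Q ≠ 0) (hQ1 : ‖Q‖ < 1) {k : ℤ} (hk : k % 5 ≠ 0) {x : ℂ} (hx : x = Q ^ k)
    (n : ℤ) : 1 - x * (Q ^ 5) ^ n ≠ 0 := by
  have e : Q ^ k * (Q ^ 5) ^ n = Q ^ (k + 5 * n) := by
    simp only [← zpow_natCast, ← zpow_mul, ← zpow_add₀ hQ0]
    congr 1
  rw [hx, e]
  exact sub_ne_zero.2 (zpow_ne_one hQ0 hQ1 (by omega)).symm

lemma th_ne_mod_five (hQ0 : Q ≠ 0) (hQ1 : ‖Q‖ < 1) {k : ℤ} (hk : k % 5 ≠ 0) {x : ℂ}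
    (hx : x = Q ^ k) : th x (Q ^ 5) ≠ 0 :=
  th_ne_zero (pow_ne_zero _ hQ0) (norm_pow_lt hQ1 (by norm_num))
    (by rw [hx]; exact zpow_ne_zero _ hQ0) (ne_mod_five hQ0 hQ1 hk hx)

lemma th_three (hQ0 : Q ≠ 0) : th (Q ^ 3) (Q ^ 5) = th (Q ^ 2) (Q ^ 5) := by
  rw [← th_inv_mul (pow_ne_zero 5 hQ0) (x := Q ^ 2), show Q ^ 5 / Q ^ 2 = Q ^ 3 by field_simp]

lemma th_four (hQ0 : Q ≠ 0) : th (Q ^ 4) (Q ^ 5) = th Q (Q ^ 5) := by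
  rw [← th_inv_mul (pow_ne_zero 5 hQ0) (x := Q), show Q ^ 5 / Q = Q ^ 4 by field_simp]

lemma lam_three (hQ0 : Q ≠ 0) (hQ1 : ‖Q‖ < 1) :
    lam (Q ^ 3) (Q ^ 5) = -lam (Q ^ 2) (Q ^ 5) := by
  rw [← lam_inv_mul (pow_ne_zero 5 hQ0) (norm_pow_lt hQ1 (by norm_num)) (pow_ne_zero 2 hQ0),
    show Q ^ 5 / Q ^ 2 = Q ^ 3 by field_simp]

lemma lam_four (hQ0 : Q ≠ 0) (hQ1 : ‖Q‖ < 1) :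
    lam (Q ^ 4) (Q ^ 5) = -lam Q (Q ^ 5) := by
  rw [← lam_inv_mul (pow_ne_zero 5 hQ0) (norm_pow_lt hQ1 (by norm_num)) hQ0,
    show Q ^ 5 / Q = Q ^ 4 by field_simp]

/-- `appell_three` with `s = Q^2`, `z = Q`. -/
lemma apQ_rel1 (hQ0 : Q ≠ 0) (hQ1 : ‖Q‖ < 1) :
    -(Q * qPochInf (Q ^ 5) (Q ^ 5) ^ 2 / th Q (Q ^ 5)) =
      -Q ^ 2 * (th Q (Q ^ 5) / th (Q ^ 2) (Q ^ 5)) * apQ Q 0 1 + Q ^ 6 * apQ Q 6 3 +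
        apQ Q (-6) (-1) := by
  have hy := pow_ne_zero 5 hQ0
  have hy1 := norm_pow_lt hQ1 (m := 5) (by norm_num)
  have t1 := th_ne_mod_five hQ0 hQ1 (k := 1) (by norm_num) (zpow_one Q).symm
  have t2 := th_ne_mod_five hQ0 hQ1 (k := 2) (by norm_num) (x := Q ^ 2) (by norm_cast)
  have ei : Q * (Q ^ 2)⁻¹ = Q⁻¹ := by field_simp
  have h := appell_three (y := Q ^ 5) (s := Q ^ 2) (z := Q) hy hy1 (pow_ne_zero 2 hQ0) hQ0
    (ne_mod_five hQ0 hQ1 (k := 2) (by norm_num) (by norm_cast))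
    (ne_mod_five hQ0 hQ1 (k := 4) (by norm_num) (by rw [← pow_mul]; norm_cast))
    (ne_mod_five hQ0 hQ1 (k := 1) (by norm_num) (zpow_one Q).symm)
    (ne_mod_five hQ0 hQ1 (k := 3) (by norm_num) (by rw [← pow_succ']; norm_cast))
    (ne_mod_five hQ0 hQ1 (k := -1) (by norm_num) (by rw [ei, zpow_neg_one]))
  rw [ei, th_inv hy hy1 hQ0, ← pow_succ', ← pow_mul, ← pow_mul, ← inv_pow, ← pow_mul,
    th_three hQ0, th_four hQ0] at h
  have a1 : apQ Q 0 1 = appell (Q ^ 5) 1 Q := by rw [apQ, zpow_zero, zpow_one]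
  have a2 : apQ Q 6 3 = appell (Q ^ 5) (Q ^ 6) (Q ^ 3) := rfl
  have a3 : apQ Q (-6) (-1) = appell (Q ^ 5) (Q⁻¹ ^ 6) Q⁻¹ := by
    rw [apQ, zpow_neg_one, inv_pow]; rfl
  rw [a1, a2, a3]
  norm_num at h
  rw [← inv_pow] at h
  rw [mul_div_assoc', neg_mul, ← h]
  field_simp

/-- `appell_three` with `s = Q`, `z = Q^2`. -/
lemma apQ_rel2 (hQ0 : Q ≠ 0) (hQ1 : ‖Q‖ < 1) :
    qPochInf (Q ^ 5) (Q ^ 5) ^ 2 / th (Q ^ 2) (Q ^ 5) =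
      -Q * (th (Q ^ 2) (Q ^ 5) / th Q (Q ^ 5)) * apQ Q 0 2 + Q ^ 3 * apQ Q 3 3 +
        apQ Q (-3) 1 := by
  have hy := pow_ne_zero 5 hQ0
  have hy1 := norm_pow_lt hQ1 (m := 5) (by norm_num)
  have t1 := th_ne_mod_five hQ0 hQ1 (k := 1) (by norm_num) (zpow_one Q).symm
  have t2 := th_ne_mod_five hQ0 hQ1 (k := 2) (by norm_num) (x := Q ^ 2) (by norm_cast)
  have ei : Q ^ 2 * Q⁻¹ = Q := by field_simp
  have h := appell_three (y := Q ^ 5) (s := Q) (z := Q ^ 2) hy hy1 hQ0 (pow_ne_zero 2 hQ0)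
    (ne_mod_five hQ0 hQ1 (k := 1) (by norm_num) (zpow_one Q).symm)
    (ne_mod_five hQ0 hQ1 (k := 2) (by norm_num) (by norm_cast))
    (ne_mod_five hQ0 hQ1 (k := 2) (by norm_num) (by norm_cast))
    (ne_mod_five hQ0 hQ1 (k := 3) (by norm_num) (by rw [← pow_succ]; norm_cast))
    (ne_mod_five hQ0 hQ1 (k := 1) (by norm_num) (by rw [ei, zpow_one]))
  rw [ei, ← pow_succ, th_three hQ0] at h
  have a1 : apQ Q 0 2 = appell (Q ^ 5) 1 (Q ^ 2) := by rw [apQ, zpow_zero]; rfl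
  have a2 : apQ Q 3 3 = appell (Q ^ 5) (Q ^ 3) (Q ^ 3) := rfl
  have a3 : apQ Q (-3) 1 = appell (Q ^ 5) (Q⁻¹ ^ 3) Q := by
    rw [apQ, zpow_one, inv_pow]; rfl
  rw [a1, a2, a3]
  norm_num at h
  rw [← inv_pow] at h
  rw [mul_div_assoc', neg_mul, ← h]
  field_simp

/-- `appell_confluent` with `s = Q`. -/
lemma apQ_rel3 (hQ0 : Q ≠ 0) (hQ1 : ‖Q‖ < 1) :
    lam Q (Q ^ 5) + lam (Q ^ 2) (Q ^ 5) =
      -Q * (th (Q ^ 2) (Q ^ 5) / th Q (Q ^ 5)) * apQ Q 0 1 + Q ^ 3 * apQ Q 3 2 +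
        apQ Q (-3) 0 := by
  have hy := pow_ne_zero 5 hQ0
  have hy1 := norm_pow_lt hQ1 (m := 5) (by norm_num)
  have h := appell_confluent (y := Q ^ 5) (s := Q) hy hy1 hQ0
    (ne_mod_five hQ0 hQ1 (k := 1) (by norm_num) (zpow_one Q).symm)
    (ne_mod_five hQ0 hQ1 (k := 2) (by norm_num) (by norm_cast))
  have a1 : apQ Q 0 1 = appell (Q ^ 5) 1 Q := by rw [apQ, zpow_zero, zpow_one]
  have a2 : apQ Q 3 2 = appell (Q ^ 5) (Q ^ 3) (Q ^ 2) := rfl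
  have a3 : apQ Q (-3) 0 = appell (Q ^ 5) (Q⁻¹ ^ 3) 1 := by
    rw [apQ, zpow_zero, inv_pow]; rfl
  rw [a1, a2, a3, mul_div_assoc']
  exact h

/-- `appell_confluent` with `s = Q^2`. -/
lemma apQ_rel4 (hQ0 : Q ≠ 0) (hQ1 : ‖Q‖ < 1) :
    lam (Q ^ 2) (Q ^ 5) - lam Q (Q ^ 5) =
      -Q ^ 2 * (th Q (Q ^ 5) / th (Q ^ 2) (Q ^ 5)) * apQ Q 0 2 + Q ^ 6 * apQ Q 6 4 +
        apQ Q (-6) 0 := by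
  have hy := pow_ne_zero 5 hQ0
  have hy1 := norm_pow_lt hQ1 (m := 5) (by norm_num)
  have h := appell_confluent (y := Q ^ 5) (s := Q ^ 2) hy hy1 (pow_ne_zero 2 hQ0)
    (ne_mod_five hQ0 hQ1 (k := 2) (by norm_num) (by norm_cast))
    (ne_mod_five hQ0 hQ1 (k := 4) (by norm_num) (by rw [← pow_mul]; norm_cast))
  rw [← pow_mul, ← pow_mul, ← inv_pow, ← pow_mul] at h
  norm_num at h
  rw [lam_four hQ0 hQ1, th_four hQ0] at h
  have a1 : apQ Q 0 2 = appell (Q ^ 5) 1 (Q ^ 2) := by rw [apQ, zpow_zero]; rfl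
  have a2 : apQ Q 6 4 = appell (Q ^ 5) (Q ^ 6) (Q ^ 4) := rfl
  have a3 : apQ Q (-6) 0 = appell (Q ^ 5) ((Q ^ 6)⁻¹) 1 := by
    rw [apQ, zpow_zero]; rfl
  rw [a1, a2, a3, mul_div_assoc', sub_eq_add_neg, neg_mul]
  exact h

/-- `three_lam` with `x = Q`. -/
lemma lam_rel1 (hQ0 : Q ≠ 0) (hQ1 : ‖Q‖ < 1) :
    (1 - 3 * lam Q (Q ^ 5) - lam (Q ^ 2) (Q ^ 5)) * th Q (Q ^ 5) ^ 3 =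
      qPochInf (Q ^ 5) (Q ^ 5) ^ 2 * th (Q ^ 2) (Q ^ 5) ^ 2 := by
  have hy := pow_ne_zero 5 hQ0
  have hy1 := norm_pow_lt hQ1 (m := 5) (by norm_num)
  have t1 := th_ne_mod_five hQ0 hQ1 (k := 1) (by norm_num) (zpow_one Q).symm
  have t2 := th_ne_mod_five hQ0 hQ1 (k := 2) (by norm_num) (x := Q ^ 2) (by norm_cast)
  have h := three_lam hy hy1 hQ0 t1 (by rw [th_three hQ0]; exact t2) t2
  rw [th_three hQ0, lam_three hQ0 hQ1] at h
  refine mul_right_cancel₀ t2 ?_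
  linear_combination -h

/-- `three_lam` with `x = Q^2`. -/
lemma lam_rel2 (hQ0 : Q ≠ 0) (hQ1 : ‖Q‖ < 1) :
    (3 * lam (Q ^ 2) (Q ^ 5) - lam Q (Q ^ 5)) * th (Q ^ 2) (Q ^ 5) ^ 3 =
      Q * qPochInf (Q ^ 5) (Q ^ 5) ^ 2 * th Q (Q ^ 5) ^ 2 := by
  have hy := pow_ne_zero 5 hQ0
  have hy1 := norm_pow_lt hQ1 (m := 5) (by norm_num)
  have t1 := th_ne_mod_five hQ0 hQ1 (k := 1) (by norm_num) (zpow_one Q).symm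
  have t2 := th_ne_mod_five hQ0 hQ1 (k := 2) (by norm_num) (x := Q ^ 2) (by norm_cast)
  have e6 : (Q ^ 2) ^ 3 = Q * Q ^ 5 := by ring
  have h6 : th ((Q ^ 2) ^ 3) (Q ^ 5) = -th Q (Q ^ 5) / Q := by rw [e6, th_mul hy hy1 hQ0]
  have h := three_lam hy hy1 (pow_ne_zero 2 hQ0) t2
    (by rw [h6]; exact div_ne_zero (neg_ne_zero.2 t1) hQ0)
    (by rw [← pow_mul, th_four hQ0]; exact t1)
  rw [h6, e6, lam_mul hy hy1 hQ0 t1, ← pow_mul, th_four hQ0] at h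
  field_simp at h
  linear_combination -h

end Q

/-! ### Five-dissection of the rank generating function -/

/-- The part of `R(ξ;q)` with exponents `0` modulo `5`, as a function of `Q = q^5` and
`α = ξ + ξ⁻¹`. -/
noncomputable def rd0 (α Q : ℂ) : ℂ :=
  qPochInf (Q ^ 5) (Q ^ 5) * th (Q ^ 2) (Q ^ 5) / th Q (Q ^ 5) ^ 2 -
    (2 - α) * Q / qPochInf (Q ^ 5) (Q ^ 5) * apQ Q 0 1

/-- The part of `R(ξ;q)` with exponents `1` modulo `5`, divided by `q`. -/
noncomputable def rd1 (Q : ℂ) : ℂ := qPochInf (Q ^ 5) (Q ^ 5) / th Q (Q ^ 5)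

/-- The part of `R(ξ;q)` with exponents `2` modulo `5`, divided by `q^2`. -/
noncomputable def rd2 (α Q : ℂ) : ℂ := α * qPochInf (Q ^ 5) (Q ^ 5) / th (Q ^ 2) (Q ^ 5)

/-- The part of `R(ξ;q)` with exponents `3` modulo `5`, divided by `q^3`. -/
noncomputable def rd3 (α Q : ℂ) : ℂ :=
  -((2 * α + 1) * Q / qPochInf (Q ^ 5) (Q ^ 5) * apQ Q 0 2) -
    α * qPochInf (Q ^ 5) (Q ^ 5) * th Q (Q ^ 5) / th (Q ^ 2) (Q ^ 5) ^ 2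

/-- `S_0` in terms of theta functions and the single Appell–Lerch sum `A(1; Q)`; the bracket in
front of the latter is the one from `euler_dissection`, up to sign. -/
lemma sSum_zero {q Q : ℂ} (hq0 : q ≠ 0) (hq : ‖q‖ < 1) (hQ : Q = q ^ 5) :
    sSum q 0 = -(lam Q (Q ^ 5) + lam (Q ^ 2) (Q ^ 5)) -
      q ^ 2 * qPochInf (Q ^ 5) (Q ^ 5) ^ 2 / th Q (Q ^ 5) +
      (q - th (Q ^ 2) (Q ^ 5) / th Q (Q ^ 5) + q ^ 2 * (th Q (Q ^ 5) / th (Q ^ 2) (Q ^ 5))) *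
        (Q * apQ Q 0 1) := by
  have hQ0 : Q ≠ 0 := hQ ▸ pow_ne_zero 5 hq0
  have hQ1 : ‖Q‖ < 1 := hQ ▸ norm_pow_lt hq (by norm_num)
  have h := sSum_split hq0 hq 0
  have r1 := apQ_rel1 hQ0 hQ1
  have r3 := apQ_rel3 hQ0 hQ1
  have c1 : apQ Q (-7) 0 = -apQ Q (-3) 0 := by
    rw [apQ_inv hQ0]; norm_num
  have c2 : apQ Q (-6) (-1) = -Q * apQ Q (-4) 1 := by
    rw [apQ_inv hQ0]; norm_num
  have c3 : apQ Q (-1) 2 = Q ^ 4 * apQ Q 6 3 := by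
    rw [apQ_inv hQ0, apQ_shift hQ0]; norm_num
    rw [← mul_assoc]; congr 1
    field_simp
  have c4 : apQ Q 2 3 = apQ Q 3 2 := by
    rw [apQ_inv hQ0, apQ_shift hQ0]; norm_num
    field_simp
  have c5 : apQ Q (-10) (-1) = -Q * apQ Q 0 1 := by
    rw [apQ_inv hQ0]; norm_num
  norm_num at h
  rw [← hQ, c1, c3, c4, c5] at h
  have e7 : q ^ 7 = q ^ 2 * Q := by rw [hQ]; ring
  have e15 : q ^ 15 = Q ^ 3 := by rw [hQ]; ring
  have r1' : qPochInf (Q ^ 5) (Q ^ 5) ^ 2 / th Q (Q ^ 5) =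
      Q * (th Q (Q ^ 5) / th (Q ^ 2) (Q ^ 5)) * apQ Q 0 1 - Q ^ 5 * apQ Q 6 3 + apQ Q (-4) 1 := by
    refine mul_left_cancel₀ hQ0 ?_
    linear_combination -r1 - c2
  linear_combination h + r3 + q ^ 2 * r1' + Q ^ 4 * apQ Q 6 3 * e7 - apQ Q 3 2 * e15

/-- `S_1` in terms of theta functions and the single Appell–Lerch sum `A(1; Q^2)`, with the same
bracket as in `sSum_zero`. -/
lemma sSum_one {q Q : ℂ} (hq0 : q ≠ 0) (hq : ‖q‖ < 1) (hQ : Q = q ^ 5) :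
    sSum q 1 = lam (Q ^ 2) (Q ^ 5) - lam Q (Q ^ 5) -
      q ^ 3 * qPochInf (Q ^ 5) (Q ^ 5) ^ 2 / th (Q ^ 2) (Q ^ 5) +
      (q ^ 2 * (th Q (Q ^ 5) / th (Q ^ 2) (Q ^ 5)) - th (Q ^ 2) (Q ^ 5) / th Q (Q ^ 5) + q) *
        (q ^ 8 * apQ Q 0 2) := by
  have hQ0 : Q ≠ 0 := hQ ▸ pow_ne_zero 5 hq0
  have hQ1 : ‖Q‖ < 1 := hQ ▸ norm_pow_lt hq (by norm_num)
  have h := sSum_split hq0 hq 1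
  have r2 := apQ_rel2 hQ0 hQ1
  have r4 := apQ_rel4 hQ0 hQ1
  have c1 : apQ Q (-9) (-1) = -Q ^ 6 * apQ Q 6 4 := by
    rw [apQ_shift hQ0]; norm_num
  norm_num at h
  rw [← hQ, c1] at h
  have e8 : q ^ 8 = q ^ 3 * Q := by rw [hQ]; ring
  have e10 : q ^ 10 = Q ^ 2 := by rw [hQ]; ring
  have e18 : q ^ 18 = q ^ 3 * Q ^ 3 := by rw [hQ]; ring
  linear_combination h - r4 + q ^ 3 * r2 - apQ Q 3 3 * e18 +
    th (Q ^ 2) (Q ^ 5) / th Q (Q ^ 5) * apQ Q 0 2 * e8 -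
    th Q (Q ^ 5) / th (Q ^ 2) (Q ^ 5) * apQ Q 0 2 * e10

/-- The `5`-dissection of `R(ξ;q)` at a primitive fifth root of unity. -/
lemma rank_dissection {q ξ : ℂ} (hq0 : q ≠ 0) (hq : ‖q‖ < 1) (h5 : ξ ^ 5 = 1) (h1 : ξ ≠ 1) :
    rankGF ξ q = rd0 (ξ + ξ ^ 4) (q ^ 5) + q * rd1 (q ^ 5) + q ^ 2 * rd2 (ξ + ξ ^ 4) (q ^ 5) +
      q ^ 3 * rd3 (ξ + ξ ^ 4) (q ^ 5) := by
  obtain ⟨Q, hQ⟩ : ∃ Q, Q = q ^ 5 := ⟨_, rfl⟩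
  have hQ0 : Q ≠ 0 := hQ ▸ pow_ne_zero 5 hq0
  have hQ1 : ‖Q‖ < 1 := hQ ▸ norm_pow_lt hq (by norm_num)
  have hE : qPochInf q q ≠ 0 := qPochInf_self_ne_zero hq
  have hJ : qPochInf (Q ^ 5) (Q ^ 5) ≠ 0 := qPochInf_self_ne_zero (norm_pow_lt hQ1 (by norm_num))
  have t1 := th_ne_mod_five hQ0 hQ1 (k := 1) (by norm_num) (zpow_one Q).symm
  have t2 := th_ne_mod_five hQ0 hQ1 (k := 2) (by norm_num) (x := Q ^ 2) (by norm_cast)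
  have h := rankGF_sSum hq0 hq h5 h1
  have ed := euler_dissection hq0 hq h5 h1
  have l1 := lam_rel1 hQ0 hQ1
  have l2 := lam_rel2 hQ0 hQ1
  have e8 : q ^ 8 = q ^ 3 * Q := by rw [hQ]; ring
  rw [sSum_zero hq0 hq hQ, sSum_one hq0 hq hQ, e8] at h
  rw [← hQ] at ed ⊢
  refine mul_left_cancel₀ hE ?_
  rw [h]
  generalize ξ + ξ ^ 4 = α
  rw [rd0, rd1, rd2, rd3]
  generalize th Q (Q ^ 5) = a at *
  generalize th (Q ^ 2) (Q ^ 5) = b at *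
  generalize qPochInf (Q ^ 5) (Q ^ 5) = J at *
  have e : qPochInf q q = J * (b ^ 2 - q * a * b - q ^ 2 * a ^ 2) / (a * b) := by
    rw [eq_div_iff (mul_ne_zero t1 t2), ← ed]; ring
  have e1 : 1 - 3 * lam Q (Q ^ 5) - lam (Q ^ 2) (Q ^ 5) = J ^ 2 * b ^ 2 / a ^ 3 := by
    rw [eq_div_iff (pow_ne_zero 3 t1), l1]
  have e2 : 3 * lam (Q ^ 2) (Q ^ 5) - lam Q (Q ^ 5) = q ^ 5 * J ^ 2 * a ^ 2 / b ^ 3 := by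
    rw [eq_div_iff (pow_ne_zero 3 t2), l2, hQ]
  have key : J ^ 2 * b ^ 2 / a ^ 3 + α * (q ^ 5 * J ^ 2 * a ^ 2 / b ^ 3) +
      (2 - α) * (-(q ^ 2 * J ^ 2 / a) + (q - b / a + q ^ 2 * (a / b)) * (Q * apQ Q 0 1)) +
      (2 * α + 1) * (-(q ^ 3 * J ^ 2 / b) +
        (q ^ 2 * (a / b) - b / a + q) * (q ^ 3 * Q * apQ Q 0 2)) =
      J * (b ^ 2 - q * a * b - q ^ 2 * a ^ 2) / (a * b) *
        (J * b / a ^ 2 - (2 - α) * Q / J * apQ Q 0 1 + q * (J / a) + q ^ 2 * (α * J / b) +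
          q ^ 3 * (-((2 * α + 1) * Q / J * apQ Q 0 2) - α * J * a / b ^ 2)) := by
    field_simp
    ring
  rw [e, ← key]
  linear_combination e1 + α * e2

/-! ### Extraction of a residue class -/

lemma qPochInf_pow_zero {a : ℕ} (ha : a ≠ 0) (b : ℕ) : qPochInf (0 ^ a) (0 ^ b) = 1 := by
  simp [qPochInf, ha]

/-- `(x^a;x^b)_∞` is continuous at `x = 0`. -/
lemma tendsto_qPochInf_pow {a b : ℕ} (ha : a ≠ 0) (hb : b ≠ 0) :
    Tendsto (fun x : ℂ => qPochInf (x ^ a) (x ^ b)) (𝓝 0) (𝓝 1) := by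
  have hbound : ∀ x : ℂ, ‖x‖ < 1 / 2 → ‖qPochInf (x ^ a) (x ^ b) - 1‖ ≤ Real.exp (2 * ‖x‖) - 1 := by
    intro x hx
    have hx1 : ‖x‖ < 1 := by linarith
    refine le_of_tendsto ((tendsto_qPoch (norm_pow_lt hx1 hb) (x ^ a)).sub_const 1).norm
      (Eventually.of_forall fun n => ?_)
    have h := (range n).norm_prod_one_add_sub_one_le fun k => -(x ^ a * (x ^ b) ^ k)
    simp only [← sub_eq_add_neg] at h
    refine h.trans (sub_le_sub_right (Real.exp_le_exp.2 ?_) 1)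
    have h1 : ∀ k ∈ range n, ‖-(x ^ a * (x ^ b) ^ k)‖ ≤ ‖x‖ * (1 / 2) ^ k := by
      intro k _
      rw [norm_neg, norm_mul, norm_pow, norm_pow, norm_pow]
      have i1 : ‖x‖ ^ a ≤ ‖x‖ := pow_le_of_le_one (norm_nonneg _) hx1.le ha
      have i2 : ‖x‖ ^ b ≤ 1 / 2 := (pow_le_of_le_one (norm_nonneg _) hx1.le hb).trans hx.le
      gcongr
    refine (sum_le_sum h1).trans ?_
    rw [← mul_sum, mul_comm 2]
    gcongr
    have := sum_le_hasSum (range n) (fun k _ => by positivity)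
      (hasSum_geometric_of_lt_one (r := (1 / 2 : ℝ)) (by norm_num) (by norm_num))
    refine this.trans (by norm_num)
  rw [tendsto_iff_norm_sub_tendsto_zero]
  refine squeeze_zero' (Eventually.of_forall fun _ => norm_nonneg _)
    (g := fun x : ℂ => Real.exp (2 * ‖x‖) - 1) ?_ ?_
  · filter_upwards [Metric.ball_mem_nhds (0 : ℂ) (show (0 : ℝ) < 1 / 2 by norm_num)] with x hx
    exact hbound x (by simpa using hx)
  · have : Continuous fun x : ℂ => Real.exp (2 * ‖x‖) - 1 := by fun_prop
    simpa using this.tendsto 0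

lemma zeta5_pow : zeta5 ^ 5 = 1 := by
  rw [zeta5, ← Complex.exp_nat_mul]
  rw [show ((5 : ℕ) : ℂ) * (2 * Real.pi * Complex.I / 5) = 2 * Real.pi * Complex.I by
    push_cast; ring, Complex.exp_two_pi_mul_I]

lemma zeta5_ne_one : zeta5 ≠ 1 :=
  (Complex.isPrimitiveRoot_exp 5 (by norm_num)).ne_one (by norm_num)

/-- If a power series in `s` equals `∑_{k<5} g_k(s^5) s^k`, then its coefficients with index `4`
modulo `5` are those of `g_4`. -/
lemma class_four {a : ℕ → ℂ} {g : ℕ → ℂ → ℂ} (hs : ∀ s : ℂ, ‖s‖ < 1 → Summable fun n => a n * s ^ n)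
    (h : ∀ s : ℂ, s ≠ 0 → ‖s‖ < 1 → ∑' n, a n * s ^ n = ∑ k ∈ range 5, s ^ k * g k (s ^ 5))
    {x : ℂ} (hx0 : x ≠ 0) (hx : ‖x‖ < 1) : ∑' n, a (5 * n + 4) * x ^ n = g 4 x := by
  obtain ⟨s, hsx⟩ := IsAlgClosed.exists_pow_nat_eq x (n := 5) (by norm_num)
  have hs0 : s ≠ 0 := by rintro rfl; apply hx0; rw [← hsx]; norm_num
  have h5 := zeta5_pow
  have hz := norm_root h5
  have hs1 : ‖s‖ < 1 := by
    rwa [← hsx, norm_pow, pow_lt_one_iff_of_nonneg (norm_nonneg _) (by norm_num)] at hx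
  have key : ∀ t : ℂ, t ^ 5 = x → ‖t‖ < 1 →
      ∑ k ∈ range 5, t ^ k * (∑' n, a (5 * n + k) * x ^ n - g k x) = 0 := by
    intro t htx ht
    have ht0 : t ≠ 0 := by rintro rfl; apply hx0; rw [← htx]; norm_num
    have e := h t ht0 ht
    rw [htx] at e
    have e2 : ∑' n, a n * t ^ n = ∑ k ∈ range 5, t ^ k * ∑' n, a (5 * n + k) * x ^ n := by
      rw [Nat.sumByResidueClasses (hs t ht) 5]
      refine (Fin.sum_univ_eq_sum_range (fun k => ∑' m, a (k + 5 * m) * t ^ (k + 5 * m)) 5).trans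
        (sum_congr rfl fun k _ => ?_)
      rw [← tsum_mul_left]
      refine tsum_congr fun m => ?_
      rw [pow_add, pow_mul, htx, add_comm k]
      ring
    simp only [mul_sub, sum_sub_distrib]
    rw [← e2, ← e, sub_self]
  have hk : ∀ i : ℕ, ∑ k ∈ range 5, (s * zeta5 ^ i) ^ k *
      (∑' n, a (5 * n + k) * x ^ n - g k x) = 0 := fun i => by
    refine key _ ?_ ?_
    · rw [mul_pow, ← pow_mul, mul_comm i, pow_mul, h5, one_pow, mul_one, hsx]
    · rw [norm_mul, norm_pow, hz, one_pow, mul_one]; exact hs1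
  generalize hd : (fun k : ℕ => ∑' n, a (5 * n + k) * x ^ n - g k x) = d
  have hd' : ∀ k : ℕ, ∑' n, a (5 * n + k) * x ^ n - g k x = d k := fun k => congrFun hd k
  simp only [hd', sum_range_succ, range_zero, sum_empty, zero_add] at hk
  have k0 := hk 0
  have k1 := hk 1
  have k2 := hk 2
  have k3 := hk 3
  have k4 := hk 4
  have d4 : s ^ 4 * (5 * d 4) = 0 := by
    have hr := root_sum h5 zeta5_ne_one
    generalize zeta5 = z at *
    have r2 : 1 + z ^ 2 + z ^ 4 + z ^ 6 + z ^ 8 = 0 := by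
      linear_combination hr + (z + z ^ 3) * h5
    have r3 : 1 + z ^ 3 + z ^ 6 + z ^ 9 + z ^ 12 = 0 := by
      linear_combination hr + (z + z ^ 4 + z ^ 2 * (z ^ 5 + 1)) * h5
    have r4 : 1 + z ^ 4 + z ^ 8 + z ^ 12 + z ^ 16 = 0 := by
      linear_combination hr + (z ^ 3 + z ^ 2 * (z ^ 5 + 1) + z * (z ^ 10 + z ^ 5 + 1)) * h5
    have r5 : 1 + z ^ 5 + z ^ 10 + z ^ 15 + z ^ 20 = 5 := by
      linear_combination (4 + 3 * z ^ 5 + 2 * z ^ 10 + z ^ 15) * h5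
    linear_combination k0 + z * k1 + z ^ 2 * k2 + z ^ 3 * k3 + z ^ 4 * k4 - d 0 * hr -
      s * d 1 * r2 - s ^ 2 * d 2 * r3 - s ^ 3 * d 3 * r4 - s ^ 4 * d 4 * r5
  rw [← sub_eq_zero, hd' 4]
  simpa [hs0] using d4

/-! ### The product and its residue class 4 modulo 5 -/

lemma summable_of_smaller {a : ℕ → ℂ} {w z : ℂ} (h : Summable fun n => a n * w ^ n)
    (hz : ‖z‖ < ‖w‖) : Summable fun n => a n * z ^ n :=
  summable_powerSeries_of_norm_lt h.hasSum.tendsto_sum_nat.cauchySeq hz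

/-- For `|z| = 1`, the function `R(z;·)` does not vanish identically on an annulus, since it is
analytic in the unit disc with `R(z;0) = 1`. -/
lemma rankGF_not_zero {z : ℂ} (hz : ‖z‖ = 1) {ρ : ℝ} (h0 : 0 ≤ ρ) (h1 : ρ < 1) :
    ∃ w : ℂ, ρ < ‖w‖ ∧ ‖w‖ < 1 ∧ rankGF z w ≠ 0 := by
  by_contra! hc
  obtain ⟨r, hr, hr1⟩ := exists_between h1
  obtain ⟨t, ht, htr⟩ := exists_between hr
  have hr0 : 0 < r := h0.trans_lt hr
  have hsum : Summable fun n => ‖rankPoly z n * (r : ℂ) ^ n‖ :=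
    summable_rankPoly hz (by simpa [abs_of_pos hr0] using hr1)
  have hd : DifferentiableOn ℂ (rankGF z) (Metric.ball 0 r) := by
    refine Complex.differentiableOn_tsum_of_summable_norm (F := fun n w => rankPoly z n * w ^ n) hsum
      (fun n => by fun_prop) Metric.isOpen_ball fun n w hw => ?_
    have hw' : ‖w‖ < r := by simpa using hw
    rw [norm_mul, norm_mul, norm_pow, norm_pow, Complex.norm_real, Real.norm_of_nonneg hr0.le]
    gcongr
  have han := hd.analyticOnNhd Metric.isOpen_ball
  have ht0 : 0 ≤ t := h0.trans ht.le
  have hnt : ‖(t : ℂ)‖ = t := by rw [Complex.norm_real, Real.norm_of_nonneg ht0]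
  have hev : rankGF z =ᶠ[𝓝 (t : ℂ)] 0 := by
    have ho : {w : ℂ | ρ < ‖w‖ ∧ ‖w‖ < 1} ∈ 𝓝 (t : ℂ) :=
      ((isOpen_lt continuous_const continuous_norm).inter
        (isOpen_lt continuous_norm continuous_const)).mem_nhds
        ⟨ht.trans_eq hnt.symm, hnt.trans_lt (htr.trans hr1)⟩
    filter_upwards [ho] with w hw using hc w hw.1 hw.2
  have hz0 := han.eqOn_zero_of_preconnected_of_eventuallyEq_zero
    (convex_ball (0 : ℂ) r).isPreconnected (mem_ball_zero_iff.2 (hnt.trans_lt htr)) hev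
    (Metric.mem_ball_self hr0)
  have : rankGF z 0 = 1 := by
    change ∑' n, rankPoly z n * 0 ^ n = 1
    rw [tsum_eq_single 0 fun n hn => by simp [hn], rankPoly_zero]
    simp
  rw [this] at hz0
  exact one_ne_zero hz0

/-- A power series representing the product converges in the whole disc: otherwise its `tsum`
would be the junk value `0` on an annulus, where the product is not identically zero. -/
lemma summable_coeff {z : ℂ} (hz : ‖z‖ = 1) {a : ℕ → ℂ}
    (ha : ∀ q : ℂ, ‖q‖ < 1 → qPochInf (z * q) q * qPochInf (z⁻¹ * q) q * qPochInf q q *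
      rankGF z (q ^ 2) = ∑' n : ℕ, a n * q ^ n) {s : ℂ} (hs : ‖s‖ < 1) :
    Summable fun n => a n * s ^ n := by
  by_contra hc
  obtain ⟨w, hw, hw1, hne⟩ := rankGF_not_zero hz (ρ := ‖s‖ ^ 2) (by positivity)
    (pow_lt_one₀ (norm_nonneg _) hs (by norm_num))
  obtain ⟨v, hv⟩ := IsAlgClosed.exists_pow_nat_eq w (n := 2) (by norm_num)
  rw [← hv, norm_pow] at hw hw1
  have hv1 : ‖v‖ < 1 := (pow_lt_one_iff_of_nonneg (norm_nonneg _) two_ne_zero).1 hw1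
  have hsv : ‖s‖ < ‖v‖ := lt_of_pow_lt_pow_left₀ 2 (norm_nonneg _) hw
  have h := ha v hv1
  rw [tsum_eq_zero_of_not_summable fun h' => hc (summable_of_smaller h' hsv), hv] at h
  have n1 : ∀ u : ℂ, ‖u‖ = 1 → qPochInf (u * v) v ≠ 0 := fun u hu =>
    qPochInf_ne_zero hv1 (one_sub_mul_pow_ne_zero hv1 (by rw [norm_mul, hu, one_mul]; exact hv1))
  have n2 := n1 1 norm_one
  rw [one_mul] at n2
  exact mul_ne_zero (mul_ne_zero (mul_ne_zero (n1 z hz) (n1 z⁻¹ (by rw [norm_inv, hz, inv_one]))) n2)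
    hne h

/-- The part of `(ξq;q)_∞ (ξ⁻¹q;q)_∞ (q;q)_∞ R(ξ;q²)` with exponents `k` modulo `5`, divided by
`q^k`, as a function of `Q = q^5`. The last branch is meant for `k = 4`. -/
noncomputable def prodPart (ξ : ℂ) (k : ℕ) (Q : ℂ) : ℂ :=
  match k with
  | 0 => jj (Q ^ 2) (Q ^ 5) * rd0 (ξ + ξ ^ 4) (Q ^ 2) +
      (ξ ^ 2 + ξ ^ 3) * Q * jj Q (Q ^ 5) * rd2 (ξ + ξ ^ 4) (Q ^ 2)
  | 1 => Q * jj (Q ^ 2) (Q ^ 5) * rd3 (ξ + ξ ^ 4) (Q ^ 2) +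
      (ξ ^ 2 + ξ ^ 3) * jj Q (Q ^ 5) * rd0 (ξ + ξ ^ 4) (Q ^ 2)
  | 2 => jj (Q ^ 2) (Q ^ 5) * rd1 (Q ^ 2) +
      (ξ ^ 2 + ξ ^ 3) * Q * jj Q (Q ^ 5) * rd3 (ξ + ξ ^ 4) (Q ^ 2)
  | 3 => (ξ ^ 2 + ξ ^ 3) * jj Q (Q ^ 5) * rd1 (Q ^ 2)
  | _ => jj (Q ^ 2) (Q ^ 5) * rd2 (ξ + ξ ^ 4) (Q ^ 2)

/-- The theta product has exponents `0, 1` and `R(ξ;q²)` has exponents `0, 2, 4, 6` modulo `5`,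
so the residue `4` arises in one way only. -/
lemma prod_dissection {q ξ : ℂ} (hq0 : q ≠ 0) (hq : ‖q‖ < 1) (h5 : ξ ^ 5 = 1) (h1 : ξ ≠ 1) :
    qPochInf (ξ * q) q * qPochInf (ξ⁻¹ * q) q * qPochInf q q * rankGF ξ (q ^ 2) =
      ∑ k ∈ range 5, q ^ k * prodPart ξ k (q ^ 5) := by
  have e1 : qPochInf (ξ * q) q * qPochInf (ξ⁻¹ * q) q * qPochInf q q = qPochInf q q * thr ξ q := by
    rw [thr, mul_comm ξ, mul_comm ξ⁻¹, ← div_eq_mul_inv]; ring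
  rw [e1, theta_dissection hq0 hq h5 h1,
    rank_dissection (pow_ne_zero 2 hq0) (norm_pow_lt hq (by norm_num)) h5 h1,
    show (q ^ 2) ^ 5 = (q ^ 5) ^ 2 by ring]
  simp only [sum_range_succ, range_zero, sum_empty, prodPart]
  ring

/-- The product identity `J_{10}^2 / J_{10,4} = J_5 J_{10,1} / J_{5,1}` turns the fourth part
into the theta quotient. -/
lemma prodPart_four {ξ x : ℂ} (hx0 : x ≠ 0) (hx : ‖x‖ < 1) :
    prodPart ξ 4 x = (ξ + ξ ^ 4) * Jb 5 x * Jba 5 2 x * Jba 10 1 x / Jba 5 1 x := by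
  have hx5 := norm_pow_lt hx (m := 5) (by norm_num)
  have s := fun a : ℂ => qPochInf_split hx5 a (m := 2) (by norm_num)
  simp only [prod_range_succ, prod_range_zero, one_mul, pow_zero, mul_one, ← pow_mul,
    Nat.reduceMul] at s
  have n : ∀ k : ℕ, k ≠ 0 → qPochInf (x ^ k) (x ^ 10) ≠ 0 := fun k hk =>
    qPochInf_ne_zero (norm_pow_lt hx (by norm_num))
      (one_sub_mul_pow_ne_zero (norm_pow_lt hx (by norm_num)) (norm_pow_lt hx hk))
  have n1 := n 1 (by norm_num)
  rw [pow_one] at n1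
  have n4 := n 4 (by norm_num)
  have n5 := n 5 (by norm_num)
  have n6 := n 6 (by norm_num)
  have n9 := n 9 (by norm_num)
  have n10 := n 10 (by norm_num)
  have n5' : qPochInf (x ^ 5) (x ^ 5) ≠ 0 := qPochInf_self_ne_zero hx5
  simp only [prodPart, rd2, jj, th, Jb, Jba, ← pow_mul, Nat.reduceMul, Nat.reduceSub]
  rw [show x ^ 5 / x ^ 2 = x ^ 3 by field_simp, show x ^ 10 / x ^ 4 = x ^ 6 by field_simp]
  rw [s (x ^ 1), s (x ^ 4), pow_one]
  simp only [← pow_succ', ← pow_add, Nat.reduceAdd]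
  have s5 := s (x ^ 5)
  simp only [← pow_add, Nat.reduceAdd] at s5
  rw [s5]
  field_simp

lemma main_ne_zero {a : ℕ → ℂ}
    (ha : ∀ q : ℂ, ‖q‖ < 1 → qPochInf (zeta5 * q) q * qPochInf (zeta5⁻¹ * q) q *
      qPochInf q q * rankGF zeta5 (q ^ 2) = ∑' n : ℕ, a n * q ^ n)
    {x : ℂ} (hx0 : x ≠ 0) (hx : ‖x‖ < 1) :
    ∑' n : ℕ, a (5 * n + 4) * x ^ n =
      (zeta5 + zeta5 ^ 4) * Jb 5 x * Jba 5 2 x * Jba 10 1 x / Jba 5 1 x := by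
  have hz := norm_root zeta5_pow
  rw [← prodPart_four hx0 hx]
  refine class_four (g := prodPart zeta5) (fun s hs => summable_coeff hz ha hs)
    (fun s hs0 hs => ?_) hx0 hx
  rw [← ha s hs, prod_dissection hs0 hs zeta5_pow zeta5_ne_one]

lemma summable_class_four {a : ℕ → ℂ}
    (hs : ∀ s : ℂ, ‖s‖ < 1 → Summable fun n => a n * s ^ n) {x : ℂ} (hx : ‖x‖ < 1) (hx0 : x ≠ 0) :
    Summable fun n => a (5 * n + 4) * x ^ n := by
  obtain ⟨s, hsx⟩ := IsAlgClosed.exists_pow_nat_eq x (n := 5) (by norm_num)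
  have hs0 : s ≠ 0 := by rintro rfl; apply hx0; rw [← hsx]; norm_num
  have hs1 : ‖s‖ < 1 := by
    rwa [← hsx, norm_pow, pow_lt_one_iff_of_nonneg (norm_nonneg _) (by norm_num)] at hx
  have h := ((hs s hs1).comp_injective (i := fun n => 5 * n + 4) fun m n h => by
    simp only at h; omega).mul_right (s ^ 4)⁻¹
  refine h.congr fun n => ?_
  simp only [Function.comp_apply]
  rw [pow_add, pow_mul, hsx]
  field_simp

lemma continuousAt_tsum_zero {b : ℕ → ℂ} {r : ℝ} (hr : 0 < r)
    (h : Summable fun n => b n * (r : ℂ) ^ n) :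
    ContinuousAt (fun x : ℂ => ∑' n, b n * x ^ n) 0 := by
  have hd : DifferentiableOn ℂ (fun x : ℂ => ∑' n, b n * x ^ n) (Metric.ball 0 r) := by
    refine Complex.differentiableOn_tsum_of_summable_norm (F := fun n w => b n * w ^ n) h.norm
      (fun n => by fun_prop) Metric.isOpen_ball fun n w hw => ?_
    have hw' : ‖w‖ < r := by simpa using hw
    rw [norm_mul, norm_mul, norm_pow, norm_pow, Complex.norm_real, Real.norm_of_nonneg hr.le]
    gcongr
  exact (hd.differentiableAt (Metric.ball_mem_nhds 0 hr)).continuousAt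

lemma tendsto_Jba {b a : ℕ} (ha : a ≠ 0) (hb : b ≠ 0) (hab : b - a ≠ 0) :
    Tendsto (Jba b a) (𝓝 0) (𝓝 1) := by
  have := ((tendsto_qPochInf_pow ha hb).mul (tendsto_qPochInf_pow hab hb)).mul
    (tendsto_qPochInf_pow hb hb)
  simp only [mul_one] at this
  exact this

lemma Jba_zero {b a : ℕ} (ha : a ≠ 0) (hb : b ≠ 0) (hab : b - a ≠ 0) : Jba b a 0 = 1 := by
  rw [Jba, qPochInf_pow_zero ha, qPochInf_pow_zero hab, qPochInf_pow_zero hb, one_mul, one_mul]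

/-- At `q = 0` both sides are continuous, so the identity follows from the punctured disc. -/
lemma main_zero {a : ℕ → ℂ}
    (ha : ∀ q : ℂ, ‖q‖ < 1 → qPochInf (zeta5 * q) q * qPochInf (zeta5⁻¹ * q) q *
      qPochInf q q * rankGF zeta5 (q ^ 2) = ∑' n : ℕ, a n * q ^ n) :
    ∑' n : ℕ, a (5 * n + 4) * 0 ^ n =
      (zeta5 + zeta5 ^ 4) * Jb 5 0 * Jba 5 2 0 * Jba 10 1 0 / Jba 5 1 0 := by
  have hr : ‖((1 / 2 : ℝ) : ℂ)‖ < 1 := by rw [Complex.norm_real]; norm_num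
  have hs := summable_class_four
    (fun s hs => summable_coeff (norm_root zeta5_pow) ha hs) hr (by simp)
  have hL := (continuousAt_tsum_zero (by norm_num) hs).tendsto.mono_left
    (nhdsWithin_le_nhds (s := {0}ᶜ))
  have hR : Tendsto (fun q : ℂ => (zeta5 + zeta5 ^ 4) * Jb 5 q * Jba 5 2 q * Jba 10 1 q / Jba 5 1 q)
      (𝓝 0) (𝓝 ((zeta5 + zeta5 ^ 4) * 1 * 1 * 1 / 1)) :=
    (((tendsto_const_nhds.mul (tendsto_qPochInf_pow (by norm_num) (by norm_num))).mul
      (tendsto_Jba (by norm_num) (by norm_num) (by norm_num))).mul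
      (tendsto_Jba (by norm_num) (by norm_num) (by norm_num))).div
      (tendsto_Jba (by norm_num) (by norm_num) (by norm_num)) one_ne_zero
  have hR' := hR.mono_left (nhdsWithin_le_nhds (s := {0}ᶜ))
  rw [Jb, qPochInf_pow_zero (by norm_num), Jba_zero (by norm_num) (by norm_num) (by norm_num),
    Jba_zero (by norm_num) (by norm_num) (by norm_num),
    Jba_zero (by norm_num) (by norm_num) (by norm_num)]
  refine tendsto_nhds_unique hL (hR'.congr' ?_)
  have hb : Metric.ball (0 : ℂ) 1 ∈ 𝓝[{0}ᶜ] (0 : ℂ) :=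
    mem_nhdsWithin_of_mem_nhds (Metric.ball_mem_nhds 0 one_pos)
  filter_upwards [hb, self_mem_nhdsWithin] with x hx hx0
  exact (main_ne_zero ha hx0 (by simpa using hx)).symm

end RankFive

theorem U54_rank_theta_product_qsq (a : ℕ → ℂ)
    (ha : ∀ q : ℂ, ‖q‖ < 1 →
      qPochInf (zeta5 * q) q * qPochInf (zeta5⁻¹ * q) q * qPochInf q q *
          rankGF zeta5 (q ^ 2) =
        ∑' n : ℕ, a n * q ^ n) :
    ∀ q : ℂ, ‖q‖ < 1 →
      ∑' n : ℕ, a (5 * n + 4) * q ^ n =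
        (zeta5 + zeta5 ^ 4) * Jb 5 q * Jba 5 2 q * Jba 10 1 q / Jba 5 1 q := by
  intro q hq
  rcases eq_or_ne q 0 with h0 | h0
  · subst h0
    exact RankFive.main_zero ha
  · exact RankFive.main_ne_zero ha h0 hq
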